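/- arXiv:1705.01916 — 2 statements merged into one kernel-verified Lean document; each statement's English description precedes it below -/
import Mathlib

section
/- For every dimension d ≥ 1 there exists p₀ such that for every p ≥ p₀ there exists N₀ (depending on p) such that for every integer N ≥ N₀ there exists γ₀ ∈ (0,1) (depending on N) such that for every γ ∈ (0, γ₀], every finite rectangle Λ ⊂ ℤ^d, every x ∈ Λ, and every real R ≥ 4, the probability that there exist an orthonormal basis (φ_β) of ℝ^Λ consisting of eigenvectors of H and a site y ∈ Λ with |y−x| ≥ R such that Σ_β |φ_β(x) φ_β(y)| · γ^{−|x−y|/5} > 1 is at most R^{−(p/2 − 4d − 1)}. -/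
noncomputable section

open scoped BigOperators

/-- ℓ¹ distance on `ℤ^d` (natural-number valued). -/
def dist1 {d : ℕ} (x y : Fin d → ℤ) : ℕ := ∑ i, (x i - y i).natAbs

lemma dist1_comm {d : ℕ} (x y : Fin d → ℤ) : dist1 x y = dist1 y x :=
  Finset.sum_congr rfl fun i _ => by rw [← Int.natAbs_neg, neg_sub]

/-- ℓ¹ diameter of a finite subset of `ℤ^d`. -/
def diam1 {d : ℕ} (Λ : Finset (Fin d → ℤ)) : ℕ := (Λ ×ˢ Λ).sup fun p => dist1 p.1 p.2

/-- `Λ` is a (possibly empty) rectangle: a product of integer intervals. -/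
def IsRect {d : ℕ} (Λ : Finset (Fin d → ℤ)) : Prop := ∃ a b : Fin d → ℤ, Λ = Finset.Icc a b

/-- Entry of the Anderson Hamiltonian `H = H₀ - γ J` with potential `v`. -/
def hamEntry (d : ℕ) (γ : ℝ) (v : (Fin d → ℤ) → ℝ) (x y : Fin d → ℤ) : ℝ :=
  (if x = y then 2*d*γ + v x else 0) - γ * (if dist1 x y = 1 then 1 else 0)

/-- The Anderson Hamiltonian restricted to a finite set `X ⊂ ℤ^d`. -/
def hamOn (d : ℕ) (γ : ℝ) (v : (Fin d → ℤ) → ℝ) (X : Finset (Fin d → ℤ)) :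
    Matrix X X ℝ := Matrix.of fun x y => hamEntry d γ v x y

lemma hamOn_isHermitian (d : ℕ) (γ : ℝ) (v : (Fin d → ℤ) → ℝ) (X : Finset (Fin d → ℤ)) :
    (hamOn d γ v X).IsHermitian := by
  ext x y
  simp only [Matrix.conjTranspose_apply, hamOn, Matrix.of_apply, hamEntry, star_trivial]
  rw [dist1_comm]
  by_cases h : (y : Fin d → ℤ) = (x : Fin d → ℤ)
  · rw [if_pos h, if_pos h.symm, h]
  · rw [if_neg h, if_neg (show ¬((x : Fin d → ℤ) = (y : Fin d → ℤ)) from fun hh => h hh.symm)]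

open scoped Classical in
/-- Number of eigenvalues (with multiplicity) of a Hermitian matrix in `[a,b]`. -/
def countEigIn {n : Type*} [Fintype n] [DecidableEq n] {M : Matrix n n ℝ}
    (hM : M.IsHermitian) (a b : ℝ) : ℕ :=
  (Finset.univ.filter fun i => hM.eigenvalues i ∈ Set.Icc a b).card

/-- Expectation with respect to the uniform measure on a finite configuration space. -/
def expect {Ω : Type*} [Fintype Ω] (f : Ω → ℝ) : ℝ := (∑ ω, f ω) / Fintype.card Ω

open scoped Classical in
/-- Probability of an event with respect to the uniform measure on a finite space. -/
def prob {Ω : Type*} [Fintype Ω] (A : Ω → Prop) : ℝ :=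
  ((Finset.univ.filter A).card : ℝ) / Fintype.card Ω

/-- The random potential determined by a configuration `ω : Λ → Fin N`:
the value at `x ∈ Λ` is `ω x / (N-1) ∈ {0, 1/(N-1), …, 1}`. -/
def potential {d : ℕ} (N : ℕ) (Λ : Finset (Fin d → ℤ)) (ω : Λ → Fin N) :
    (Fin d → ℤ) → ℝ := fun x => if h : x ∈ Λ then (ω ⟨x, h⟩ : ℕ) / ((N : ℝ) - 1) else 0

/-!
The proof is a multiscale analysis. Call the `ℓ¹` ball of radius `L` around `x` good at energy `E`
if every solution of `H φ = E φ` decays by `γ^(m (L + 1))` from the boundary of the ball to its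
centre. By induction on scales, two distant balls of radius `L` are bad at a common energy with
probability at most `(L + 1)^(-Q)`, for a rate `m` which stays above `1/2`.

At the first scale a bad ball contains a site whose potential is within `1 / (4 N)` of the energy.
Two such sites have equal potential, since distinct values differ by at least `1 / (N - 1)`, and
this has probability `1 / N`.

In the step from `ℓ` to about `ℓ²`, with high probability each energy has only boundedly many
separated bad balls of radius `ℓ`. Chaining through the good balls gives decay at scale `L`, unless
the large ball contains a cube around a cluster of bad balls with an eigenvalue very close to the
energy. If both large balls fail, two distant cubes have almost equal eigenvalues. This is unlikely:
follow an eigenfunction of one cube along sites where it is not too small. By Green's identity the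
potential at these sites is determined by its values elsewhere, because a change of the potential
would move the eigenvalue away. This replaces the Wegner estimate, which is not available for
discrete distributions.

If the balls of radius `L` around `x` and `y` are not bad at a common energy, each eigenfunction is
small at `x` or at `y` compared to its values nearby, which bounds the correlator by orthonormality;
a union bound over `y` concludes.
-/

namespace Anderson

section Lattice

variable {d : ℕ}

/-- The signed coordinate vector `ε eᵢ` of `ℤ^d`, for `τ = (i, ε)`. -/
def unitVec (τ : Fin d × ℤˣ) : Fin d → ℤ := Pi.single τ.1 (τ.2 : ℤ)

/-- The `ℓ^∞` distance on `ℤ^d`, natural-number valued like `dist1`. -/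
def distInf (x y : Fin d → ℤ) : ℕ := Finset.univ.sup fun i => (x i - y i).natAbs

/-- The `ℓ^∞` ball of radius `ρ` around `c`. -/
def cube (c : Fin d → ℤ) (ρ : ℕ) : Finset (Fin d → ℤ) := Finset.Icc (c - ↑ρ) (c + ↑ρ)

/-- The `ℓ¹` ball of radius `L` around `x`. -/
def l1Ball (x : Fin d → ℤ) (L : ℕ) : Finset (Fin d → ℤ) := {z ∈ cube x L | dist1 z x ≤ L}

lemma dist1_self (x : Fin d → ℤ) : dist1 x x = 0 := by simp [dist1]

lemma dist1_triangle (x y z : Fin d → ℤ) : dist1 x z ≤ dist1 x y + dist1 y z := by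
  unfold dist1
  rw [← Finset.sum_add_distrib]
  exact Finset.sum_le_sum fun i _ => by omega

lemma dist1_add_unitVec (z : Fin d → ℤ) (τ : Fin d × ℤˣ) : dist1 z (z + unitVec τ) = 1 := by
  rw [dist1, Finset.sum_eq_single τ.1]
  · simp [unitVec]
  · intro j _ hj
    simp [unitVec, Pi.single_eq_of_ne hj]
  · simp

lemma exists_eq_add_unitVec_of_dist1_eq_one {z w : Fin d → ℤ} (h : dist1 z w = 1) :
    ∃ τ : Fin d × ℤˣ, w = z + unitVec τ := by
  obtain ⟨i, -, hi⟩ : ∃ i ∈ Finset.univ, (z i - w i).natAbs ≠ 0 :=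
    Finset.exists_ne_zero_of_sum_ne_zero (show dist1 z w ≠ 0 by omega)
  rw [dist1, ← Finset.add_sum_erase _ _ (Finset.mem_univ i)] at h
  have hrest : ∑ j ∈ Finset.univ.erase i, (z j - w j).natAbs = 0 := by omega
  have hunit : (w i - z i).natAbs = 1 := by omega
  obtain ⟨ε, hε⟩ := Int.isUnit_iff_natAbs_eq.2 hunit
  refine ⟨(i, ε), funext fun j => ?_⟩
  by_cases hj : j = i
  · subst hj
    simp [unitVec, hε]
  · have := Finset.sum_eq_zero_iff.1 hrest j (by simp [hj])
    simp only [unitVec, Pi.add_apply, Pi.single_eq_of_ne hj]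
    omega

lemma unitVec_injective : Function.Injective (unitVec : Fin d × ℤˣ → (Fin d → ℤ)) := by
  rintro ⟨i, ε⟩ ⟨j, ε'⟩ h
  have hi := congrFun h i
  by_cases hij : i = j
  · subst hij
    simpa [unitVec, Units.val_inj] using hi
  · simp [unitVec, hij] at hi

lemma natAbs_sub_le_dist1 (x y : Fin d → ℤ) (i : Fin d) : (x i - y i).natAbs ≤ dist1 x y :=
  Finset.single_le_sum (f := fun i => (x i - y i).natAbs) (fun _ _ => Nat.zero_le _)
    (Finset.mem_univ i)

lemma distInf_le_iff {x y : Fin d → ℤ} {n : ℕ} :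
    distInf x y ≤ n ↔ ∀ i, (x i - y i).natAbs ≤ n := by
  simp [distInf, Finset.sup_le_iff]

lemma natAbs_sub_le_distInf (x y : Fin d → ℤ) (i : Fin d) : (x i - y i).natAbs ≤ distInf x y :=
  distInf_le_iff.1 le_rfl i

lemma distInf_triangle (x y z : Fin d → ℤ) : distInf x z ≤ distInf x y + distInf y z := by
  refine distInf_le_iff.2 fun i => ?_
  have hxy := natAbs_sub_le_distInf x y i
  have hyz := natAbs_sub_le_distInf y z i
  omega

lemma distInf_comm (x y : Fin d → ℤ) : distInf x y = distInf y x :=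
  congrArg Finset.univ.sup <| funext fun i => by omega

lemma distInf_le_dist1 (x y : Fin d → ℤ) : distInf x y ≤ dist1 x y :=
  distInf_le_iff.2 (natAbs_sub_le_dist1 x y)

lemma dist1_le_mul_distInf (x y : Fin d → ℤ) : dist1 x y ≤ d * distInf x y :=
  calc dist1 x y ≤ ∑ _i : Fin d, distInf x y :=
        Finset.sum_le_sum fun i _ => natAbs_sub_le_distInf x y i
    _ = d * distInf x y := by simp

lemma mem_cube {c z : Fin d → ℤ} {ρ : ℕ} : z ∈ cube c ρ ↔ distInf z c ≤ ρ := by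
  simp only [cube, Finset.mem_Icc, Pi.le_def, distInf_le_iff, ← forall_and]
  refine forall_congr' fun i => ?_
  simp only [Pi.sub_apply, Pi.add_apply, Pi.natCast_apply]
  omega

lemma card_cube (c : Fin d → ℤ) (ρ : ℕ) : (cube c ρ).card = (2 * ρ + 1) ^ d := by
  have side : ∀ i, (Finset.Icc (c i - ρ) (c i + ρ)).card = 2 * ρ + 1 := fun i => by
    rw [Int.card_Icc]
    omega
  simp [cube, Pi.card_Icc, side]

lemma mem_l1Ball {x z : Fin d → ℤ} {L : ℕ} : z ∈ l1Ball x L ↔ dist1 z x ≤ L := by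
  rw [l1Ball, Finset.mem_filter, mem_cube, and_iff_right_iff_imp]
  exact (distInf_le_dist1 z x).trans

lemma card_l1Ball_le (x : Fin d → ℤ) (L : ℕ) : (l1Ball x L).card ≤ (2 * L + 1) ^ d :=
  (Finset.card_filter_le _ _).trans (card_cube x L).le

lemma Icc_inter_cube (a b c : Fin d → ℤ) (ρ : ℕ) :
    Finset.Icc a b ∩ cube c ρ = Finset.Icc (a ⊔ (c - ↑ρ)) (b ⊓ (c + ↑ρ)) := by
  rw [← Finset.coe_inj, cube, Finset.coe_inter, Finset.coe_Icc, Finset.coe_Icc, Finset.coe_Icc,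
    Set.Icc_inter_Icc]

lemma isRect_inter_cube {X : Finset (Fin d → ℤ)} (hX : IsRect X) (c : Fin d → ℤ) (ρ : ℕ) :
    IsRect (X ∩ cube c ρ) := by
  obtain ⟨a, b, rfl⟩ := hX
  exact ⟨_, _, Icc_inter_cube a b c ρ⟩

lemma exists_add_le_of_mul_lt_dist1 {a b x y : Fin d → ℤ} {k : ℕ} (hx : x ∈ Finset.Icc a b)
    (hy : y ∈ Finset.Icc a b) (hxy : d * k < dist1 x y) : ∃ i, a i + k ≤ b i := by
  obtain ⟨i, hi⟩ : ∃ i, k < (x i - y i).natAbs := by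
    by_contra! h
    exact hxy.not_ge ((dist1_le_mul_distInf x y).trans
      (Nat.mul_le_mul_left d (distInf_le_iff.2 h)))
  rw [Finset.mem_Icc, Pi.le_def, Pi.le_def] at hx hy
  have hxa := hx.1 i
  have hxb := hx.2 i
  have hya := hy.1 i
  have hyb := hy.2 i
  exact ⟨i, by omega⟩

lemma disjoint_cube {c c' : Fin d → ℤ} {ρ ρ' : ℕ} (h : d * ρ + d * ρ' < dist1 c c') :
    Disjoint (cube c ρ) (cube c' ρ') := by
  refine Finset.disjoint_left.2 fun z hz hz' => h.not_ge ?_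
  calc dist1 c c' ≤ dist1 z c + dist1 z c' := dist1_comm z c ▸ dist1_triangle c z c'
    _ ≤ d * distInf z c + d * distInf z c' :=
        add_le_add (dist1_le_mul_distInf z c) (dist1_le_mul_distInf z c')
    _ ≤ d * ρ + d * ρ' := by
        gcongr
        exacts [mem_cube.1 hz, mem_cube.1 hz']

lemma card_inter_cube_le (X : Finset (Fin d → ℤ)) (c : Fin d → ℤ) {ρ ℓ : ℕ} (hℓ : 1 ≤ ℓ)
    (hρ : ρ ≤ 80 * ℓ) : (X ∩ cube c ρ).card ≤ (161 * ℓ) ^ d :=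
  calc (X ∩ cube c ρ).card ≤ (2 * ρ + 1) ^ d :=
        (Finset.card_le_card Finset.inter_subset_right).trans (card_cube c ρ).le
    _ ≤ (161 * ℓ) ^ d := Nat.pow_le_pow_left (by omega) d

end Lattice

section Equation

variable {d : ℕ} {γ E B : ℝ} {v φ ψ : (Fin d → ℤ) → ℝ} {z : Fin d → ℤ}

/-- `(Jφ)(z)`: the sum of `φ` over the `2d` neighbours of `z`. -/
def neighborSum (φ : (Fin d → ℤ) → ℝ) (z : Fin d → ℤ) : ℝ := ∑ τ, φ (z + unitVec τ)

/-- The equation `Hφ = Eφ` at the site `z`, for a function on the whole lattice. -/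
def SolvesAt (γ E : ℝ) (v φ : (Fin d → ℤ) → ℝ) (z : Fin d → ℤ) : Prop :=
  (2 * d * γ + v z - E) * φ z = γ * neighborSum φ z

lemma neighborSum_add (φ ψ : (Fin d → ℤ) → ℝ) (z : Fin d → ℤ) :
    neighborSum (φ + ψ) z = neighborSum φ z + neighborSum ψ z :=
  Finset.sum_add_distrib

lemma abs_neighborSum_le (h : ∀ τ, |φ (z + unitVec τ)| ≤ B) : |neighborSum φ z| ≤ 2 * d * B :=
  calc |neighborSum φ z| ≤ ∑ τ, |φ (z + unitVec τ)| := Finset.abs_sum_le_sum_abs _ _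
    _ ≤ ∑ _τ : Fin d × ℤˣ, B := Finset.sum_le_sum fun τ _ => h τ
    _ = 2 * d * B := by
        rw [Finset.sum_const, Finset.card_univ, Fintype.card_prod, Fintype.card_fin,
          Fintype.card_units_int, nsmul_eq_mul]
        push_cast
        ring

lemma SolvesAt.const_mul (h : SolvesAt γ E v φ z) (c : ℝ) :
    SolvesAt γ E v (fun w => c * φ w) z := by
  unfold SolvesAt neighborSum at h ⊢
  rw [← Finset.mul_sum]
  linear_combination c * h

lemma SolvesAt.abs_mul_abs (hγ : 0 ≤ γ) (h : SolvesAt γ E v φ z) :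
    |2 * d * γ + v z - E| * |φ z| = γ * |neighborSum φ z| := by
  rw [← abs_mul, h, abs_mul, abs_of_nonneg hγ]

lemma SolvesAt.gap_mul_abs_le {η : ℝ} (hγ : 0 ≤ γ) (h : SolvesAt γ E v φ z)
    (hη : 4 * d * γ ≤ η) (hgap : η ≤ |v z - E|) (hB : ∀ τ, |φ (z + unitVec τ)| ≤ B) :
    η * |φ z| ≤ 4 * d * γ * B := by
  have hshift : |v z - E| ≤ |2 * d * γ + v z - E| + 2 * d * γ := by
    have hdγ : (0 : ℝ) ≤ 2 * d * γ := by positivity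
    calc |v z - E| = |(2 * d * γ + v z - E) - 2 * d * γ| := by ring_nf
      _ ≤ |2 * d * γ + v z - E| + |2 * d * γ| := abs_sub _ _
      _ = _ := by rw [abs_of_nonneg hdγ]
  have hhalf : η / 2 ≤ |2 * d * γ + v z - E| := by linarith
  calc η * |φ z| = 2 * (η / 2 * |φ z|) := by ring
    _ ≤ 2 * (|2 * d * γ + v z - E| * |φ z|) := by gcongr
    _ = 2 * (γ * |neighborSum φ z|) := by rw [h.abs_mul_abs hγ]
    _ ≤ 2 * (γ * (2 * d * B)) := by gcongr; exact abs_neighborSum_le hB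
    _ = 4 * d * γ * B := by ring

end Equation

section Good

variable {d L : ℕ} {γ E m m' : ℝ} {v v' : (Fin d → ℤ) → ℝ} {X : Finset (Fin d → ℤ)}
  {x : Fin d → ℤ}

/-- The `ℓ¹` ball of radius `L` around `x` is good at energy `E` with rate `m`: every solution in
`X` (extended by `0`) on the ball is, at the centre, smaller by `γ^(m(L+1))` than its supremum over
the ball and its outer boundary. -/
def IsGood (γ : ℝ) (v : (Fin d → ℤ) → ℝ) (m : ℝ) (X : Finset (Fin d → ℤ)) (L : ℕ)
    (x : Fin d → ℤ) (E : ℝ) : Prop :=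
  ∀ φ : (Fin d → ℤ) → ℝ, φ.support ⊆ X → (∀ z ∈ X, dist1 z x ≤ L → SolvesAt γ E v φ z) →
    ∀ M : ℝ, (∀ w, dist1 w x ≤ L + 1 → |φ w| ≤ M) → |φ x| ≤ γ ^ (m * ((L : ℝ) + 1)) * M

lemma IsGood.mono (hγ : 0 < γ) (hγ1 : γ ≤ 1) (hm : m' ≤ m) (h : IsGood γ v m X L x E) :
    IsGood γ v m' X L x E := by
  intro φ hsupp hsol M hM
  have hM0 : 0 ≤ M := (abs_nonneg _).trans (hM x (by simp [dist1_self]))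
  refine (h φ hsupp hsol M hM).trans (mul_le_mul_of_nonneg_right ?_ hM0)
  exact Real.rpow_le_rpow_of_exponent_ge hγ hγ1 (by gcongr)

lemma IsGood.congr (hv : ∀ z ∈ X, dist1 z x ≤ L → v z = v' z) (h : IsGood γ v m X L x E) :
    IsGood γ v' m X L x E := by
  refine fun φ hsupp hsol => h φ hsupp fun z hz hzx => ?_
  unfold SolvesAt
  rw [hv z hz hzx]
  exact hsol z hz hzx

lemma isGood_of_potential_gap {η : ℝ} (hγ : 0 < γ) (hγ1 : γ ≤ 1) (hm : 0 ≤ m) (hη : 0 < η)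
    (hγη : 4 * d * γ ≤ η * γ ^ m) (hgap : ∀ z ∈ X, dist1 z x ≤ L → η ≤ |v z - E|) :
    IsGood γ v m X L x E := by
  intro φ hsupp hsol M hM
  have hM0 : 0 ≤ M := (abs_nonneg _).trans (hM x (by simp [dist1_self]))
  set κ := γ ^ m with hκ
  have : 0 < κ := Real.rpow_pos_of_pos hγ _
  have hκ1 : κ ≤ 1 := Real.rpow_le_one hγ.le hγ1 hm
  have hdecay : ∀ j : ℕ, ∀ w, dist1 w x + j ≤ L + 1 → |φ w| ≤ κ ^ j * M := by
    intro j
    induction j with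
    | zero => exact fun w hw => by simpa using hM w hw
    | succ j ih =>
      intro w hw
      by_cases hwX : w ∈ X
      · have hnbr : ∀ τ, |φ (w + unitVec τ)| ≤ κ ^ j * M := fun τ => ih _ <| by
          have := dist1_triangle (w + unitVec τ) w x
          rw [dist1_comm _ w, dist1_add_unitVec] at this
          omega
        have hstep := (hsol w hwX (by omega)).gap_mul_abs_le hγ.le
          (hγη.trans (mul_le_of_le_one_right hη.le hκ1)) (hgap w hwX (by omega)) hnbr
        refine le_of_mul_le_mul_left (hstep.trans ?_) hη
        calc 4 * d * γ * (κ ^ j * M) ≤ η * κ * (κ ^ j * M) := by gcongr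
          _ = η * (κ ^ (j + 1) * M) := by ring
      · rw [Function.support_subset_iff'.1 hsupp w hwX, abs_zero]
        positivity
  have hpow : κ ^ (L + 1) = γ ^ (m * ((L : ℝ) + 1)) := by
    rw [hκ, ← Real.rpow_mul_natCast hγ.le]
    push_cast
    rfl
  exact hpow ▸ hdecay (L + 1) x (by simp [dist1_self])

end Good

section Spectral

variable {d : ℕ} {γ E : ℝ} {v v' φ : (Fin d → ℤ) → ℝ} {Q : Finset (Fin d → ℤ)}

open scoped InnerProductSpace in
lemma mul_norm_le_norm_mulVec_sub {n : Type*} [Fintype n] [DecidableEq n] {A : Matrix n n ℝ}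
    (hA : A.IsHermitian) {E η : ℝ} (hη : 0 ≤ η) (hgap : ∀ i, η ≤ |hA.eigenvalues i - E|)
    (g : EuclideanSpace ℝ n) : η * ‖g‖ ≤ ‖A.toEuclideanLin g - E • g‖ := by
  set b := hA.eigenvectorBasis
  have hAb : ∀ i, A.toEuclideanLin (b i) = hA.eigenvalues i • b i := fun i =>
    WithLp.ofLp_injective 2 (hA.mulVec_eigenvectorBasis i)
  have hcoeff : ∀ i, ⟪b i, A.toEuclideanLin g - E • g⟫_ℝ = (hA.eigenvalues i - E) * ⟪b i, g⟫_ℝ := by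
    intro i
    rw [inner_sub_right, ← Matrix.isSymmetric_toEuclideanLin_iff.2 hA, hAb, inner_smul_left,
      inner_smul_right, sub_mul]
    rfl
  refine le_of_sq_le_sq ?_ (norm_nonneg _)
  rw [mul_pow, ← b.sum_sq_norm_inner_right g, ← b.sum_sq_norm_inner_right, Finset.mul_sum]
  refine Finset.sum_le_sum fun i _ => ?_
  rw [hcoeff, norm_mul, mul_pow]
  gcongr
  exact hgap i

lemma sum_ite_dist1_eq_neighborSum (hφ : φ.support ⊆ Q) (z : Fin d → ℤ) :
    ∑ w : Q, (if dist1 z w = 1 then (1 : ℝ) else 0) * φ w = neighborSum φ z := by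
  have himage : neighborSum φ z = ∑ w ∈ Finset.univ.image (fun τ => z + unitVec τ), φ w := by
    rw [Finset.sum_image fun _ _ _ _ h => unitVec_injective (add_left_cancel h), neighborSum]
  simp only [ite_mul, one_mul, zero_mul]
  rw [Finset.sum_coe_sort Q fun w => if dist1 z w = 1 then φ w else 0, ← Finset.sum_filter, himage]
  refine Finset.sum_subset (fun w hw => ?_) fun w hw hwQ => ?_
  · obtain ⟨τ, rfl⟩ := exists_eq_add_unitVec_of_dist1_eq_one (Finset.mem_filter.1 hw).2
    exact Finset.mem_image_of_mem _ (Finset.mem_univ τ)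
  · obtain ⟨τ, -, rfl⟩ := Finset.mem_image.1 hw
    exact Function.support_subset_iff'.1 hφ _ fun h =>
      hwQ (Finset.mem_filter.2 ⟨h, dist1_add_unitVec z τ⟩)

lemma hamOn_mulVec (γ : ℝ) (v : (Fin d → ℤ) → ℝ) (hφ : φ.support ⊆ Q) (z : Q) :
    (hamOn d γ v Q).mulVec (fun w : Q => φ w) z
      = (2 * d * γ + v z) * φ z - γ * neighborSum φ z := by
  have hterm : ∀ w : Q, hamOn d γ v Q z w * φ w = (if z = w then (2 * d * γ + v z) * φ z else 0)
      - γ * ((if dist1 (z : Fin d → ℤ) w = 1 then 1 else 0) * φ w) := by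
    intro w
    simp only [hamOn, Matrix.of_apply, hamEntry, Subtype.coe_inj]
    split_ifs with hzw <;> simp_all [sub_mul]
  rw [Matrix.mulVec, dotProduct, Finset.sum_congr rfl fun w _ => hterm w, Finset.sum_sub_distrib,
    ← Finset.mul_sum, sum_ite_dist1_eq_neighborSum hφ]
  simp

lemma solvesAt_iff_hamOn_mulVec (hφ : φ.support ⊆ Q) (z : Q) :
    SolvesAt γ E v φ z ↔ (hamOn d γ v Q).mulVec (fun w : Q => φ w) z = E * φ z := by
  rw [hamOn_mulVec γ v hφ, SolvesAt]
  constructor <;> intro h <;> linear_combination h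

lemma support_extend_subset (φ : Q → ℝ) : (Function.extend Subtype.val φ 0).support ⊆ Q :=
  Function.support_subset_iff'.2 fun _ hz =>
    Function.extend_apply' _ _ _ fun ⟨w, hw⟩ => hz (hw ▸ w.2)

lemma solvesAt_extend {φ : Q → ℝ} (h : (hamOn d γ v Q).mulVec φ = E • φ) (z : Q) :
    SolvesAt γ E v (Function.extend Subtype.val φ 0) z := by
  rw [solvesAt_iff_hamOn_mulVec (support_extend_subset φ)]
  simp only [Subtype.val_injective.extend_apply]
  exact congrFun h z

/-- The eigenvalues of the Hamiltonian restricted to `Q`, repeated by multiplicity and indexed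
by `Q`. -/
def eigenvalue (γ : ℝ) (v : (Fin d → ℤ) → ℝ) (Q : Finset (Fin d → ℤ)) : Q → ℝ :=
  (hamOn_isHermitian d γ v Q).eigenvalues

lemma eigenvalue_congr (γ : ℝ) (h : ∀ z ∈ Q, v z = v' z) :
    eigenvalue γ v Q = eigenvalue γ v' Q := by
  unfold eigenvalue
  congr! 1
  ext x y
  simp only [hamOn, Matrix.of_apply, hamEntry, h x x.2]

lemma exists_eigenfunction_sup_eq_one (γ : ℝ) (v : (Fin d → ℤ) → ℝ) (e : Q) :
    ∃ φ : (Fin d → ℤ) → ℝ, φ.support ⊆ Q ∧ (∀ z ∈ Q, SolvesAt γ (eigenvalue γ v Q e) v φ z) ∧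
      (∃ z₀ ∈ Q, |φ z₀| = 1) ∧ ∀ z, |φ z| ≤ 1 := by
  set hH := hamOn_isHermitian d γ v Q
  set b : Q → ℝ := (hH.eigenvectorBasis e).ofLp with hb
  set ψ := Function.extend Subtype.val b 0
  have hψsupp : ψ.support ⊆ Q := support_extend_subset b
  have hb0 : b ≠ 0 := fun h => hH.eigenvectorBasis.orthonormal.ne_zero e (by ext w; simp [← hb, h])
  obtain ⟨w₁, hw₁⟩ := Function.ne_iff.1 hb0
  have hψb : ∀ w : Q, ψ w = b w := Subtype.val_injective.extend_apply b 0
  obtain ⟨z₀, hz₀, hmax⟩ := Finset.exists_max_image Q (fun z => |ψ z|) ⟨w₁, w₁.2⟩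
  have hpos : 0 < |ψ z₀| := (abs_pos.2 (by rwa [hψb])).trans_le (hmax w₁ w₁.2)
  have habs : ∀ z, |(|ψ z₀|⁻¹ * ψ z)| = |ψ z₀|⁻¹ * |ψ z| := fun z => by
    rw [abs_mul, abs_of_pos (inv_pos.2 hpos)]
  refine ⟨fun z => |ψ z₀|⁻¹ * ψ z, ?_, ?_, ⟨z₀, hz₀, ?_⟩, fun z => ?_⟩
  · exact (Function.support_mul_subset_right _ _).trans hψsupp
  · exact fun z hz => (solvesAt_extend (hH.mulVec_eigenvectorBasis e) ⟨z, hz⟩).const_mul _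
  · rw [habs, inv_mul_cancel₀ hpos.ne']
  · rw [habs, inv_mul_le_one₀ hpos]
    by_cases hz : z ∈ Q
    · exact hmax z hz
    · simp [Function.support_subset_iff'.1 hψsupp z hz]

/-- Splitting `φ` into its parts inside and outside `Q`, the outside part acts on `Q` as a source
term of size `γ · 2d · B`, to which the resolvent bound `η⁻¹` applies. -/
lemma abs_le_of_spectral_gap (hγ : 0 ≤ γ) {η B : ℝ} (hη : 0 < η) (hB : 0 ≤ B)
    (hgap : ∀ e, η ≤ |eigenvalue γ v Q e - E|) (hsol : ∀ z ∈ Q, SolvesAt γ E v φ z)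
    (hbdry : ∀ z ∈ Q, ∀ τ, z + unitVec τ ∉ Q → |φ (z + unitVec τ)| ≤ B)
    {z : Fin d → ℤ} (hz : z ∈ Q) : |φ z| ≤ η⁻¹ * (γ * (2 * d * B) * Q.card) := by
  set inner : (Fin d → ℤ) → ℝ := Set.indicator Q φ
  set outer : (Fin d → ℤ) → ℝ := Set.indicator (Q : Set (Fin d → ℤ))ᶜ φ
  have hsplit : inner + outer = φ := Set.indicator_self_add_compl _ _
  have hinner : ∀ w : Q, inner w = φ w := fun w => Set.indicator_of_mem w.2 φ
  set g : EuclideanSpace ℝ Q := WithLp.toLp 2 fun w : Q => inner w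
  set A : ℝ := γ * (2 * d * B)
  have : 0 ≤ A := by positivity
  set r := (hamOn d γ v Q).toEuclideanLin g - E • g
  have hsource : ∀ w : Q, r w = γ * neighborSum outer w := by
    intro w
    have hmul := hamOn_mulVec γ v (show inner.support ⊆ Q from Set.support_indicator_subset) w
    have hw : (2 * d * γ + v w - E) * φ w = γ * neighborSum φ w := hsol w w.2
    rw [← hsplit, neighborSum_add, hsplit] at hw
    change (hamOn d γ v Q).mulVec (fun w : Q => inner w) w - E * inner w = _
    rw [hmul, hinner]
    linear_combination hw
  have hr_apply : ∀ w, ‖r w‖ ≤ A := by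
    intro w
    rw [hsource, norm_mul, Real.norm_of_nonneg hγ]
    refine mul_le_mul_of_nonneg_left (abs_neighborSum_le fun τ => ?_) hγ
    by_cases hτ : ↑w + unitVec τ ∈ Q
    · simpa [outer, hτ] using hB
    · simpa [outer, hτ] using hbdry w w.2 τ hτ
  have hr_norm : ‖r‖ ≤ A * Q.card := by
    calc ‖r‖ ≤ ∑ w, ‖r w‖ := by
          rw [EuclideanSpace.norm_eq]
          exact Real.sqrt_le_iff.2 ⟨Finset.sum_nonneg fun _ _ => norm_nonneg _,
            Finset.sum_sq_le_sq_sum_of_nonneg fun _ _ => norm_nonneg _⟩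
      _ ≤ ∑ _w : Q, A := Finset.sum_le_sum fun w _ => hr_apply w
      _ = A * Q.card := by simp [mul_comm]
  calc |φ z| = ‖g ⟨z, hz⟩‖ := by rw [← hinner ⟨z, hz⟩]; rfl
    _ ≤ ‖g‖ := PiLp.norm_apply_le g _
    _ ≤ η⁻¹ * ‖r‖ := by
        rw [le_inv_mul_iff₀ hη]
        exact mul_norm_le_norm_mulVec_sub (hamOn_isHermitian d γ v Q) hη.le hgap g
    _ ≤ η⁻¹ * (A * Q.card) := by gcongr

end Spectral

section Probability

section Union

variable {Ω : Type*} [Fintype Ω]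

lemma prob_eq_card_div (A : Ω → Prop) [DecidablePred A] :
    prob A = ((Finset.univ.filter A).card : ℝ) / Fintype.card Ω := by
  unfold prob
  congr!

lemma prob_nonneg (A : Ω → Prop) : 0 ≤ prob A := by
  unfold prob
  positivity

lemma prob_mono {A B : Ω → Prop} (h : ∀ ω, A ω → B ω) : prob A ≤ prob B := by
  unfold prob
  gcongr with ω
  exact h ω

lemma prob_exists_le_sum {ι : Type*} (s : Finset ι) (A : ι → Ω → Prop) :
    prob (fun ω => ∃ i ∈ s, A i ω) ≤ ∑ i ∈ s, prob (A i) := by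
  classical
  simp only [prob_eq_card_div]
  rw [← Finset.sum_div]
  gcongr
  have hunion : Finset.univ.filter (fun ω => ∃ i ∈ s, A i ω)
      = s.biUnion fun i => Finset.univ.filter (A i) := by
    ext ω
    simp
  exact_mod_cast (congrArg Finset.card hunion).trans_le Finset.card_biUnion_le

lemma prob_exists_le_mul {ι : Type*} {s : Finset ι} {A : ι → Ω → Prop} {n c : ℝ}
    (hs : (s.card : ℝ) ≤ n) (hc : 0 ≤ c) (h : ∀ i ∈ s, prob (A i) ≤ c) :
    prob (fun ω => ∃ i ∈ s, A i ω) ≤ n * c :=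
  calc prob (fun ω => ∃ i ∈ s, A i ω) ≤ ∑ i ∈ s, prob (A i) := prob_exists_le_sum s A
    _ ≤ s.card * c := by simpa using Finset.sum_le_card_nsmul s _ c h
    _ ≤ n * c := by gcongr

lemma prob_or_le (A B : Ω → Prop) : prob (fun ω => A ω ∨ B ω) ≤ prob A + prob B := by
  simpa [or_comm] using prob_exists_le_sum Finset.univ fun b : Bool => if b then A else B

end Union

section Product

variable {ι κ : Type*} [Fintype ι] [DecidableEq ι] [Fintype κ]

/-- Exchanging the `S`-coordinates of two configurations is a bijection from
`{A ∧ B} × Ω` onto `A × B`. -/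
lemma prob_and_of_dependsOn {A B : (ι → κ) → Prop} {S T : Set ι} (hA : DependsOn A S)
    (hB : DependsOn B T) (hST : Disjoint S T) :
    prob (fun ω => A ω ∧ B ω) = prob A * prob B := by
  classical
  let swap : (ι → κ) × (ι → κ) → (ι → κ) × (ι → κ) := fun p =>
    (S.piecewise p.1 p.2, S.piecewise p.2 p.1)
  have swap_swap : ∀ p, swap (swap p) = p := fun p => by
    ext i <;> by_cases hi : i ∈ S <;> simp [swap, hi]
  have swap_A : ∀ p, A (swap p).1 = A p.1 := fun p => hA fun i hi => by simp [swap, hi]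
  have swap_B : ∀ p, B (swap p).2 = B p.1 := fun p =>
    hB fun i hi => by simp [swap, Set.disjoint_right.1 hST hi]
  have hcard : (Finset.univ.filter fun ω => A ω ∧ B ω).card * Fintype.card (ι → κ)
      = (Finset.univ.filter A).card * (Finset.univ.filter B).card := by
    rw [← Finset.card_univ, ← Finset.card_product, ← Finset.card_product]
    refine Finset.card_bij' (fun p _ => swap p) (fun p _ => swap p) (fun p hp => ?_)
      (fun p hp => ?_) (fun p _ => swap_swap p) fun p _ => swap_swap p
    · simpa [swap_A, swap_B] using hp
    · have hpA := swap_A (swap p)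
      have hpB := swap_B (swap p)
      rw [swap_swap] at hpA hpB
      simpa [← hpA, ← hpB] using hp
  simp only [prob_eq_card_div]
  rcases eq_or_ne (Fintype.card (ι → κ) : ℝ) 0 with h0 | h0
  · simp only [h0, div_zero, mul_zero]
  · rw [div_mul_div_comm, div_eq_div_iff h0 (mul_ne_zero h0 h0), ← mul_assoc]
    congr 1
    exact_mod_cast hcard

lemma prob_le_of_determined_off_range [Nonempty κ] {σ : Type*} [Fintype σ]
    {A : (ι → κ) → Prop} {s : σ → ι} (hs : Function.Injective s)
    (hA : ∀ ω ω', A ω → A ω' → (∀ i ∉ Set.range s, ω i = ω' i) → ω = ω') :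
    prob A ≤ 1 / (Fintype.card κ : ℝ) ^ Fintype.card σ := by
  classical
  have hcard : (Finset.univ.filter A).card * Fintype.card κ ^ Fintype.card σ
      ≤ Fintype.card (ι → κ) := by
    rw [← Fintype.card_fun, ← Finset.card_univ (α := σ → κ), ← Finset.card_product,
      ← Finset.card_univ]
    refine Finset.card_le_card_of_injOn (fun p => Function.extend s p.2 p.1) (by simp) ?_
    rintro ⟨ω, t⟩ hω ⟨ω', t'⟩ hω' h
    have hon : t = t' := funext fun j => by
      simpa only [hs.extend_apply] using congrFun h (s j)
    have hoff : ω = ω' := hA _ _ (by simpa using hω) (by simpa using hω') fun i hi => by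
      simpa only [Function.extend_apply' _ _ _ hi] using congrFun h i
    rw [hon, hoff]
  rw [prob_eq_card_div, div_le_div_iff₀ (by positivity) (by positivity), one_mul]
  exact_mod_cast hcard

end Product

end Probability

section Wegner

variable {d N J : ℕ} {γ f f' E₀ : ℝ} {v v' φ φ' : (Fin d → ℤ) → ℝ} {Λ Q : Finset (Fin d → ℤ)}
  {s : Fin J → (Fin d → ℤ)}

lemma sum_mul_neighborSum_comm (hφ : φ.support ⊆ Q) (hφ' : φ'.support ⊆ Q) :
    ∑ z ∈ Q, φ' z * neighborSum φ z = ∑ z ∈ Q, φ z * neighborSum φ' z := by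
  rw [← Finset.sum_coe_sort Q fun z => φ' z * neighborSum φ z,
    ← Finset.sum_coe_sort Q fun z => φ z * neighborSum φ' z]
  simp only [← sum_ite_dist1_eq_neighborSum hφ, ← sum_ite_dist1_eq_neighborSum hφ', Finset.mul_sum]
  rw [Finset.sum_comm]
  refine Finset.sum_congr rfl fun z _ => Finset.sum_congr rfl fun w _ => ?_
  rw [dist1_comm]
  ring

lemma sum_potential_sub_mul_eq (hφ : φ.support ⊆ Q) (hφ' : φ'.support ⊆ Q)
    (hsol : ∀ z ∈ Q, SolvesAt γ f v φ z) (hsol' : ∀ z ∈ Q, SolvesAt γ f' v' φ' z) :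
    ∑ z ∈ Q, (v' z - v z) * (φ z * φ' z) = (f' - f) * ∑ z ∈ Q, φ z * φ' z := by
  have hgreen : ∑ z ∈ Q, ((v' z - v z) * (φ z * φ' z) - (f' - f) * (φ z * φ' z))
      = ∑ z ∈ Q, (γ * (φ z * neighborSum φ' z) - γ * (φ' z * neighborSum φ z)) := by
    refine Finset.sum_congr rfl fun z hz => ?_
    have hz_sol := hsol z hz
    have hz_sol' := hsol' z hz
    unfold SolvesAt at hz_sol hz_sol'
    linear_combination φ z * hz_sol' - φ' z * hz_sol
  rw [Finset.sum_sub_distrib, Finset.sum_sub_distrib, ← Finset.mul_sum, ← Finset.mul_sum,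
    ← Finset.mul_sum, sum_mul_neighborSum_comm hφ hφ', sub_self] at hgreen
  exact sub_eq_zero.1 hgreen

lemma potential_apply (ω : Λ → Fin N) (z : Λ) :
    potential N Λ ω z = ((ω z : ℕ) : ℝ) / ((N : ℝ) - 1) := by
  simp [potential]

lemma potential_mem_Icc (hN : 2 ≤ N) (ω : Λ → Fin N) (z : Fin d → ℤ) :
    potential N Λ ω z ∈ Set.Icc (0 : ℝ) 1 := by
  have hN' : (2 : ℝ) ≤ N := by exact_mod_cast hN
  by_cases hz : z ∈ Λ
  · have hlt : ((ω ⟨z, hz⟩ : ℕ) : ℝ) + 1 ≤ N := by exact_mod_cast (ω ⟨z, hz⟩).2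
    rw [show z = (⟨z, hz⟩ : Λ) from rfl, potential_apply]
    exact ⟨div_nonneg (by positivity) (by linarith), div_le_one_of_le₀ (by linarith) (by linarith)⟩
  · simp [potential, hz]

lemma one_div_le_abs_potential_sub (hN : 2 ≤ N) {ω ω' : Λ → Fin N} {z : Λ} (h : ω z ≠ ω' z) :
    1 / (N : ℝ) ≤ |potential N Λ ω' z - potential N Λ ω z| := by
  have hN' : (2 : ℝ) ≤ N := by exact_mod_cast hN
  have hdiff : (1 : ℝ) ≤ |((ω' z : ℕ) : ℝ) - ((ω z : ℕ) : ℝ)| := by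
    have : (1 : ℤ) ≤ |((ω' z : ℕ) : ℤ) - ((ω z : ℕ) : ℤ)| :=
      Int.one_le_abs fun h0 => h (Fin.ext (by omega))
    exact_mod_cast this
  rw [potential_apply, potential_apply, ← sub_div, abs_div,
    abs_of_pos (show (0 : ℝ) < N - 1 by linarith)]
  gcongr <;> linarith

lemma abs_le_abs_sum_add_of_geometric_tail {T : Fin J → ℝ} {j : Fin J} {b r : ℝ} (hb : 0 ≤ b)
    (hr : 0 ≤ r) (hr' : r ≤ 1 / 2) (hzero : ∀ i < j, T i = 0)
    (htail : ∀ i > j, |T i| ≤ b * r ^ (i : ℕ)) :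
    |T j| ≤ |∑ i, T i| + 2 * (b * r ^ (j + 1 : ℕ)) := by
  have hsum : ∑ i, T i = T j + ∑ i ∈ Finset.Ioi j, T i := by
    rw [← Finset.sum_insert (by simp), Finset.Ioi_insert]
    exact (Finset.sum_subset (Finset.subset_univ _) fun i _ hi => hzero i (by simpa using hi)).symm
  have hgeom : ∑ i ∈ Finset.Ioi j, r ^ (i : ℕ) ≤ 2 * r ^ (j + 1 : ℕ) :=
    calc ∑ i ∈ Finset.Ioi j, r ^ (i : ℕ)
        = ∑ i ∈ (Finset.Ioi j).map Fin.valEmbedding, r ^ i := by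
          rw [Finset.sum_map]
          rfl
      _ = ∑ i ∈ Finset.Ico (j + 1 : ℕ) J, r ^ i := by
          congr 1
          ext i
          simp
      _ ≤ r ^ (j + 1 : ℕ) / (1 - r) := geom_sum_Ico_le_of_lt_one hr (by linarith)
      _ ≤ 2 * r ^ (j + 1 : ℕ) := by
          rw [div_le_iff₀ (by linarith)]
          nlinarith [pow_nonneg hr (j + 1 : ℕ)]
  calc |T j| = |∑ i, T i - ∑ i ∈ Finset.Ioi j, T i| := by rw [hsum, add_sub_cancel_right]
    _ ≤ |∑ i, T i| + |∑ i ∈ Finset.Ioi j, T i| := abs_sub _ _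
    _ ≤ |∑ i, T i| + ∑ i ∈ Finset.Ioi j, b * r ^ (i : ℕ) := by
        gcongr
        exact (Finset.abs_sum_le_sum_abs _ _).trans
          (Finset.sum_le_sum fun i hi => htail i (Finset.mem_Ioi.1 hi))
    _ = |∑ i, T i| + b * ∑ i ∈ Finset.Ioi j, r ^ (i : ℕ) := by rw [Finset.mul_sum]
    _ ≤ |∑ i, T i| + b * (2 * r ^ (j + 1 : ℕ)) := by gcongr
    _ = _ := by ring

/-- `Q` carries an eigenfunction, normalised in sup norm and with energy within `2γ^(7J)` of `E₀`,
whose values at `s 0, …, s (J-1)` lie in the successive windows `[γ^(3j+3), γ^(3j+1)]`. -/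
def ResonantAlong (γ : ℝ) (v : (Fin d → ℤ) → ℝ) (Q : Finset (Fin d → ℤ))
    (s : Fin J → (Fin d → ℤ)) (E₀ : ℝ) : Prop :=
  ∃ (f : ℝ) (φ : (Fin d → ℤ) → ℝ), φ.support ⊆ Q ∧ (∀ z ∈ Q, SolvesAt γ f v φ z) ∧
    (∀ z, |φ z| ≤ 1) ∧ |f - E₀| ≤ 2 * γ ^ (7 * J) ∧
    ∀ j : Fin J, γ ^ (3 * (j + 1 : ℕ)) ≤ |φ (s j)| ∧ |φ (s j)| ≤ γ ^ (3 * j + 1 : ℕ)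

lemma ResonantAlong.mem (hγ : 0 < γ) (h : ResonantAlong γ v Q s E₀) (j : Fin J) : s j ∈ Q := by
  obtain ⟨f, φ, hsupp, -, -, -, hwin⟩ := h
  have hpos : 0 < |φ (s j)| := (by positivity : 0 < γ ^ (3 * (j + 1 : ℕ))).trans_le (hwin j).1
  exact hsupp (abs_pos.1 hpos)

lemma ResonantAlong.injective (hγ : 0 < γ) (hγ1 : γ < 1) (h : ResonantAlong γ v Q s E₀) :
    Function.Injective s := by
  obtain ⟨f, φ, -, -, -, -, hwin⟩ := h
  refine Function.Injective.of_lt_imp_ne fun i j hij heq => ?_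
  have hlt : γ ^ (3 * j + 1 : ℕ) < γ ^ (3 * (i + 1 : ℕ)) :=
    pow_lt_pow_right_of_lt_one₀ hγ hγ1 (by omega)
  have hi := (hwin i).1
  rw [heq] at hi
  linarith [(hwin j).2]

lemma abs_energy_sub_mul_sum_le {δ : ℝ} (hφ : ∀ z, |φ z| ≤ 1) (hφ' : ∀ z, |φ' z| ≤ 1)
    (hf : |f - E₀| ≤ 2 * δ) (hf' : |f' - E₀| ≤ 2 * δ) :
    |(f' - f) * ∑ z ∈ Q, φ z * φ' z| ≤ 4 * δ * Q.card := by
  have henergy : |f' - f| ≤ 4 * δ := by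
    have := abs_sub_le f' E₀ f
    rw [abs_sub_comm E₀ f] at this
    linarith
  have hsum : |∑ z ∈ Q, φ z * φ' z| ≤ Q.card :=
    calc |∑ z ∈ Q, φ z * φ' z| ≤ ∑ z ∈ Q, |φ z * φ' z| := Finset.abs_sum_le_sum_abs _ _
      _ ≤ ∑ _z ∈ Q, (1 : ℝ) := Finset.sum_le_sum fun z _ => by
          rw [abs_mul]
          exact mul_le_one₀ (hφ z) (abs_nonneg _) (hφ' z)
      _ = Q.card := by simp
  rw [abs_mul]
  exact mul_le_mul henergy hsum (abs_nonneg _) ((abs_nonneg _).trans henergy)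

/-- In Green's identity over `Q` only the terms with index at least `j` survive, and the `j`-th
term, which is at least `δ γ^(6j+6)`, dominates the later ones. -/
lemma ResonantAlong.le_of_first_difference {δ : ℝ} (hγ : 0 < γ) (hγ1 : γ ≤ 1 / 2)
    (h : ResonantAlong γ v Q s E₀) (h' : ResonantAlong γ v' Q s E₀)
    (hle : ∀ z, |v' z - v z| ≤ 1) (hoff : ∀ z ∈ Q, z ∉ Set.range s → v z = v' z) {j : Fin J}
    (hbefore : ∀ i < j, v (s i) = v' (s i)) (hδ : δ ≤ |v' (s j) - v (s j)|) :
    δ ≤ 2 * γ ^ 2 + 4 * (γ ^ J * Q.card) := by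
  have hsQ := h.mem hγ
  have hsinj := h.injective hγ (by linarith)
  obtain ⟨f, φ, hsupp, hsol, hφ1, hfE, hwin⟩ := h
  obtain ⟨f', φ', hsupp', hsol', hφ1', hfE', hwin'⟩ := h'
  set T : Fin J → ℝ := fun i => (v' (s i) - v (s i)) * (φ (s i) * φ' (s i)) with hT
  have hTabs : ∀ i, |T i| = |v' (s i) - v (s i)| * (|φ (s i)| * |φ' (s i)|) := fun i => by
    simp only [hT, abs_mul]
  have hTsum : ∑ i, T i = (f' - f) * ∑ z ∈ Q, φ z * φ' z := by
    rw [← sum_potential_sub_mul_eq hsupp hsupp' hsol hsol']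
    refine Finset.sum_of_injOn s hsinj.injOn (fun i _ => hsQ i) (fun z hz hzs => ?_) fun i _ => rfl
    rw [hoff z hz (by simpa using hzs), sub_self, zero_mul]
  have htail : ∀ i > j, |T i| ≤ γ ^ 2 * (γ ^ 6) ^ (i : ℕ) := fun i _ =>
    calc |T i| ≤ 1 * (γ ^ (3 * i + 1 : ℕ) * γ ^ (3 * i + 1 : ℕ)) := by
          rw [hTabs]
          gcongr
          exacts [hle _, (hwin i).2, (hwin' i).2]
      _ = _ := by ring
  have hlead : γ ^ (6 * j + 6 : ℕ) * δ ≤ |T j| := by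
    rw [hTabs, show γ ^ (6 * j + 6 : ℕ) * δ
      = δ * (γ ^ (3 * (j + 1 : ℕ)) * γ ^ (3 * (j + 1 : ℕ))) by ring]
    gcongr
    exacts [(hwin j).1, (hwin' j).1]
  have hpow : γ ^ (7 * J) ≤ γ ^ (6 * j + 6 : ℕ) * γ ^ J := by
    rw [← pow_add]
    exact pow_le_pow_of_le_one hγ.le (by linarith) (by omega)
  have hγ6 : γ ^ 6 ≤ 1 / 2 := (pow_le_of_le_one hγ.le (by linarith) (by norm_num)).trans hγ1
  refine le_of_mul_le_mul_left (hlead.trans ?_) (by positivity : 0 < γ ^ (6 * j + 6 : ℕ))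
  calc |T j| ≤ |∑ i, T i| + 2 * (γ ^ 2 * (γ ^ 6) ^ (j + 1 : ℕ)) :=
        abs_le_abs_sum_add_of_geometric_tail (by positivity) (by positivity) hγ6
          (fun i hi => by simp [hT, hbefore i hi]) htail
    _ ≤ 4 * γ ^ (7 * J) * Q.card + 2 * (γ ^ 2 * (γ ^ 6) ^ (j + 1 : ℕ)) := by
        rw [hTsum]
        gcongr
        exact abs_energy_sub_mul_sum_le hφ1 hφ1' hfE hfE'
    _ ≤ 4 * (γ ^ (6 * j + 6 : ℕ) * γ ^ J) * Q.card + 2 * (γ ^ 2 * (γ ^ 6) ^ (j + 1 : ℕ)) := by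
        gcongr
    _ = _ := by ring

lemma ResonantAlong.potential_eqOn {δ : ℝ} (hγ : 0 < γ) (hγ1 : γ ≤ 1 / 2)
    (h : ResonantAlong γ v Q s E₀) (h' : ResonantAlong γ v' Q s E₀)
    (hle : ∀ z, |v' z - v z| ≤ 1) (hgap : ∀ z ∈ Q, v z ≠ v' z → δ ≤ |v' z - v z|)
    (hoff : ∀ z ∈ Q, z ∉ Set.range s → v z = v' z)
    (hδ : 2 * γ ^ 2 + 4 * (γ ^ J * Q.card) < δ) : ∀ z ∈ Q, v z = v' z := by
  by_contra! hne
  obtain ⟨z, hz, hzne⟩ := hne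
  obtain ⟨i, rfl⟩ : z ∈ Set.range s := by_contra fun hzs => hzne (hoff z hz hzs)
  obtain ⟨j, hj, hmin⟩ := wellFounded_lt.has_min {j | v (s j) ≠ v' (s j)} ⟨i, hzne⟩
  exact hδ.not_ge <| h.le_of_first_difference hγ hγ1 h' hle hoff
    (fun i hi => by_contra fun hc => hmin i hc hi) (hgap _ (h.mem hγ j) hj)

/-- A Wegner estimate for a discrete potential: on the event, the configuration is determined by
its values off `s`. -/
lemma prob_resonantAlong_le (hN : 2 ≤ N) (hγ : 0 < γ) (hγ1 : γ ≤ 1 / 2) (hQ : Q ⊆ Λ)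
    (s : Fin J → (Fin d → ℤ)) {E₀ : (Λ → Fin N) → ℝ}
    (hE : DependsOn E₀ {z : Λ | (z : Fin d → ℤ) ∉ Q})
    (hsmall : 2 * γ ^ 2 + 4 * (γ ^ J * Q.card) < 1 / N) :
    prob (fun ω : Λ → Fin N => ResonantAlong γ (potential N Λ ω) Q s (E₀ ω)) ≤ 1 / (N : ℝ) ^ J := by
  by_cases hne : ∃ ω : Λ → Fin N, ResonantAlong γ (potential N Λ ω) Q s (E₀ ω)
  swap
  · push Not at hne
    simp only [hne, prob, Finset.filter_false, Finset.card_empty, Nat.cast_zero, zero_div]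
    positivity
  obtain ⟨ω₀, hω₀⟩ := hne
  have hsQ := hω₀.mem hγ
  have hsinj := hω₀.injective hγ (by linarith)
  have : Nonempty (Fin N) := ⟨⟨0, by omega⟩⟩
  have hs' : Function.Injective fun j => (⟨s j, hQ (hsQ j)⟩ : Λ) := fun i j hij =>
    hsinj (congrArg Subtype.val hij)
  refine (prob_le_of_determined_off_range hs' fun ω ω' hω hω' hoff => ?_).trans_eq
    (by rw [Fintype.card_fin, Fintype.card_fin])
  have hEE : E₀ ω = E₀ ω' := hE fun z hz => hoff z <| by
    rintro ⟨j, rfl⟩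
    exact hz (hsQ j)
  have hpot : ∀ z ∈ Q, potential N Λ ω z = potential N Λ ω' z := by
    refine hω.potential_eqOn hγ hγ1 (hEE ▸ hω') (fun z => ?_) (fun z hz hzne => ?_)
      (fun z hz hzs => ?_) hsmall
    · have h := potential_mem_Icc hN ω z
      have h' := potential_mem_Icc hN ω' z
      exact abs_sub_le_iff.2 ⟨by linarith [h.1, h'.2], by linarith [h.2, h'.1]⟩
    · refine one_div_le_abs_potential_sub (z := ⟨z, hQ hz⟩) hN fun h => hzne ?_
      simp [potential, hQ hz, h]
    · have := hoff ⟨z, hQ hz⟩ fun ⟨j, hj⟩ => hzs ⟨j, congrArg Subtype.val hj⟩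
      simp [potential, hQ hz, this]
  funext z
  by_cases hzQ : (z : Fin d → ℤ) ∈ Q
  · by_contra hz
    have := one_div_le_abs_potential_sub hN hz
    rw [hpot z hzQ, sub_self, abs_zero] at this
    exact absurd this (not_le.2 (by positivity))
  · exact hoff z fun ⟨j, hj⟩ => hzQ (hj ▸ hsQ j)

end Wegner

section BadSites

variable {d ℓ : ℕ} {γ m E : ℝ} {v v' : (Fin d → ℤ) → ℝ} {X U : Finset (Fin d → ℤ)}

/-- `U` does not contain six bad sites of `X` at scale `ℓ` and energy `E` with pairwise disjoint
`ℓ¹` balls of radius `ℓ`. -/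
def FewBadSites (γ : ℝ) (v : (Fin d → ℤ) → ℝ) (m : ℝ) (X : Finset (Fin d → ℤ)) (ℓ : ℕ)
    (U : Finset (Fin d → ℤ)) (E : ℝ) : Prop :=
  ∀ C ⊆ U, (∀ c ∈ C, ¬ IsGood γ v m X ℓ c E) →
    (∀ c ∈ C, ∀ c' ∈ C, c ≠ c' → 2 * ℓ + 1 ≤ dist1 c c') → C.card ≤ 5

lemma FewBadSites.exists_cover (h : FewBadSites γ v m X ℓ U E) :
    ∃ C ⊆ U, C.card ≤ 5 ∧ ∀ z ∈ U, ¬ IsGood γ v m X ℓ z E → ∃ c ∈ C, dist1 z c ≤ 2 * ℓ := by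
  classical
  obtain ⟨C, hC, hmax⟩ := Finset.exists_max_image (U.powerset.filter fun C =>
    (∀ c ∈ C, ¬ IsGood γ v m X ℓ c E) ∧ ∀ c ∈ C, ∀ c' ∈ C, c ≠ c' → 2 * ℓ + 1 ≤ dist1 c c')
    Finset.card ⟨∅, by simp⟩
  simp only [Finset.mem_filter, Finset.mem_powerset] at hC hmax
  obtain ⟨hCU, hCbad, hCsep⟩ := hC
  refine ⟨C, hCU, h C hCU hCbad hCsep, fun z hz hzbad => ?_⟩
  by_contra! hfar
  have hzC : z ∉ C := fun hzC => by simpa [dist1_self] using hfar z hzC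
  have hsep : ∀ c ∈ insert z C, ∀ c' ∈ insert z C, c ≠ c' → 2 * ℓ + 1 ≤ dist1 c c' := by
    simp only [Finset.forall_mem_insert]
    refine ⟨⟨fun h => absurd rfl h, fun c hc _ => hfar c hc⟩, fun c hc => ⟨fun _ => ?_, hCsep c hc⟩⟩
    rw [dist1_comm]
    exact hfar c hc
  have hle := hmax (insert z C) ⟨Finset.insert_subset hz hCU,
    Finset.forall_mem_insert _ _ _ |>.2 ⟨hzbad, hCbad⟩, hsep⟩
  rw [Finset.card_insert_of_notMem hzC] at hle
  omega

end BadSites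

section FreeLevels

variable {α : Type*} (C : Finset α) (h : α → ℕ) (w : ℕ)

/-- The levels within distance `w` of a level `h c` with `c ∈ C`. -/
def nearLevels : Set ℕ := {s | ∃ c ∈ C, h c ≤ s + w ∧ s ≤ h c + w}

open scoped Classical in
/-- The number of levels in `[t, T)` outside `Z`: the number of factors of decay collected between
level `t` and level `T`. -/
def freeCount (Z : Set ℕ) (T t : ℕ) : ℕ := {s ∈ Finset.Ico t T | s ∉ Z}.card

open scoped Classical in
lemma card_filter_nearLevels_le (S : Finset ℕ) :
    {s ∈ S | s ∈ nearLevels C h w}.card ≤ C.card * (2 * w + 1) := by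
  have hcover : {s ∈ S | s ∈ nearLevels C h w}
      ⊆ C.biUnion fun c => Finset.Icc (h c - w) (h c + w) := by
    intro s hs
    obtain ⟨-, c, hc, hlow, hupp⟩ := Finset.mem_filter.1 hs
    exact Finset.mem_biUnion.2 ⟨c, hc, Finset.mem_Icc.2 ⟨by omega, hupp⟩⟩
  refine (Finset.card_le_card hcover).trans (Finset.card_biUnion_le_card_mul _ _ _ fun c _ => ?_)
  rw [Nat.card_Icc]
  omega

lemma exists_notMem_nearLevels (A : ℕ) :
    ∃ r, A ≤ r ∧ r ≤ A + C.card * (2 * w + 1) ∧ r ∉ nearLevels C h w := by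
  classical
  by_contra! hall
  have hle := card_filter_nearLevels_le C h w (Finset.Icc A (A + C.card * (2 * w + 1)))
  rw [Finset.filter_true_of_mem fun r hr =>
    hall r (Finset.mem_Icc.1 hr).1 (Finset.mem_Icc.1 hr).2, Nat.card_Icc] at hle
  omega

lemma le_freeCount_nearLevels_add (T : ℕ) :
    T ≤ freeCount (nearLevels C h w) T 0 + C.card * (2 * w + 1) := by
  classical
  have hsplit := Finset.card_filter_add_card_filter_not (s := Finset.Ico 0 T) (· ∈ nearLevels C h w)
  have hle := card_filter_nearLevels_le C h w (Finset.Ico 0 T)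
  rw [Nat.card_Ico] at hsplit
  unfold freeCount
  omega

variable {Z : Set ℕ} {T t t' : ℕ}

lemma freeCount_eq_zero (Z : Set ℕ) (h : T ≤ t) : freeCount Z T t = 0 := by
  simp [freeCount, Finset.Ico_eq_empty_of_le h]

lemma freeCount_le_add (Z : Set ℕ) (T : ℕ) {k : ℕ} (h : t' ≤ t + k) :
    freeCount Z T t ≤ freeCount Z T t' + k := by
  classical
  have hsub : {s ∈ Finset.Ico t T | s ∉ Z}
      ⊆ {s ∈ Finset.Ico t' T | s ∉ Z} ∪ Finset.Ico t (t + k) := by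
    intro s
    simp only [Finset.mem_filter, Finset.mem_Ico, Finset.mem_union]
    by_cases hs : t' ≤ s
    · tauto
    · omega
  calc freeCount Z T t ≤ _ := Finset.card_le_card hsub
    _ ≤ freeCount Z T t' + (Finset.Ico t (t + k)).card := Finset.card_union_le _ _
    _ = freeCount Z T t' + k := by simp

lemma freeCount_eq_of_Icc_subset {a b : ℕ} (hZ : Set.Icc a b ⊆ Z) (ht : t ∈ Set.Icc a b)
    (ht' : t' ∈ Set.Icc a b) : freeCount Z T t = freeCount Z T t' := by
  classical
  have hlevel : ∀ s ∉ Z, (t ≤ s ↔ t' ≤ s) := fun s hs => by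
    have : ¬ (a ≤ s ∧ s ≤ b) := fun h => hs (hZ h)
    have := ht.1
    have := ht.2
    have := ht'.1
    have := ht'.2
    omega
  unfold freeCount
  congr 1
  ext s
  simp only [Finset.mem_filter, Finset.mem_Ico]
  have := hlevel s
  tauto

end FreeLevels

section GoodFromFewBad

variable {d ℓ L J : ℕ} {γ m m' E K M : ℝ} {v φ : (Fin d → ℤ) → ℝ} {X : Finset (Fin d → ℤ)}
  {C : Finset (Fin d → ℤ)} {c x w : Fin d → ℤ}

/-- The numerical relations between consecutive scales `ℓ` and `L`, the rates `m` and `m'` at these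
scales, and the exponent `J` of the spectral resolution `γ^(7J)`. -/
structure ScaleStep (d : ℕ) (γ m m' : ℝ) (ℓ L J : ℕ) : Prop where
  one_le_dim : 1 ≤ d
  pos : 0 < γ
  le_quarter : γ ≤ 1 / 4
  two_dim_mul_le : 2 * d * γ ≤ 1
  sixteen_le : 16 ≤ ℓ
  collar_le : 200 * (d * ℓ) ≤ L
  one_le_exponent : 1 ≤ J
  exponent_le : 15 * (J : ℝ) ≤ m * (ℓ + 1)
  rate_nonneg : 0 ≤ m'
  rate_lt : m' < m
  rate_loss : m' * (L + 1) ≤ (m + m') / 2 * (L - 1200 * (d * ℓ) - 5)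
  box_small : γ ^ (8 * J + 1) * (2 * d * (161 * (ℓ : ℝ)) ^ d) < 1

lemma ScaleStep.le_dim_mul (h : ScaleStep d γ m m' ℓ L J) : ℓ ≤ d * ℓ :=
  Nat.le_mul_of_pos_left ℓ h.one_le_dim

lemma ScaleStep.mean_rate_nonneg (h : ScaleStep d γ m m' ℓ L J) : 0 ≤ (m + m') / 2 := by
  linarith [h.rate_lt, h.rate_nonneg]

lemma ScaleStep.rpow_lt_pow_succ (h : ScaleStep d γ m m' ℓ L J) :
    γ ^ (m * ((ℓ : ℝ) + 1)) < (γ ^ ((m + m') / 2)) ^ (ℓ + 1) := by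
  rw [← Real.rpow_mul_natCast h.pos.le, Nat.cast_succ]
  refine Real.rpow_lt_rpow_of_exponent_gt h.pos (by linarith [h.le_quarter]) ?_
  exact mul_lt_mul_of_pos_right (by linarith [h.rate_lt]) (by positivity)

lemma freeCount_eq_of_dist1_le {z : Fin d → ℤ} {r T : ℕ} (hc : c ∈ C) (hw : dist1 w c ≤ r)
    (hz : dist1 z c ≤ r) :
    freeCount (nearLevels C (fun c => dist1 c x) r) T (dist1 w x)
      = freeCount (nearLevels C (fun c => dist1 c x) r) T (dist1 z x) := by
  have hzx := dist1_triangle z c x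
  have hwx := dist1_triangle w c x
  have hcz := dist1_triangle c z x
  have hcw := dist1_triangle c w x
  rw [dist1_comm c z] at hcz
  rw [dist1_comm c w] at hcw
  refine freeCount_eq_of_Icc_subset (a := dist1 c x - r) (b := dist1 c x + r) (fun s hs => ?_)
    ⟨by omega, by omega⟩ ⟨by omega, by omega⟩
  have := hs.1
  exact ⟨c, hc, by dsimp only; omega, hs.2⟩

lemma abs_le_mul_of_forall_lt {α : Type*} {S : Finset α} {φ W : α → ℝ} (hW : ∀ z, 0 < W z)
    (h : ∀ K, M < K → (∀ z ∈ S, |φ z| ≤ W z * K) → ∀ z ∈ S, |φ z| < W z * K) :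
    ∀ z ∈ S, |φ z| ≤ W z * M := by
  intro z hz
  obtain ⟨w, hw, hmax⟩ := Finset.exists_max_image S (fun z => |φ z| / W z) ⟨z, hz⟩
  set K := |φ w| / W w with hK
  have hle : ∀ z ∈ S, |φ z| ≤ W z * K := fun z hz => (div_le_iff₀' (hW z)).1 (hmax z hz)
  have hKM : K ≤ M := by
    by_contra! hMK
    have := h K hMK hle w hw
    rw [hK, mul_div_cancel₀ _ (hW w).ne'] at this
    exact this.false
  exact (hle z hz).trans (mul_le_mul_of_nonneg_left hKM (hW z).le)

lemma IsGood.abs_lt_pow_freeCount (hgood : IsGood γ v m X ℓ w E) {g : ℝ} {Z : Set ℕ} {T : ℕ}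
    (hg0 : 0 < g) (hg1 : g ≤ 1) (hgm : γ ^ (m * ((ℓ : ℝ) + 1)) < g ^ (ℓ + 1)) (hK : 0 < K)
    (hsupp : φ.support ⊆ X) (hsol : ∀ z ∈ X, dist1 z w ≤ ℓ → SolvesAt γ E v φ z)
    (hφ : ∀ z, dist1 z w ≤ ℓ + 1 → |φ z| ≤ g ^ freeCount Z T (dist1 z x) * K) :
    |φ w| < g ^ freeCount Z T (dist1 w x) * K := by
  set n := freeCount Z T (dist1 w x)
  have hball : ∀ z, dist1 z w ≤ ℓ + 1 → |φ z| ≤ g ^ (n - (ℓ + 1)) * K := by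
    intro z hz
    have hn : n ≤ freeCount Z T (dist1 z x) + (ℓ + 1) :=
      freeCount_le_add Z T (by have := dist1_triangle z w x; omega)
    exact (hφ z hz).trans (mul_le_mul_of_nonneg_right
      (pow_le_pow_of_le_one hg0.le hg1 (by omega)) hK.le)
  calc |φ w| ≤ γ ^ (m * ((ℓ : ℝ) + 1)) * (g ^ (n - (ℓ + 1)) * K) := hgood φ hsupp hsol _ hball
    _ < g ^ (ℓ + 1) * (g ^ (n - (ℓ + 1)) * K) := by gcongr
    _ = g ^ (ℓ + 1 + (n - (ℓ + 1))) * K := by ring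
    _ ≤ g ^ n * K :=
        mul_le_mul_of_nonneg_right (pow_le_pow_of_le_one hg0.le hg1 (by omega)) hK.le

lemma exists_radius_forall_shell_isGood (hℓ : 16 ≤ ℓ) (hC : C.card ≤ 5)
    (hcover : ∀ z ∈ X, dist1 z c ≤ d * (71 * ℓ) → ¬ IsGood γ v m X ℓ z E →
      ∃ c' ∈ C, dist1 z c' ≤ 2 * ℓ) :
    ∃ ρ, 50 * ℓ ≤ ρ ∧ ρ + 1 ≤ 71 * ℓ ∧ ∀ y ∈ X, distInf y c = ρ + 1 → IsGood γ v m X ℓ y E := by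
  obtain ⟨r, hrlow, hrupp, hr⟩ :=
    exists_notMem_nearLevels C (fun c' => distInf c' c) (2 * ℓ) (50 * ℓ + 1)
  have hC5 : C.card * (2 * (2 * ℓ) + 1) ≤ 5 * (2 * (2 * ℓ) + 1) := Nat.mul_le_mul_right _ hC
  refine ⟨r - 1, by omega, by omega, fun y hyX hy => by_contra fun hbad => hr ?_⟩
  have hyc : dist1 y c ≤ d * (71 * ℓ) :=
    (dist1_le_mul_distInf y c).trans (Nat.mul_le_mul_left d (by omega))
  obtain ⟨c', hc', hyc'⟩ := hcover y hyX hyc hbad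
  have hc'c := distInf_triangle c' y c
  have hyc_le := distInf_triangle y c' c
  have hyc'_le := distInf_le_dist1 y c'
  rw [distInf_comm c' y] at hc'c
  refine ⟨c', hc', ?_⟩
  dsimp only
  omega

lemma ScaleStep.abs_le_of_isGood (hstep : ScaleStep d γ m m' ℓ L J) (hK : 0 ≤ K)
    (hgood : IsGood γ v m X ℓ w E) (hsupp : φ.support ⊆ X)
    (hsol : ∀ z ∈ X, dist1 z w ≤ ℓ → SolvesAt γ E v φ z) (hφ : ∀ z, dist1 z w ≤ ℓ + 1 → |φ z| ≤ K) :
    |φ w| ≤ γ ^ (15 * J) * K := by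
  refine (hgood φ hsupp hsol K hφ).trans (mul_le_mul_of_nonneg_right ?_ hK)
  rw [← Real.rpow_natCast]
  refine Real.rpow_le_rpow_of_exponent_ge hstep.pos (by linarith [hstep.le_quarter]) ?_
  push_cast
  exact hstep.exponent_le

lemma ScaleStep.exists_radius_boundary_le (hstep : ScaleStep d γ m m' ℓ L J) (hK : 0 ≤ K)
    (hC : C.card ≤ 5) (hcover : ∀ z ∈ X, dist1 z c ≤ d * (71 * ℓ) → ¬ IsGood γ v m X ℓ z E →
      ∃ c' ∈ C, dist1 z c' ≤ 2 * ℓ)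
    (hsupp : φ.support ⊆ X) (hsol : ∀ z ∈ X, dist1 z c ≤ 100 * (d * ℓ) → SolvesAt γ E v φ z)
    (hφ : ∀ z, dist1 z c ≤ 100 * (d * ℓ) → |φ z| ≤ K) :
    ∃ ρ, 50 * ℓ ≤ ρ ∧ ρ ≤ 80 * ℓ ∧ (∀ z ∈ X ∩ cube c ρ, SolvesAt γ E v φ z) ∧
      ∀ z ∈ X ∩ cube c ρ, ∀ τ, z + unitVec τ ∉ X ∩ cube c ρ →
        |φ (z + unitVec τ)| ≤ γ ^ (15 * J) * K := by
  have hγ := hstep.pos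
  have hℓ := hstep.sixteen_le
  have hdℓ := hstep.le_dim_mul
  obtain ⟨ρ, hρlow, hρupp, hshell⟩ := exists_radius_forall_shell_isGood hℓ hC hcover
  have hdist : ∀ z, distInf z c ≤ ρ + 1 → dist1 z c ≤ 71 * (d * ℓ) := fun z hz =>
    calc dist1 z c ≤ d * distInf z c := dist1_le_mul_distInf z c
      _ ≤ d * (71 * ℓ) := Nat.mul_le_mul_left d (hz.trans hρupp)
      _ = 71 * (d * ℓ) := by ring
  refine ⟨ρ, hρlow, by omega, fun z hz => ?_, fun z hz τ hzτ => ?_⟩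
  · obtain ⟨hzX, hzc⟩ := Finset.mem_inter.1 hz
    have := hdist z ((mem_cube.1 hzc).trans (Nat.le_succ ρ))
    exact hsol z hzX (by omega)
  set y := z + unitVec τ with hy
  by_cases hyX : y ∈ X
  swap
  · rw [Function.support_subset_iff'.1 hsupp y hyX, abs_zero]
    positivity
  have hzρ := mem_cube.1 (Finset.mem_inter.1 hz).2
  have hρy : ρ < distInf y c := by simpa [hyX, mem_cube] using hzτ
  have hyz := distInf_le_dist1 y z
  rw [dist1_comm, hy, dist1_add_unitVec, ← hy] at hyz
  have hyρ : distInf y c = ρ + 1 := by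
    have := distInf_triangle y z c
    omega
  have hyc := hdist y hyρ.le
  refine hstep.abs_le_of_isGood hK (hshell y hyX hyρ) hsupp (fun u hu huy => hsol u hu ?_)
    fun u huy => hφ u ?_
  all_goals
    have := dist1_triangle u y c
    omega

/-- All sites just outside some cube around `c` are good, so `φ` is at most `γ^(15J) K` there; the
spectral gap of the cube loses only `γ^(-7J)` and a volume factor. -/
lemma ScaleStep.abs_lt_of_dist1_le (hstep : ScaleStep d γ m m' ℓ L J) (hK : 0 < K)
    (hC : C.card ≤ 5) (hcover : ∀ z ∈ X, dist1 z c ≤ d * (71 * ℓ) → ¬ IsGood γ v m X ℓ z E →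
      ∃ c' ∈ C, dist1 z c' ≤ 2 * ℓ)
    (hgap : ∀ ρ ∈ Finset.Icc (50 * ℓ) (80 * ℓ), ∀ e,
      γ ^ (7 * J) ≤ |eigenvalue γ v (X ∩ cube c ρ) e - E|)
    (hsupp : φ.support ⊆ X) (hsol : ∀ z ∈ X, dist1 z c ≤ 100 * (d * ℓ) → SolvesAt γ E v φ z)
    (hφ : ∀ z, dist1 z c ≤ 100 * (d * ℓ) → |φ z| ≤ K) (hwX : w ∈ X) (hw : dist1 w c ≤ 2 * ℓ) :
    |φ w| < K := by
  have hγ := hstep.pos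
  have hℓ := hstep.sixteen_le
  obtain ⟨ρ, hρlow, hρupp, hsolρ, hbdry⟩ :=
    hstep.exists_radius_boundary_le hK.le hC hcover hsupp hsol hφ
  have hwρ : w ∈ X ∩ cube c ρ :=
    Finset.mem_inter.2 ⟨hwX, mem_cube.2 ((distInf_le_dist1 w c).trans (by omega))⟩
  have hcard : ((X ∩ cube c ρ).card : ℝ) ≤ (161 * (ℓ : ℝ)) ^ d := by
    exact_mod_cast card_inter_cube_le X c (ℓ := ℓ) (by omega) hρupp
  calc |φ w| ≤ (γ ^ (7 * J))⁻¹ * (γ * (2 * d * (γ ^ (15 * J) * K)) * (X ∩ cube c ρ).card) :=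
        abs_le_of_spectral_gap hγ.le (by positivity) (by positivity)
          (hgap ρ (Finset.mem_Icc.2 ⟨hρlow, hρupp⟩)) hsolρ hbdry hwρ
    _ ≤ (γ ^ (7 * J))⁻¹ * (γ * (2 * d * (γ ^ (15 * J) * K)) * (161 * (ℓ : ℝ)) ^ d) := by gcongr
    _ = γ ^ (8 * J + 1) * (2 * d * (161 * (ℓ : ℝ)) ^ d) * K := by
        rw [show 15 * J = 7 * J + 8 * J by ring, pow_add γ (7 * J), pow_succ]
        field_simp
    _ < 1 * K := by gcongr; exact hstep.box_small
    _ = K := one_mul K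

/-- The comparison function decays at rate `(m + m') / 2` per level, except that it is constant
within the collar `100dℓ` of the (at most five) clusters of bad sites. -/
lemma ScaleStep.abs_lt_pow_freeCount (hstep : ScaleStep d γ m m' ℓ L J) {g : ℝ}
    (hg : g = γ ^ ((m + m') / 2)) (hK : 0 < K) (hC : C.card ≤ 5)
    (hCU : C ⊆ X ∩ l1Ball x (L - 100 * (d * ℓ)))
    (hcover : ∀ z ∈ X ∩ l1Ball x (L - 100 * (d * ℓ)), ¬ IsGood γ v m X ℓ z E →
      ∃ c ∈ C, dist1 z c ≤ 2 * ℓ)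
    (hgap : ∀ c ∈ X ∩ l1Ball x (L - 100 * (d * ℓ)), ∀ ρ ∈ Finset.Icc (50 * ℓ) (80 * ℓ),
      ∀ e, γ ^ (7 * J) ≤ |eigenvalue γ v (X ∩ cube c ρ) e - E|)
    (hsupp : φ.support ⊆ X) (hsol : ∀ z ∈ X, dist1 z x ≤ L → SolvesAt γ E v φ z)
    {Z : Set ℕ} (hZ : Z = nearLevels C (fun c => dist1 c x) (100 * (d * ℓ)))
    (hφ : ∀ z, dist1 z x ≤ L + 1 →
      |φ z| ≤ g ^ freeCount Z (L - 200 * (d * ℓ)) (dist1 z x) * K)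
    (hwX : w ∈ X) (hw : dist1 w x < L - 200 * (d * ℓ)) :
    |φ w| < g ^ freeCount Z (L - 200 * (d * ℓ)) (dist1 w x) * K := by
  have hγ := hstep.pos
  have hγ1 : γ < 1 := by linarith [hstep.le_quarter]
  have hdℓ := hstep.le_dim_mul
  have hℓ := hstep.sixteen_le
  have hg0 : 0 < g := hg ▸ Real.rpow_pos_of_pos hγ _
  have hg1 : g ≤ 1 := hg ▸ Real.rpow_le_one hγ.le hγ1.le hstep.mean_rate_nonneg
  by_cases hgood : IsGood γ v m X ℓ w E
  · have hgm : γ ^ (m * ((ℓ : ℝ) + 1)) < g ^ (ℓ + 1) := hg ▸ hstep.rpow_lt_pow_succ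
    refine hgood.abs_lt_pow_freeCount hg0 hg1 hgm hK hsupp (fun z hz hzw => hsol z hz ?_)
      fun z hzw => hφ z ?_
    all_goals
      have := dist1_triangle z w x
      omega
  obtain ⟨c, hcC, hwc⟩ := hcover w (Finset.mem_inter.2 ⟨hwX, mem_l1Ball.2 (by omega)⟩) hgood
  have hcL := mem_l1Ball.1 (Finset.mem_inter.1 (hCU hcC)).2
  have hcx := dist1_triangle c w x
  rw [dist1_comm c w] at hcx
  refine hstep.abs_lt_of_dist1_le (by positivity) hC (fun z hz hzc => hcover z ?_)
    (hgap c (hCU hcC)) hsupp (fun z hz hzc => hsol z hz ?_) (fun z hzc => ?_) hwX hwc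
  · have : d * (71 * ℓ) = 71 * (d * ℓ) := by ring
    have := dist1_triangle z c x
    exact Finset.mem_inter.2 ⟨hz, mem_l1Ball.2 (by omega)⟩
  · have := dist1_triangle z c x
    omega
  · have := dist1_triangle z c x
    rw [hZ, freeCount_eq_of_dist1_le hcC (hwc.trans (by omega)) hzc, ← hZ]
    exact hφ z (by omega)

lemma ScaleStep.isGood_of_fewBadSites (hstep : ScaleStep d γ m m' ℓ L J)
    (hfew : FewBadSites γ v m X ℓ (X ∩ l1Ball x (L - 100 * (d * ℓ))) E)
    (hgap : ∀ c ∈ X ∩ l1Ball x (L - 100 * (d * ℓ)), ∀ ρ ∈ Finset.Icc (50 * ℓ) (80 * ℓ),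
      ∀ e, γ ^ (7 * J) ≤ |eigenvalue γ v (X ∩ cube c ρ) e - E|) :
    IsGood γ v m' X L x E := by
  intro φ hsupp hsol M hM
  have hγ := hstep.pos
  have hM0 : 0 ≤ M := (abs_nonneg _).trans (hM x (by simp [dist1_self]))
  obtain ⟨C, hCU, hC5, hcover⟩ := hfew.exists_cover
  set Z := nearLevels C (fun c => dist1 c x) (100 * (d * ℓ)) with hZ
  set T := L - 200 * (d * ℓ)
  set g := γ ^ ((m + m') / 2) with hg
  have : 0 < g := Real.rpow_pos_of_pos hγ _
  have henvelope : ∀ z ∈ l1Ball x (L + 1), |φ z| ≤ g ^ freeCount Z T (dist1 z x) * M := by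
    refine abs_le_mul_of_forall_lt (fun z => by positivity) fun K hMK hK w hw => ?_
    have hK0 : 0 < K := hM0.trans_lt hMK
    by_cases hwX : w ∈ X
    swap
    · rw [Function.support_subset_iff'.1 hsupp w hwX, abs_zero]
      positivity
    rcases lt_or_ge (dist1 w x) T with hwT | hwT
    · exact hstep.abs_lt_pow_freeCount hg hK0 hC5 hCU hcover hgap hsupp hsol hZ
        (fun z hz => hK z (mem_l1Ball.2 hz)) hwX hwT
    · rw [freeCount_eq_zero Z hwT, pow_zero, one_mul]
      exact (hM w (mem_l1Ball.1 hw)).trans_lt hMK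
  have hfree : L ≤ freeCount Z T 0 + (1200 * (d * ℓ) + 5) := by
    have hlow := le_freeCount_nearLevels_add C (fun c => dist1 c x) (100 * (d * ℓ)) T
    rw [← hZ] at hlow
    have := Nat.mul_le_mul_right (2 * (100 * (d * ℓ)) + 1) hC5
    have := hstep.collar_le
    have := hstep.le_dim_mul
    have := hstep.sixteen_le
    omega
  have hfree' : (L : ℝ) ≤ freeCount Z T 0 + (1200 * (d * ℓ) + 5) := by exact_mod_cast hfree
  calc |φ x| ≤ g ^ freeCount Z T 0 * M := by
        simpa [dist1_self] using henvelope x (mem_l1Ball.2 (by simp [dist1_self]))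
    _ ≤ γ ^ (m' * ((L : ℝ) + 1)) * M := by
        rw [hg, ← Real.rpow_mul_natCast hγ.le]
        gcongr ?_ * M
        refine Real.rpow_le_rpow_of_exponent_ge hγ (by linarith [hstep.le_quarter]) ?_
        refine hstep.rate_loss.trans (mul_le_mul_of_nonneg_left ?_ hstep.mean_rate_nonneg)
        linarith

end GoodFromFewBad

section JumpPaths

variable {d J : ℕ} {γ f : ℝ} {v φ : (Fin d → ℤ) → ℝ} {Q : Finset (Fin d → ℤ)}
  {δ : Fin d × ℤˣ} {z z₀ : Fin d → ℤ}

/-- The jumps of a path travelling in the direction `δ`: the unit step `δ`, alone or followed by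
one further unit step. -/
def jump (δ : Fin d × ℤˣ) : Option (Fin d × ℤˣ) → (Fin d → ℤ)
  | none => unitVec δ
  | some τ => unitVec δ + unitVec τ

/-- The lists of sites selected, in order, among the starting points of the `k` jumps of some path
from `z` in the direction `δ`. -/
def jumpPaths (δ : Fin d × ℤˣ) : ℕ → (Fin d → ℤ) → Finset (List (Fin d → ℤ))
  | 0, _ => {[]}
  | k + 1, z => Finset.univ.biUnion fun o =>
      jumpPaths δ k (z + jump δ o) ∪ (jumpPaths δ k (z + jump δ o)).image (z :: ·)

/-- The signed displacement of `z` from `z₀` in the direction `δ`. -/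
def height (δ : Fin d × ℤˣ) (z₀ z : Fin d → ℤ) : ℤ := δ.2 * (z δ.1 - z₀ δ.1)

lemma mem_jumpPaths_succ {k : ℕ} {o : Option (Fin d × ℤˣ)} {l : List (Fin d → ℤ)}
    (hl : l ∈ jumpPaths δ k (z + jump δ o)) : l ∈ jumpPaths δ (k + 1) z :=
  Finset.mem_biUnion.2 ⟨o, Finset.mem_univ o, Finset.mem_union_left _ hl⟩

lemma cons_mem_jumpPaths_succ {k : ℕ} {o : Option (Fin d × ℤˣ)} {l : List (Fin d → ℤ)}
    (hl : l ∈ jumpPaths δ k (z + jump δ o)) : z :: l ∈ jumpPaths δ (k + 1) z :=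
  Finset.mem_biUnion.2
    ⟨o, Finset.mem_univ o, Finset.mem_union_right _ (Finset.mem_image_of_mem _ hl)⟩

lemma nil_mem_jumpPaths (δ : Fin d × ℤˣ) (k : ℕ) (z : Fin d → ℤ) : [] ∈ jumpPaths δ k z := by
  induction k generalizing z with
  | zero => simp [jumpPaths]
  | succ k ih => exact mem_jumpPaths_succ (ih (z + jump δ none))

lemma card_jumpPaths_le (δ : Fin d × ℤˣ) (k : ℕ) (z : Fin d → ℤ) :
    (jumpPaths δ k z).card ≤ (4 * d + 2) ^ k := by
  induction k generalizing z with
  | zero => simp [jumpPaths]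
  | succ k ih =>
    have hjump : ∀ o ∈ (Finset.univ : Finset (Option (Fin d × ℤˣ))),
        (jumpPaths δ k (z + jump δ o) ∪ (jumpPaths δ k (z + jump δ o)).image (z :: ·)).card
          ≤ 2 * (4 * d + 2) ^ k := fun o _ => by
      have hunion := Finset.card_union_le (jumpPaths δ k (z + jump δ o))
        ((jumpPaths δ k (z + jump δ o)).image (z :: ·))
      have himage : ((jumpPaths δ k (z + jump δ o)).image (z :: ·)).card
        ≤ (jumpPaths δ k (z + jump δ o)).card := Finset.card_image_le
      have := ih (z + jump δ o)
      omega
    refine (Finset.card_biUnion_le_card_mul _ _ _ hjump).trans_eq ?_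
    rw [Finset.card_univ, Fintype.card_option, Fintype.card_prod, Fintype.card_fin,
      Fintype.card_units_int]
    ring

lemma height_self (δ : Fin d × ℤˣ) (z₀ : Fin d → ℤ) : height δ z₀ z₀ = 0 := by simp [height]

lemma natAbs_height_sub_le (δ : Fin d × ℤˣ) (z₀ z w : Fin d → ℤ) :
    (height δ z₀ z - height δ z₀ w).natAbs ≤ dist1 z w := by
  have hsub : height δ z₀ z - height δ z₀ w = δ.2 * (z δ.1 - w δ.1) := by
    unfold height
    ring
  rw [hsub, Int.natAbs_mul, Int.units_natAbs, one_mul]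
  exact natAbs_sub_le_dist1 z w δ.1

lemma unitVec_neg (i : Fin d) (ε : ℤˣ) : unitVec (i, -ε) = -unitVec (i, ε) := by
  simp [unitVec, Pi.single_neg]

lemma height_add_jump {o : Option (Fin d × ℤˣ)} (h : z + jump δ o ≠ z) :
    height δ z₀ z + 1 ≤ height δ z₀ (z + jump δ o) ∧
      height δ z₀ (z + jump δ o) ≤ height δ z₀ z + 2 := by
  obtain ⟨i, ε⟩ := δ
  have hadd : height (i, ε) z₀ (z + jump (i, ε) o) = height (i, ε) z₀ z + ε * jump (i, ε) o i := by
    simp only [height, Pi.add_apply]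
    ring
  suffices 1 ≤ ε * jump (i, ε) o i ∧ ε * jump (i, ε) o i ≤ 2 by omega
  have hεε : (ε : ℤ) * ε = 1 := congrArg Units.val (Int.units_mul_self ε)
  rcases o with _ | ⟨j, ε'⟩
  · simp [jump, unitVec, hεε]
  by_cases hji : j = i
  swap
  · simp [jump, unitVec, hεε, Pi.single_eq_of_ne (Ne.symm hji)]
  subst hji
  have hε' : ε' ≠ -ε := by
    rintro rfl
    exact h (by simp [jump, unitVec_neg])
  have : ε' = ε := by
    rcases Int.units_eq_one_or ε with rfl | rfl <;>
      rcases Int.units_eq_one_or ε' with rfl | rfl <;> simp_all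
  simp [jump, unitVec, mul_add, hεε, this]

lemma neighborSum_single (δ : Fin d × ℤˣ) (z : Fin d → ℤ) (c : ℝ) :
    neighborSum (Pi.single z c) (z + unitVec δ) = c := by
  have hback : z + unitVec δ + unitVec (δ.1, -δ.2) = z := by simp [unitVec_neg]
  unfold neighborSum
  rw [Finset.sum_eq_single (δ.1, -δ.2), hback, Pi.single_eq_same]
  · refine fun τ _ hτ => Pi.single_eq_of_ne (fun h => hτ (unitVec_injective ?_)) _
    exact add_left_cancel (h.trans hback.symm)
  · exact fun h => absurd (Finset.mem_univ _) h

/-- By the equation at `z + δ`, the value at `z` is a combination of the values one jump away. -/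
lemma SolvesAt.exists_jump (hγ : 0 < γ) (hγ1 : γ ≤ 1 / 4) (hγd : 2 * d * γ ≤ 1) (hz : φ z ≠ 0)
    (hu : SolvesAt γ f v φ (z + unitVec δ)) (hf : |2 * d * γ + v (z + unitVec δ) - f| ≤ 2) :
    ∃ o, z + jump δ o ≠ z ∧ γ ^ 2 * |φ z| ≤ |φ (z + jump δ o)| := by
  by_contra! hsmall
  set u := z + unitVec δ
  set ψ := φ - Pi.single z (φ z) with hψ
  have hmid : |φ u| ≤ γ ^ 2 * |φ z| := by
    refine (hsmall none fun h => ?_).le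
    have := dist1_add_unitVec z δ
    rw [show z + unitVec δ = z from h, dist1_self] at this
    exact zero_ne_one this
  have hψle : ∀ τ, |ψ (u + unitVec τ)| ≤ γ ^ 2 * |φ z| := fun τ => by
    by_cases h : u + unitVec τ = z
    · rw [h, hψ, Pi.sub_apply, Pi.single_eq_same, sub_self, abs_zero]
      positivity
    · rw [hψ, Pi.sub_apply, Pi.single_eq_of_ne h, sub_zero]
      have hjump : z + jump δ (some τ) = u + unitVec τ := (add_assoc _ _ _).symm
      exact hjump ▸ (hsmall (some τ) (hjump ▸ h)).le
  have hsum : neighborSum φ u = neighborSum ψ u + φ z := by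
    rw [← neighborSum_single δ z (φ z), ← neighborSum_add, hψ, sub_add_cancel]
  have hbalance : γ * |φ z| ≤ 2 * (γ ^ 2 * |φ z|) + γ * (2 * d * (γ ^ 2 * |φ z|)) :=
    calc γ * |φ z| = |(2 * d * γ + v u - f) * φ u - γ * neighborSum ψ u| := by
          rw [hu, hsum, ← abs_of_pos hγ, ← abs_mul, abs_of_pos hγ]
          ring_nf
      _ ≤ |2 * d * γ + v u - f| * |φ u| + γ * |neighborSum ψ u| := by
          refine (abs_sub _ _).trans_eq ?_
          rw [abs_mul, abs_mul, abs_of_pos hγ]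
      _ ≤ _ := by
          gcongr
          exact abs_neighborSum_le hψle
  have hdim : 2 * d * γ * (γ ^ 2 * |φ z|) ≤ 1 * (γ ^ 2 * |φ z|) := by gcongr
  have hsq : γ * (γ * |φ z|) ≤ 1 / 4 * (γ * |φ z|) := by gcongr
  have := mul_pos hγ (abs_pos.2 hz)
  linarith

lemma window_of_sq_mul_le {j : ℕ} {s t : ℝ} (hγ : 0 < γ) (hγ1 : γ ≤ 1) (hst : γ ^ 2 * s ≤ t)
    (hs : γ ^ (3 * (j + 1)) ≤ s) (ht : t < γ ^ (3 * (j + 1))) :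
    s ≤ γ ^ (3 * j + 1) ∧ γ ^ (3 * (j + 1 + 1)) ≤ t := by
  constructor
  · refine le_of_mul_le_mul_left ((hst.trans ht.le).trans_eq ?_) (pow_pos hγ 2)
    ring
  · calc γ ^ (3 * (j + 1 + 1)) ≤ γ ^ (2 + 3 * (j + 1)) :=
          pow_le_pow_of_le_one hγ.le hγ1 (by omega)
      _ = γ ^ 2 * γ ^ (3 * (j + 1)) := pow_add _ _ _
      _ ≤ γ ^ 2 * s := by gcongr
      _ ≤ t := hst

/-- Following jumps that lose at most a factor `γ²`, the modulus of `φ` falls from `1` to `γ^(3J)`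
without skipping any of the windows `[γ^(3j+3), γ^(3j+1)]`; record the site where it leaves each of
them. The index `j` counts the windows already left. -/
lemma exists_mem_jumpPaths_of_solvesAt (hγ : 0 < γ) (hγ1 : γ ≤ 1 / 4) (hγd : 2 * d * γ ≤ 1)
    (hsupp : φ.support ⊆ Q) (hsol : ∀ z ∈ Q, SolvesAt γ f v φ z)
    (hf : ∀ z, |2 * d * γ + v z - f| ≤ 2) {a : ℤ}
    (hroom : ∀ z ∈ Q, 0 ≤ height δ z₀ z → height δ z₀ z < a → z + unitVec δ ∈ Q)
    (hlayer : ∀ z ∈ Q, a ≤ height δ z₀ z → height δ z₀ z ≤ a + 1 → |φ z| < γ ^ (3 * J)) (k : ℕ) :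
    ∀ (j : ℕ) (z : Fin d → ℤ), j ≤ J → γ ^ (3 * (j + 1)) ≤ |φ z| → 0 ≤ height δ z₀ z →
      height δ z₀ z ≤ a + 1 → a ≤ height δ z₀ z + k →
      ∃ l ∈ jumpPaths δ k z, ∀ n, j + n < J →
        γ ^ (3 * (j + n + 1)) ≤ |φ (l.getD n 0)| ∧ |φ (l.getD n 0)| ≤ γ ^ (3 * (j + n) + 1) := by
  have hγ1' : γ ≤ 1 := by linarith
  have hbelow : ∀ j z, j < J → γ ^ (3 * (j + 1)) ≤ |φ z| → height δ z₀ z ≤ a + 1 →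
      z ∈ Q ∧ height δ z₀ z < a := fun j z hj hz hza => by
    have hzQ : z ∈ Q := hsupp (abs_pos.1 ((pow_pos hγ _).trans_le hz))
    refine ⟨hzQ, lt_of_not_ge fun haz => (hlayer z hzQ haz hza).not_ge (le_trans ?_ hz)⟩
    exact pow_le_pow_of_le_one hγ.le hγ1' (by omega)
  induction k with
  | zero =>
    intro j z hj hz _ hza haz
    refine ⟨[], nil_mem_jumpPaths _ _ _, fun n hn => ?_⟩
    have := (hbelow j z (by omega) hz hza).2
    omega
  | succ k ih =>
    intro j z hj hz h0 hza haz
    rcases hj.eq_or_lt with rfl | hj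
    · exact ⟨[], nil_mem_jumpPaths _ _ _, fun n hn => by omega⟩
    obtain ⟨hzQ, hzlt⟩ := hbelow j z hj hz hza
    have hφz : φ z ≠ 0 := abs_pos.1 ((pow_pos hγ _).trans_le hz)
    obtain ⟨o, hne, hloss⟩ := (hsol _ (hroom z hzQ h0 hzlt)).exists_jump hγ hγ1 hγd hφz (hf _)
    obtain ⟨hup, hup2⟩ := height_add_jump (z₀ := z₀) hne
    set z' := z + jump δ o
    push_cast at haz
    by_cases hstay : γ ^ (3 * (j + 1)) ≤ |φ z'|
    · obtain ⟨l, hl, hwin⟩ := ih j z' hj.le hstay (by omega) (by omega) (by omega)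
      exact ⟨l, mem_jumpPaths_succ hl, hwin⟩
    obtain ⟨hleave, hnext⟩ := window_of_sq_mul_le hγ hγ1' hloss hz (not_le.1 hstay)
    obtain ⟨l, hl, hwin⟩ := ih (j + 1) z' hj hnext (by omega) (by omega) (by omega)
    refine ⟨z :: l, cons_mem_jumpPaths_succ hl, fun n hn => ?_⟩
    rcases n with _ | n
    · exact ⟨hz, hleave⟩
    · have := hwin n (by omega)
      rwa [show j + 1 + n = j + (n + 1) by ring] at this

end JumpPaths

section Resonance

variable {d ℓ J : ℕ} {γ m f E₀ : ℝ} {v φ : (Fin d → ℤ) → ℝ} {α β z₀ : Fin d → ℤ}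
  {Q : Finset (Fin d → ℤ)}

lemma SolvesAt.abs_diagonal_sub_le (hγ : 0 ≤ γ) (hγd : 2 * d * γ ≤ 1)
    (hv : ∀ z, v z ∈ Set.Icc (0 : ℝ) 1) (hsol : SolvesAt γ f v φ z₀) (hz₀ : |φ z₀| = 1)
    (hφ : ∀ z, |φ z| ≤ 1) (z : Fin d → ℤ) : |2 * d * γ + v z - f| ≤ 2 := by
  have hpeak : |2 * d * γ + v z₀ - f| ≤ 1 :=
    calc |2 * d * γ + v z₀ - f| = γ * |neighborSum φ z₀| := by
          rw [← hsol.abs_mul_abs hγ, hz₀, mul_one]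
      _ ≤ γ * (2 * d * 1) := by gcongr; exact abs_neighborSum_le fun τ => hφ _
      _ = 2 * d * γ := by ring
      _ ≤ 1 := hγd
  obtain ⟨hz0, hz1⟩ := hv z
  obtain ⟨hz₀0, hz₀1⟩ := hv z₀
  rw [abs_le] at hpeak ⊢
  constructor <;> linarith

lemma exists_direction_add_unitVec_mem_Icc {i : Fin d} {r : ℤ} (hi : α i + 2 * r ≤ β i)
    (hz₀ : z₀ ∈ Finset.Icc α β) :
    ∃ ε : ℤˣ, ∀ z ∈ Finset.Icc α β, 0 ≤ height (i, ε) z₀ z → height (i, ε) z₀ z < r →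
      z + unitVec (i, ε) ∈ Finset.Icc α β := by
  have hstep : ∀ ε : ℤˣ, ∀ z ∈ Finset.Icc α β, α i ≤ z i + ε → z i + ε ≤ β i →
      z + unitVec (i, ε) ∈ Finset.Icc α β := by
    intro ε z hz hlow hupp
    rw [Finset.mem_Icc] at hz ⊢
    refine ⟨fun k => ?_, fun k => ?_⟩ <;> by_cases hk : k = i
    · subst hk
      simpa [unitVec] using hlow
    · simpa [unitVec, hk] using hz.1 k
    · subst hk
      simpa [unitVec] using hupp
    · simpa [unitVec, hk] using hz.2 k
  have hlow₀ := (Finset.mem_Icc.1 hz₀).1 i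
  have hupp₀ := (Finset.mem_Icc.1 hz₀).2 i
  rcases le_or_gt (z₀ i + r) (β i) with h | h
  · refine ⟨1, fun z hz h0 hr => hstep 1 z hz ?_ ?_⟩ <;>
      simp only [height, Units.val_one, one_mul] at * <;> omega
  · refine ⟨-1, fun z hz h0 hr => hstep (-1) z hz ?_ ?_⟩ <;>
      simp only [height, Units.val_neg, Units.val_one, neg_one_mul] at * <;> omega

/-- Among the layers of heights `1, …, 21ℓ` one avoids all bad sites, and a normalised eigenfunction
is at most `γ^(15J)` at a good site. -/
lemma FewBadSites.exists_small_layer (hfew : FewBadSites γ v m Q ℓ Q f) (hγ : 0 < γ) (hγ1 : γ < 1)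
    (hℓ : 16 ≤ ℓ) (hJ : 1 ≤ J) (hm : 15 * (J : ℝ) ≤ m * ((ℓ : ℝ) + 1)) (hsupp : φ.support ⊆ Q)
    (hsol : ∀ z ∈ Q, SolvesAt γ f v φ z) (hφ : ∀ z, |φ z| ≤ 1) (δ : Fin d × ℤˣ) :
    ∃ a : ℕ, a ≤ 21 * ℓ ∧ ∀ z ∈ Q, a ≤ height δ z₀ z → height δ z₀ z ≤ a + 1 →
      |φ z| < γ ^ (3 * J) := by
  obtain ⟨C, -, hC5, hcover⟩ := hfew.exists_cover
  obtain ⟨a, ha, ha', hfar⟩ :=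
    exists_notMem_nearLevels C (fun c => (height δ z₀ c).toNat) (2 * ℓ + 1) 1
  have := Nat.mul_le_mul_right (2 * (2 * ℓ + 1) + 1) hC5
  refine ⟨a, by omega, fun z hz haz hza => ?_⟩
  have hgood : IsGood γ v m Q ℓ z f := by
    by_contra hbad
    obtain ⟨c, hc, hzc⟩ := hcover z hz hbad
    have := natAbs_height_sub_le δ z₀ z c
    exact hfar ⟨c, hc, by dsimp only; omega, by dsimp only; omega⟩
  calc |φ z| ≤ γ ^ (m * ((ℓ : ℝ) + 1)) := by
        simpa using hgood φ hsupp (fun z hz _ => hsol z hz) 1 fun w _ => hφ w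
    _ < γ ^ ((3 * J : ℕ) : ℝ) := by
        have : (1 : ℝ) ≤ J := by exact_mod_cast hJ
        refine Real.rpow_lt_rpow_of_exponent_gt hγ hγ1 ?_
        push_cast
        linarith
    _ = γ ^ (3 * J) := Real.rpow_natCast _ _

lemma FewBadSites.exists_resonantAlong {i : Fin d} {e : Q}
    (hfew : FewBadSites γ v m Q ℓ Q (eigenvalue γ v Q e)) (hγ : 0 < γ) (hγ1 : γ ≤ 1 / 4)
    (hγd : 2 * d * γ ≤ 1) (hv : ∀ z, v z ∈ Set.Icc (0 : ℝ) 1) (hQ : Q = Finset.Icc α β)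
    (hi : α i + 50 * ℓ ≤ β i) (hℓ : 16 ≤ ℓ) (hJ : 1 ≤ J) (hm : 15 * (J : ℝ) ≤ m * ((ℓ : ℝ) + 1))
    (hE : |eigenvalue γ v Q e - E₀| ≤ 2 * γ ^ (7 * J)) :
    ∃ δ, ∃ z₀ ∈ Q, ∃ l ∈ jumpPaths δ (21 * ℓ) z₀,
      ResonantAlong γ v Q (fun j : Fin J => l.getD j 0) E₀ := by
  obtain ⟨φ, hsupp, hsol, ⟨z₀, hz₀, hφz₀⟩, hφ⟩ := exists_eigenfunction_sup_eq_one γ v e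
  obtain ⟨ε, hroom⟩ := exists_direction_add_unitVec_mem_Icc (r := 25 * ℓ) (by linarith) (hQ ▸ hz₀)
  rw [← hQ] at hroom
  obtain ⟨a, ha, hlayer⟩ := hfew.exists_small_layer (z₀ := z₀) hγ (by linarith) hℓ hJ hm hsupp hsol
    hφ (i, ε)
  obtain ⟨l, hl, hwin⟩ := exists_mem_jumpPaths_of_solvesAt hγ hγ1 hγd hsupp hsol
    ((hsol z₀ hz₀).abs_diagonal_sub_le hγ.le hγd hv hφz₀ hφ)
    (fun z hz h0 hza => hroom z hz h0 (by omega)) hlayer (21 * ℓ) 0 z₀ (Nat.zero_le J)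
    (hφz₀ ▸ pow_le_one₀ hγ.le (by linarith)) (height_self _ _).ge
    (by rw [height_self]; positivity) (by rw [height_self]; omega)
  refine ⟨(i, ε), z₀, hz₀, l, hl, _, φ, hsupp, hsol, hφ, hE, fun j => ?_⟩
  simpa only [zero_add] using hwin j (by omega)

end Resonance

section JointlyBad

variable {d N L ℓ : ℕ} {γ m m' : ℝ} {v : (Fin d → ℤ) → ℝ} {Λ X U : Finset (Fin d → ℤ)}
  {x y : Fin d → ℤ}

/-- The `ℓ¹` balls of radius `L` around `x` and `y` are both bad at some common energy. -/
def JointlyBad (γ : ℝ) (v : (Fin d → ℤ) → ℝ) (m : ℝ) (X : Finset (Fin d → ℤ)) (L : ℕ)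
    (x y : Fin d → ℤ) : Prop := ∃ E, ¬ IsGood γ v m X L x E ∧ ¬ IsGood γ v m X L y E

lemma JointlyBad.mono (hγ : 0 < γ) (hγ1 : γ ≤ 1) (hm : m ≤ m') (h : JointlyBad γ v m X L x y) :
    JointlyBad γ v m' X L x y :=
  h.imp fun _ hE => hE.imp (mt (IsGood.mono hγ hγ1 hm)) (mt (IsGood.mono hγ hγ1 hm))

lemma potential_congr {ω ω' : Λ → Fin N} {z : Fin d → ℤ}
    (h : ∀ hz : z ∈ Λ, ω ⟨z, hz⟩ = ω' ⟨z, hz⟩) : potential N Λ ω z = potential N Λ ω' z := by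
  unfold potential
  split_ifs with hz
  · rw [h hz]
  · rfl

lemma dependsOn_isGood (E : ℝ) : DependsOn
    (fun ω : Λ → Fin N => IsGood γ (potential N Λ ω) m X L x E) {z : Λ | dist1 ↑z x ≤ L} := by
  intro ω ω' h
  have hpot : ∀ z ∈ X, dist1 z x ≤ L → potential N Λ ω z = potential N Λ ω' z :=
    fun z _ hzx => potential_congr fun hz => h ⟨z, hz⟩ hzx
  exact propext ⟨.congr hpot, .congr fun z hz hzx => (hpot z hz hzx).symm⟩

lemma dependsOn_and {ι κ : Type*} {A B : (ι → κ) → Prop} {S T : Set ι} (hA : DependsOn A S)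
    (hB : DependsOn B T) : DependsOn (fun ω => A ω ∧ B ω) (S ∪ T) := fun ω ω' h => by
  dsimp only
  rw [hA fun i hi => h i (.inl hi), hB fun i hi => h i (.inr hi)]

lemma dependsOn_jointlyBad : DependsOn
    (fun ω : Λ → Fin N => JointlyBad γ (potential N Λ ω) m X L x y)
    ({z : Λ | dist1 ↑z x ≤ L} ∪ {z : Λ | dist1 ↑z y ≤ L}) := fun ω ω' h => by
  unfold JointlyBad
  exact propext <| exists_congr fun E => and_congr
    (not_congr (dependsOn_isGood E fun z hz => h z (.inl hz)).to_iff)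
    (not_congr (dependsOn_isGood E fun z hz => h z (.inr hz)).to_iff)

/-- The three pairs depend on disjoint sets of sites, hence are independent. -/
lemma prob_three_jointlyBad_le {s : Fin 6 → (Fin d → ℤ)} {p : ℝ}
    (hsep : ∀ i j, i ≠ j → 2 * ℓ + 1 ≤ dist1 (s i) (s j))
    (hp : ∀ i j, i ≠ j →
      prob (fun ω : Λ → Fin N => JointlyBad γ (potential N Λ ω) m X ℓ (s i) (s j)) ≤ p) :
    prob (fun ω : Λ → Fin N => (JointlyBad γ (potential N Λ ω) m X ℓ (s 0) (s 1) ∧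
      JointlyBad γ (potential N Λ ω) m X ℓ (s 2) (s 3)) ∧
      JointlyBad γ (potential N Λ ω) m X ℓ (s 4) (s 5)) ≤ p ^ 3 := by
  let S : Fin 6 → Set Λ := fun i => {z | dist1 ↑z (s i) ≤ ℓ}
  have hdisj : ∀ i j, i ≠ j → Disjoint (S i) (S j) := fun i j hij => by
    refine Set.disjoint_left.2 fun z (hzi : dist1 ↑z (s i) ≤ ℓ) (hzj : dist1 ↑z (s j) ≤ ℓ) => ?_
    have := dist1_triangle (s i) z (s j)
    have := hsep i j hij
    rw [dist1_comm] at hzi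
    omega
  have hpair : ∀ i j, DependsOn
      (fun ω : Λ → Fin N => JointlyBad γ (potential N Λ ω) m X ℓ (s i) (s j)) (S i ∪ S j) :=
    fun i j => dependsOn_jointlyBad
  have h0123 : Disjoint (S 0 ∪ S 1) (S 2 ∪ S 3) := by
    simp only [Set.disjoint_union_left, Set.disjoint_union_right]
    exact ⟨⟨hdisj 0 2 (by decide), hdisj 1 2 (by decide)⟩,
      hdisj 0 3 (by decide), hdisj 1 3 (by decide)⟩
  have h012345 : Disjoint (S 0 ∪ S 1 ∪ (S 2 ∪ S 3)) (S 4 ∪ S 5) := by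
    simp only [Set.disjoint_union_left, Set.disjoint_union_right]
    exact ⟨⟨⟨hdisj 0 4 (by decide), hdisj 1 4 (by decide)⟩,
      hdisj 2 4 (by decide), hdisj 3 4 (by decide)⟩,
      ⟨hdisj 0 5 (by decide), hdisj 1 5 (by decide)⟩,
      hdisj 2 5 (by decide), hdisj 3 5 (by decide)⟩
  rw [prob_and_of_dependsOn (dependsOn_and (hpair 0 1) (hpair 2 3)) (hpair 4 5) h012345,
    prob_and_of_dependsOn (hpair 0 1) (hpair 2 3) h0123, pow_three']
  have hp0 : 0 ≤ p := (prob_nonneg _).trans (hp 0 1 (by decide))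
  exact mul_le_mul (mul_le_mul (hp 0 1 (by decide)) (hp 2 3 (by decide)) (prob_nonneg _) hp0)
    (hp 4 5 (by decide)) (prob_nonneg _) (mul_nonneg hp0 hp0)

lemma prob_exists_not_fewBadSites_le {p u : ℝ} (hp0 : 0 ≤ p) (hU : (U.card : ℝ) ≤ u)
    (hp : ∀ x ∈ U, ∀ y ∈ U, 2 * ℓ + 1 ≤ dist1 x y →
      prob (fun ω : Λ → Fin N => JointlyBad γ (potential N Λ ω) m X ℓ x y) ≤ p) :
    prob (fun ω : Λ → Fin N => ∃ E, ¬ FewBadSites γ (potential N Λ ω) m X ℓ U E)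
      ≤ u ^ 6 * p ^ 3 := by
  classical
  set T := (Fintype.piFinset fun _ : Fin 6 => U).filter
    fun s => ∀ i j, i ≠ j → 2 * ℓ + 1 ≤ dist1 (s i) (s j) with hT
  have hmem : ∀ s, s ∈ T ↔ (∀ i, s i ∈ U) ∧ ∀ i j, i ≠ j → 2 * ℓ + 1 ≤ dist1 (s i) (s j) :=
    fun s => by rw [hT, Finset.mem_filter, Fintype.mem_piFinset]
  have hTcard : (T.card : ℝ) ≤ u ^ 6 := by
    have : T.card ≤ U.card ^ 6 := (Finset.card_filter_le _ _).trans_eq (by simp)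
    calc (T.card : ℝ) ≤ (U.card : ℝ) ^ 6 := by exact_mod_cast this
      _ ≤ u ^ 6 := by gcongr
  refine (prob_mono (B := fun ω => ∃ s ∈ T, (JointlyBad γ (potential N Λ ω) m X ℓ (s 0) (s 1) ∧
    JointlyBad γ (potential N Λ ω) m X ℓ (s 2) (s 3)) ∧
    JointlyBad γ (potential N Λ ω) m X ℓ (s 4) (s 5)) ?_).trans
    (prob_exists_le_mul hTcard (pow_nonneg hp0 3) fun s hs => ?_)
  · rintro ω ⟨E, hE⟩
    unfold FewBadSites at hE
    push Not at hE
    obtain ⟨C, hCU, hbad, hsep, hcard⟩ := hE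
    have hcard6 : Fintype.card (Fin 6) ≤ Fintype.card C := by
      simp only [Fintype.card_fin, Fintype.card_coe]
      omega
    obtain ⟨g⟩ := Function.Embedding.nonempty_of_card_le hcard6
    have hg : ∀ i, ¬ IsGood γ (potential N Λ ω) m X ℓ (g i) E := fun i => hbad _ (g i).2
    exact ⟨fun i => g i, (hmem _).2 ⟨fun i => hCU (g i).2, fun i j hij => hsep _ (g i).2 _ (g j).2
      fun h => hij (g.injective (Subtype.ext h))⟩,
      ⟨⟨E, hg 0, hg 1⟩, ⟨E, hg 2, hg 3⟩⟩, ⟨E, hg 4, hg 5⟩⟩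
  · obtain ⟨hsU, hsep⟩ := (hmem s).1 hs
    exact prob_three_jointlyBad_le hsep fun i j hij => hp _ (hsU i) _ (hsU j) (hsep i j hij)

end JointlyBad

section ResonantPair

variable {d N J k : ℕ} {γ : ℝ} {v : (Fin d → ℤ) → ℝ} {Λ Q Q₁ : Finset (Fin d → ℤ)}

/-- `Q` is resonant, along some subsequence of a path of `k` jumps, with an eigenvalue of the
Hamiltonian on `Q₁`. -/
def ResonantPair (γ : ℝ) (v : (Fin d → ℤ) → ℝ) (J k : ℕ) (Q₁ Q : Finset (Fin d → ℤ)) : Prop :=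
  ∃ (e : Q₁) (δ : Fin d × ℤˣ), ∃ z₀ ∈ Q, ∃ l ∈ jumpPaths δ k z₀,
    ResonantAlong γ v Q (fun j : Fin J => l.getD j 0) (eigenvalue γ v Q₁ e)

lemma prob_resonantPair_le {κ : ℝ} (hN : 2 ≤ N) (hγ : 0 < γ) (hγ1 : γ ≤ 1 / 2) (hQ : Q ⊆ Λ)
    (hdisj : Disjoint Q₁ Q) (hκ₁ : (Q₁.card : ℝ) ≤ κ) (hκ : (Q.card : ℝ) ≤ κ)
    (hsmall : 2 * γ ^ 2 + 4 * (γ ^ J * κ) < 1 / N) :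
    prob (fun ω : Λ → Fin N => ResonantPair γ (potential N Λ ω) J k Q₁ Q)
      ≤ κ * (2 * d) * κ * ((4 * d + 2) ^ k * (1 / (N : ℝ) ^ J)) := by
  have hκ0 : 0 ≤ κ := (Nat.cast_nonneg _).trans hκ
  have hE : ∀ e : Q₁, DependsOn (fun ω : Λ → Fin N => eigenvalue γ (potential N Λ ω) Q₁ e)
      {z : Λ | (z : Fin d → ℤ) ∉ Q} := fun e ω ω' h =>
    congrFun (eigenvalue_congr γ fun z hz =>
      potential_congr fun _ => h _ (Finset.disjoint_left.1 hdisj hz)) e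
  have hcard : (((Finset.univ : Finset (Q₁ × Fin d × ℤˣ)) ×ˢ Q).card : ℝ) ≤ κ * (2 * d) * κ := by
    simp only [Finset.card_product, Finset.card_univ, Fintype.card_prod, Fintype.card_coe,
      Fintype.card_fin, Fintype.card_units_int]
    push_cast
    rw [mul_comm (d : ℝ) 2]
    gcongr
  refine (prob_mono ?_).trans (prob_exists_le_mul
    (A := fun q ω => ∃ l ∈ jumpPaths q.1.2 k q.2, ResonantAlong γ (potential N Λ ω) Q
      (fun j : Fin J => l.getD j 0) (eigenvalue γ (potential N Λ ω) Q₁ q.1.1))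
    hcard (by positivity) fun q _ => ?_)
  · rintro ω ⟨e, δ, z₀, hz₀, hl⟩
    exact ⟨((e, δ), z₀), Finset.mem_product.2 ⟨Finset.mem_univ _, hz₀⟩, hl⟩
  · refine prob_exists_le_mul (by exact_mod_cast card_jumpPaths_le q.1.2 k q.2) (by positivity)
      fun l _ => prob_resonantAlong_le hN hγ hγ1 hQ _ (hE q.1.1) (hsmall.trans_le' ?_)
    gcongr

end ResonantPair

section Induction

variable {d N ℓ L J : ℕ} {γ m m' E : ℝ} {v : (Fin d → ℤ) → ℝ} {Λ X Q : Finset (Fin d → ℤ)}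
  {x y : Fin d → ℤ}

/-- The cubes of `X` of radius between `50ℓ` and `80ℓ` whose centres lie well inside the ball of
radius `L` around `x`. -/
def stepCubes (X : Finset (Fin d → ℤ)) (x : Fin d → ℤ) (ℓ L : ℕ) :
    Finset (Finset (Fin d → ℤ)) :=
  ((X ∩ l1Ball x (L - 100 * (d * ℓ))) ×ˢ Finset.Icc (50 * ℓ) (80 * ℓ)).image
    fun q => X ∩ cube q.1 q.2

lemma mem_stepCubes : Q ∈ stepCubes X x ℓ L ↔ ∃ c ∈ X ∩ l1Ball x (L - 100 * (d * ℓ)),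
    ∃ ρ ∈ Finset.Icc (50 * ℓ) (80 * ℓ), X ∩ cube c ρ = Q := by
  simp only [stepCubes, Finset.mem_image, Finset.mem_product, Prod.exists, and_assoc,
    exists_and_left]

lemma card_inter_l1Ball_le (X : Finset (Fin d → ℤ)) (x : Fin d → ℤ) (ℓ L : ℕ) :
    (X ∩ l1Ball x (L - 100 * (d * ℓ))).card ≤ (2 * L + 1) ^ d :=
  calc (X ∩ l1Ball x (L - 100 * (d * ℓ))).card ≤ (2 * (L - 100 * (d * ℓ)) + 1) ^ d :=
        (Finset.card_le_card Finset.inter_subset_right).trans (card_l1Ball_le x _)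
    _ ≤ (2 * L + 1) ^ d := Nat.pow_le_pow_left (by omega) d

lemma card_stepCubes_le (X : Finset (Fin d → ℤ)) (x : Fin d → ℤ) (ℓ L : ℕ) :
    (stepCubes X x ℓ L).card ≤ (2 * L + 1) ^ d * (30 * ℓ + 1) := by
  refine Finset.card_image_le.trans ?_
  rw [Finset.card_product, Nat.card_Icc]
  exact Nat.mul_le_mul (card_inter_l1Ball_le X x ℓ L) (by omega)

lemma subset_of_mem_stepCubes (hQ : Q ∈ stepCubes X x ℓ L) : Q ⊆ X := by
  obtain ⟨c, -, ρ, -, rfl⟩ := mem_stepCubes.1 hQ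
  exact Finset.inter_subset_left

lemma isRect_of_mem_stepCubes (hX : IsRect X) (hQ : Q ∈ stepCubes X x ℓ L) : IsRect Q := by
  obtain ⟨c, -, ρ, -, rfl⟩ := mem_stepCubes.1 hQ
  exact isRect_inter_cube hX c ρ

lemma card_le_of_mem_stepCubes (hℓ : 1 ≤ ℓ) (hQ : Q ∈ stepCubes X x ℓ L) :
    Q.card ≤ (161 * ℓ) ^ d := by
  obtain ⟨c, -, ρ, hρ, rfl⟩ := mem_stepCubes.1 hQ
  exact card_inter_cube_le X c hℓ (Finset.mem_Icc.1 hρ).2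

lemma disjoint_of_mem_stepCubes {Q₁ : Finset (Fin d → ℤ)} (hL : 100 * (d * ℓ) ≤ L)
    (hxy : 2 * L + 1 ≤ dist1 x y) (hQ₁ : Q₁ ∈ stepCubes X x ℓ L) (hQ : Q ∈ stepCubes X y ℓ L) :
    Disjoint Q₁ Q := by
  obtain ⟨c₁, hc₁, ρ₁, hρ₁, rfl⟩ := mem_stepCubes.1 hQ₁
  obtain ⟨c, hc, ρ, hρ, rfl⟩ := mem_stepCubes.1 hQ
  refine (disjoint_cube ?_).mono Finset.inter_subset_right Finset.inter_subset_right
  have hc₁x := mem_l1Ball.1 (Finset.mem_inter.1 hc₁).2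
  have hcy := mem_l1Ball.1 (Finset.mem_inter.1 hc).2
  have hρ₁d := Nat.mul_le_mul_left d (Finset.mem_Icc.1 hρ₁).2
  have hρd := Nat.mul_le_mul_left d (Finset.mem_Icc.1 hρ).2
  rw [Nat.mul_left_comm] at hρ₁d hρd
  have hxc := dist1_triangle x c₁ y
  have hcc := dist1_triangle c₁ c y
  rw [dist1_comm x c₁] at hxc
  omega

lemma exists_eq_Icc_of_mem_stepCubes (hX : IsRect X) (hx : x ∈ X) (hy : y ∈ X)
    (hxy : d * (50 * ℓ) < dist1 x y) (hQ : Q ∈ stepCubes X y ℓ L) :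
    ∃ α β : Fin d → ℤ, Q = Finset.Icc α β ∧ ∃ i, α i + 50 * ℓ ≤ β i := by
  obtain ⟨a, b, rfl⟩ := hX
  obtain ⟨c, hc, ρ, hρ, rfl⟩ := mem_stepCubes.1 hQ
  obtain ⟨i, hi⟩ := exists_add_le_of_mul_lt_dist1 hx hy hxy
  obtain ⟨hac, hcb⟩ := Finset.mem_Icc.1 (Finset.mem_inter.1 hc).1
  have haci : a i ≤ c i := hac i
  have hcbi : c i ≤ b i := hcb i
  have hρ50 := (Finset.mem_Icc.1 hρ).1
  refine ⟨_, _, Icc_inter_cube a b c ρ, i, ?_⟩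
  simp only [Pi.sup_apply, Pi.inf_apply, Pi.sub_apply, Pi.add_apply, Pi.natCast_apply]
  push_cast at hi
  omega

lemma ScaleStep.exists_near_eigenvalue (hstep : ScaleStep d γ m m' ℓ L J)
    (hfew : FewBadSites γ v m X ℓ (X ∩ l1Ball x (L - 100 * (d * ℓ))) E)
    (hbad : ¬ IsGood γ v m' X L x E) :
    ∃ Q ∈ stepCubes X x ℓ L, ∃ e : Q, |eigenvalue γ v Q e - E| < γ ^ (7 * J) := by
  by_contra! hgap
  exact hbad <| hstep.isGood_of_fewBadSites hfew fun c hc ρ hρ =>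
    hgap _ (mem_stepCubes.2 ⟨c, hc, ρ, hρ, rfl⟩)

/-- If two distant balls are bad at a common energy, then either a cluster of bad sites occurs at
the smaller scale, or two distant cubes have almost equal eigenvalues. -/
lemma ScaleStep.not_fewBadSites_or_resonantPair (hstep : ScaleStep d γ m m' ℓ L J)
    (hv : ∀ z, v z ∈ Set.Icc (0 : ℝ) 1) (hX : IsRect X) (hx : x ∈ X) (hy : y ∈ X)
    (hxy : 2 * L + 1 ≤ dist1 x y) (hbad : JointlyBad γ v m' X L x y) :
    ((∃ E, ¬ FewBadSites γ v m X ℓ (X ∩ l1Ball x (L - 100 * (d * ℓ))) E) ∨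
      ∃ E, ¬ FewBadSites γ v m X ℓ (X ∩ l1Ball y (L - 100 * (d * ℓ))) E) ∨
    (∃ Q ∈ stepCubes X y ℓ L, ∃ E, ¬ FewBadSites γ v m Q ℓ Q E) ∨
    ∃ q ∈ stepCubes X x ℓ L ×ˢ stepCubes X y ℓ L, ResonantPair γ v J (21 * ℓ) q.1 q.2 := by
  by_contra! ⟨⟨hfewx, hfewy⟩, hfewQ, hnonres⟩
  obtain ⟨E, hbadx, hbady⟩ := hbad
  obtain ⟨Q₁, hQ₁, e₁, he₁⟩ := hstep.exists_near_eigenvalue (hfewx E) hbadx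
  obtain ⟨Q, hQ, e, he⟩ := hstep.exists_near_eigenvalue (hfewy E) hbady
  have hlong : d * (50 * ℓ) < dist1 x y := by
    have := hstep.collar_le
    have : d * (50 * ℓ) = 50 * (d * ℓ) := by ring
    omega
  obtain ⟨α, β, hQαβ, i, hi⟩ := exists_eq_Icc_of_mem_stepCubes hX hx hy hlong hQ
  have hclose : |eigenvalue γ v Q e - eigenvalue γ v Q₁ e₁| ≤ 2 * γ ^ (7 * J) := by
    have := abs_sub_le (eigenvalue γ v Q e) E (eigenvalue γ v Q₁ e₁)
    rw [abs_sub_comm E] at this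
    linarith
  exact hnonres (Q₁, Q) (Finset.mem_product.2 ⟨hQ₁, hQ⟩) ⟨e₁, (hfewQ Q hQ _).exists_resonantAlong
    hstep.pos hstep.le_quarter hstep.two_dim_mul_le hv hQαβ hi hstep.sixteen_le
    hstep.one_le_exponent hstep.exponent_le hclose⟩

lemma prob_exists_stepCube_not_fewBadSites_le {p n κ : ℝ} (hp0 : 0 ≤ p)
    (hn : ((stepCubes X y ℓ L).card : ℝ) ≤ n) (hκ : ∀ Q ∈ stepCubes X y ℓ L, (Q.card : ℝ) ≤ κ)
    (hp : ∀ Y ⊆ X, IsRect Y → ∀ z ∈ Y, ∀ w ∈ Y, 2 * ℓ + 1 ≤ dist1 z w →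
      prob (fun ω : Λ → Fin N => JointlyBad γ (potential N Λ ω) m Y ℓ z w) ≤ p)
    (hX : IsRect X) :
    prob (fun ω : Λ → Fin N => ∃ Q ∈ stepCubes X y ℓ L, ∃ E,
      ¬ FewBadSites γ (potential N Λ ω) m Q ℓ Q E) ≤ n * (κ ^ 6 * p ^ 3) :=
  prob_exists_le_mul hn (by positivity) fun Q hQ => prob_exists_not_fewBadSites_le hp0 (hκ Q hQ)
    (hp Q (subset_of_mem_stepCubes hQ) (isRect_of_mem_stepCubes hX hQ))

lemma prob_exists_resonantPair_le {n κ : ℝ} (hN : 2 ≤ N) (hγ : 0 < γ) (hγ1 : γ ≤ 1 / 2)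
    (hn : ∀ z, ((stepCubes X z ℓ L).card : ℝ) ≤ n)
    (hκ : ∀ z, ∀ Q ∈ stepCubes X z ℓ L, (Q.card : ℝ) ≤ κ) (hκ0 : 0 ≤ κ)
    (hsmall : 2 * γ ^ 2 + 4 * (γ ^ J * κ) < 1 / N) (hXΛ : X ⊆ Λ) (hL : 100 * (d * ℓ) ≤ L)
    (hxy : 2 * L + 1 ≤ dist1 x y) :
    prob (fun ω : Λ → Fin N => ∃ r ∈ stepCubes X x ℓ L ×ˢ stepCubes X y ℓ L,
      ResonantPair γ (potential N Λ ω) J (21 * ℓ) r.1 r.2)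
      ≤ n * n * (κ * (2 * d) * κ * ((4 * d + 2) ^ (21 * ℓ) * (1 / (N : ℝ) ^ J))) := by
  refine prob_exists_le_mul ?_ (by positivity) fun r hr => ?_
  · rw [Finset.card_product, Nat.cast_mul]
    exact mul_le_mul (hn x) (hn y) (Nat.cast_nonneg _) ((Nat.cast_nonneg _).trans (hn x))
  · obtain ⟨hr₁, hr₂⟩ := Finset.mem_product.1 hr
    exact prob_resonantPair_le hN hγ hγ1 ((subset_of_mem_stepCubes hr₂).trans hXΛ)
      (disjoint_of_mem_stepCubes hL hxy hr₁ hr₂) (hκ x _ hr₁) (hκ y _ hr₂) hsmall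

/-- The volume factors are bounded by powers of `q`: there are at most `q^(3d)` sites in a ball of
radius `L`, `q²` admissible radii, and `q^(2d)` sites in a cube. -/
lemma ScaleStep.prob_jointlyBad_le (hstep : ScaleStep d γ m m' ℓ L J) (hN : 2 ≤ N) {p : ℝ} {q : ℕ}
    (hL : 2 * L + 1 ≤ q ^ 3) (hℓ : 161 * ℓ ≤ q ^ 2)
    (hsmall : 2 * γ ^ 2 + 4 * (γ ^ J * (q : ℝ) ^ (2 * d)) < 1 / N) (hp0 : 0 ≤ p)
    (hp : ∀ Y ⊆ Λ, IsRect Y → ∀ z ∈ Y, ∀ w ∈ Y, 2 * ℓ + 1 ≤ dist1 z w →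
      prob (fun ω : Λ → Fin N => JointlyBad γ (potential N Λ ω) m Y ℓ z w) ≤ p)
    (hX : IsRect X) (hXΛ : X ⊆ Λ) (hx : x ∈ X) (hy : y ∈ X) (hxy : 2 * L + 1 ≤ dist1 x y) :
    prob (fun ω : Λ → Fin N => JointlyBad γ (potential N Λ ω) m' X L x y)
      ≤ 2 * ((q : ℝ) ^ (18 * d) * p ^ 3) + (q : ℝ) ^ (15 * d + 2) * p ^ 3
        + 2 * d * (q : ℝ) ^ (10 * d + 4) * ((4 * d + 2) ^ (21 * ℓ) / (N : ℝ) ^ J) := by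
  have hℓ16 := hstep.sixteen_le
  have hball : (2 * L + 1) ^ d ≤ q ^ (3 * d) := pow_mul q 3 d ▸ Nat.pow_le_pow_left hL d
  have hvol : (161 * ℓ) ^ d ≤ q ^ (2 * d) := pow_mul q 2 d ▸ Nat.pow_le_pow_left hℓ d
  have hballs : ∀ z, ((X ∩ l1Ball z (L - 100 * (d * ℓ))).card : ℝ) ≤ (q : ℝ) ^ (3 * d) :=
    fun z => by exact_mod_cast (card_inter_l1Ball_le X z ℓ L).trans hball
  have hcubes : ∀ z, ((stepCubes X z ℓ L).card : ℝ) ≤ (q : ℝ) ^ (3 * d) * (q : ℝ) ^ 2 :=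
    fun z => by
      have hradii : 30 * ℓ + 1 ≤ q ^ 2 := by omega
      exact_mod_cast (card_stepCubes_le X z ℓ L).trans (Nat.mul_le_mul hball hradii)
  have hcube : ∀ z, ∀ Q ∈ stepCubes X z ℓ L, (Q.card : ℝ) ≤ (q : ℝ) ^ (2 * d) := fun z Q hQ => by
    exact_mod_cast (card_le_of_mem_stepCubes (by omega) hQ).trans hvol
  have hfew : ∀ z, prob (fun ω : Λ → Fin N => ∃ E, ¬ FewBadSites γ (potential N Λ ω) m X ℓ
      (X ∩ l1Ball z (L - 100 * (d * ℓ))) E) ≤ ((q : ℝ) ^ (3 * d)) ^ 6 * p ^ 3 := fun z =>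
    prob_exists_not_fewBadSites_le hp0 (hballs z) fun a ha b hb =>
      hp X hXΛ hX a (Finset.mem_inter.1 ha).1 b (Finset.mem_inter.1 hb).1
  have hfewQ := prob_exists_stepCube_not_fewBadSites_le (N := N) (γ := γ) hp0 (hcubes y) (hcube y)
    (fun Y hY => hp Y (hY.trans hXΛ)) hX
  have hres := prob_exists_resonantPair_le hN hstep.pos (by linarith [hstep.le_quarter])
    hcubes hcube (by positivity) hsmall hXΛ (by linarith [hstep.collar_le]) hxy
  refine (prob_mono fun ω => hstep.not_fewBadSites_or_resonantPair (potential_mem_Icc hN ω) hX hx hy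
    hxy).trans <| (prob_or_le _ _).trans <| (add_le_add ((prob_or_le _ _).trans
      (add_le_add (hfew x) (hfew y))) ((prob_or_le _ _).trans (add_le_add hfewQ hres))).trans_eq ?_
  ring

end Induction

section Smallness

variable {d N q J : ℕ} {γ : ℝ}

/-- The smallness conditions on the hopping strength `γ`, relative to the number `N` of potential
values, under which the multiscale analysis runs. -/
structure SmallCoupling (d N : ℕ) (γ : ℝ) : Prop where
  pos : 0 < γ
  le_quarter : γ ≤ 1 / 4
  two_dim_mul_le : 2 * d * γ ≤ 1
  initial_le : 16 * d * N * γ ≤ γ ^ (3 / 4 : ℝ)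
  resonance_lt : 2 * γ ^ 2 + 4 * (γ * 14400 ^ d) < 1 / N
  rpow_tenth_le : γ ^ (1 / 10 : ℝ) ≤ 1 / 6 ^ d

/-- An upper bound on `γ` which guarantees `SmallCoupling d N γ`. -/
def couplingThreshold (d N : ℕ) : ℝ := (1 / (128 * d * N * 14400 ^ d)) ^ 10

lemma one_lt_couplingThreshold_base (hd : 1 ≤ d) (hN : 2 ≤ N) :
    (1 : ℝ) < 128 * d * N * 14400 ^ d := by
  exact_mod_cast (by norm_num : 1 < 128 * 1 * 2 * 1).trans_le
    (Nat.mul_le_mul (by gcongr) (Nat.one_le_pow d 14400 (by norm_num)))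

lemma couplingThreshold_pos (hd : 1 ≤ d) (hN : 2 ≤ N) : 0 < couplingThreshold d N :=
  pow_pos (one_div_pos.2 (one_pos.trans (one_lt_couplingThreshold_base hd hN))) 10

lemma couplingThreshold_lt_one (hd : 1 ≤ d) (hN : 2 ≤ N) : couplingThreshold d N < 1 := by
  have hA := one_lt_couplingThreshold_base hd hN
  have hA0 := one_pos.trans hA
  exact pow_lt_one₀ (by positivity) ((div_lt_one hA0).2 hA) (by norm_num)

lemma rpow_mul_le_one_of_le_couplingThreshold (hd : 1 ≤ d) (hN : 2 ≤ N) (hγ : 0 < γ)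
    (h : γ ≤ couplingThreshold d N) {s : ℝ} (hs : 1 / 10 ≤ s) :
    γ ^ s * (128 * d * N * 14400 ^ d) ≤ 1 := by
  have hγ1 : γ ≤ 1 := h.trans (couplingThreshold_lt_one hd hN).le
  have hA := one_pos.trans (one_lt_couplingThreshold_base hd hN)
  rw [← le_div_iff₀ hA]
  calc γ ^ s ≤ γ ^ (1 / 10 : ℝ) := Real.rpow_le_rpow_of_exponent_ge hγ hγ1 hs
    _ ≤ couplingThreshold d N ^ (1 / 10 : ℝ) := by gcongr
    _ = 1 / (128 * d * N * 14400 ^ d) := by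
      rw [couplingThreshold, ← Real.rpow_natCast, ← Real.rpow_mul (by positivity)]
      norm_num

lemma smallCoupling_of_le (hd : 1 ≤ d) (hN : 2 ≤ N) (hγ : 0 < γ)
    (h : γ ≤ couplingThreshold d N) : SmallCoupling d N γ := by
  have hd1 : (1 : ℝ) ≤ d := by exact_mod_cast hd
  have hN2 : (2 : ℝ) ≤ N := by exact_mod_cast hN
  have hγ1 : γ ≤ 1 := h.trans (couplingThreshold_lt_one hd hN).le
  have hA := one_pos.trans (one_lt_couplingThreshold_base hd hN)
  have hK : (1 : ℝ) ≤ 14400 ^ d := one_le_pow₀ (by norm_num)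
  have hroot := @rpow_mul_le_one_of_le_couplingThreshold d N γ hd hN hγ h
  have hγA := Real.rpow_one γ ▸ hroot (s := 1) (by norm_num)
  have hquarter := hroot (s := 1 / 4) (by norm_num)
  have htenth := (le_div_iff₀ hA).2 (hroot (s := 1 / 10) le_rfl)
  have hdN : 2 ≤ (d : ℝ) * N := by nlinarith
  have hdNK : (d : ℝ) * N ≤ d * N * 14400 ^ d := le_mul_of_one_le_right (by positivity) hK
  have hγdN : γ * (d * N) ≤ γ * (d * N * 14400 ^ d) := by gcongr
  refine ⟨hγ, by nlinarith, by nlinarith, ?_, ?_, ?_⟩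
  · have hγ4 : γ = γ ^ (1 / 4 : ℝ) * γ ^ (3 / 4 : ℝ) := by
      rw [← Real.rpow_add hγ]
      norm_num
    have hcoeff : 16 * d * N * γ ^ (1 / 4 : ℝ) ≤ 1 := by
      nlinarith [mul_le_mul_of_nonneg_left hdNK (Real.rpow_nonneg hγ.le (1 / 4 : ℝ))]
    calc 16 * d * N * γ = 16 * d * N * γ ^ (1 / 4 : ℝ) * γ ^ (3 / 4 : ℝ) := by
          rw [mul_assoc _ (γ ^ (1 / 4 : ℝ)), ← hγ4]
      _ ≤ γ ^ (3 / 4 : ℝ) := mul_le_of_le_one_left (Real.rpow_nonneg hγ.le _) hcoeff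
  · rw [lt_div_iff₀ (by linarith)]
    have hsq : γ ^ 2 ≤ γ * 14400 ^ d := by nlinarith
    have hγKN : γ * 14400 ^ d * N ≤ d * (γ * 14400 ^ d * N) :=
      le_mul_of_one_le_left (by positivity) hd1
    nlinarith
  · refine htenth.trans (one_div_le_one_div_of_le (by positivity) ?_)
    calc (6 : ℝ) ^ d ≤ 14400 ^ d := by gcongr; norm_num
      _ ≤ 128 * d * N * 14400 ^ d := le_mul_of_one_le_left (by positivity) (by linarith)

lemma pow_two_mul_le_pow_pow (d : ℕ) (hJ : 1 ≤ J) (hq : q ≤ 60 * J) :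
    q ^ (2 * d) ≤ (14400 ^ d) ^ J := by
  have hqJ : q ≤ 120 ^ J :=
    calc q ≤ 60 * J := hq
      _ ≤ 60 ^ J * 2 ^ J := Nat.mul_le_mul (Nat.le_self_pow (by omega) 60) Nat.lt_two_pow_self.le
      _ = 120 ^ J := (mul_pow 60 2 J).symm
  calc q ^ (2 * d) ≤ (120 ^ J) ^ (2 * d) := Nat.pow_le_pow_left hqJ _
    _ = (14400 ^ d) ^ J := by
      rw [← pow_mul, ← pow_mul, show J * (2 * d) = 2 * (d * J) by ring, pow_mul]
      norm_num

namespace SmallCoupling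

lemma mul_lt_one (h : SmallCoupling d N γ) : γ * 14400 ^ d < 1 := by
  have : (1 : ℝ) / N ≤ 1 := by simpa using Nat.cast_inv_le_one N
  nlinarith [h.resonance_lt, sq_nonneg γ, mul_pos h.pos (pow_pos (by norm_num : (0 : ℝ) < 14400) d)]

lemma pow_mul_pow_le (h : SmallCoupling d N γ) (hJ : 1 ≤ J) (hq : q ≤ 60 * J) :
    γ ^ J * (q : ℝ) ^ (2 * d) ≤ γ * 14400 ^ d := by
  have hγ := h.pos
  calc γ ^ J * (q : ℝ) ^ (2 * d) ≤ γ ^ J * (14400 ^ d) ^ J := by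
        gcongr
        exact_mod_cast pow_two_mul_le_pow_pow d hJ hq
    _ = (γ * 14400 ^ d) ^ J := by rw [mul_pow]
    _ ≤ (γ * 14400 ^ d) ^ 1 := pow_le_pow_of_le_one (by positivity) h.mul_lt_one.le hJ
    _ = γ * 14400 ^ d := pow_one _

lemma box_small (h : SmallCoupling d N γ) {ℓ : ℕ} (hJ : 1 ≤ J) (hq : q ≤ 60 * J)
    (hℓ : 161 * ℓ ≤ q ^ 2) : γ ^ (8 * J + 1) * (2 * d * (161 * (ℓ : ℝ)) ^ d) < 1 := by
  have hγ := h.pos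
  have hvol : (161 * (ℓ : ℝ)) ^ d ≤ (q : ℝ) ^ (2 * d) := by
    rw [pow_mul]
    gcongr
    exact_mod_cast hℓ
  calc γ ^ (8 * J + 1) * (2 * d * (161 * (ℓ : ℝ)) ^ d)
      = γ ^ (7 * J) * (2 * d * γ) * (γ ^ J * (161 * (ℓ : ℝ)) ^ d) := by ring
    _ ≤ 1 * 1 * (γ ^ J * (q : ℝ) ^ (2 * d)) := by
        gcongr
        · exact pow_le_one₀ hγ.le (by linarith [h.le_quarter])
        · exact h.two_dim_mul_le
    _ < 1 := by
        rw [one_mul, one_mul]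
        exact (h.pow_mul_pow_le hJ hq).trans_lt h.mul_lt_one

end SmallCoupling

end Smallness

section InitialScale

variable {d N Q L : ℕ} {γ m : ℝ} {Λ X : Finset (Fin d → ℤ)} {x y : Fin d → ℤ}

/-- Two balls of radius `L` at distance at least `2 L + 1` in a rectangle inside `Λ` are jointly bad
with probability at most `(L + 1)^(-Q)`: the induction hypothesis of the multiscale analysis. -/
def PairEstimate (γ : ℝ) (N Q : ℕ) (Λ : Finset (Fin d → ℤ)) (m : ℝ) (L : ℕ) : Prop :=
  ∀ X ⊆ Λ, IsRect X → ∀ x ∈ X, ∀ y ∈ X, 2 * L + 1 ≤ dist1 x y →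
    prob (fun ω : Λ → Fin N => JointlyBad γ (potential N Λ ω) m X L x y) ≤ 1 / ((L : ℝ) + 1) ^ Q

lemma PairEstimate.mono {m' : ℝ} (hγ : 0 < γ) (hγ1 : γ ≤ 1) (hm : m' ≤ m)
    (h : PairEstimate γ N Q Λ m L) : PairEstimate γ N Q Λ m' L :=
  fun X hXΛ hX x hx y hy hxy =>
    (prob_mono fun _ => JointlyBad.mono hγ hγ1 hm).trans (h X hXΛ hX x hx y hy hxy)

/-- The number of potential values required by the initial scales `L < (20000 d)²`. -/
def initialThreshold (d Q : ℕ) : ℕ :=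
  (2 * (20000 * d) ^ 2) ^ d * ((2 * (20000 * d) ^ 2) ^ d * ((20000 * d) ^ 2) ^ Q)

lemma card_filter_dist1_le (Λ : Finset (Fin d → ℤ)) (x : Fin d → ℤ) (L : ℕ) :
    (Finset.univ.filter fun z : Λ => dist1 z x ≤ L).card ≤ (2 * L + 1) ^ d :=
  (Finset.card_le_card_of_injOn (t := l1Ball x L) (fun z : Λ => (z : Fin d → ℤ))
    (fun _ hz => mem_l1Ball.2 (Finset.mem_filter.1 hz).2)
    Subtype.val_injective.injOn).trans (card_l1Ball_le x L)

lemma prob_apply_eq_apply_le [NeZero N] {z z' : Λ} (h : z ≠ z') :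
    prob (fun ω : Λ → Fin N => ω z = ω z') ≤ 1 / (N : ℝ) := by
  refine (prob_le_of_determined_off_range (s := fun _ : Unit => z)
    (Function.injective_of_subsingleton _) fun ω ω' hω hω' hoff => ?_).trans_eq (by simp)
  simp only [Set.range_const, Set.mem_singleton_iff] at hoff
  funext i
  by_cases hi : i = z
  · rw [hi, hω, hω', hoff z' h.symm]
  · exact hoff i hi

lemma exists_potential_near_of_not_isGood (hs : SmallCoupling d N γ) {ω : Λ → Fin N} {E : ℝ}
    (hN : 0 < N) (hX : X ⊆ Λ) (hbad : ¬ IsGood γ (potential N Λ ω) (3 / 4) X L x E) :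
    ∃ z : Λ, dist1 z x ≤ L ∧ |potential N Λ ω z - E| < 1 / (4 * N) := by
  have : (0 : ℝ) < N := by exact_mod_cast hN
  by_contra! hgap
  refine hbad (isGood_of_potential_gap (η := 1 / (4 * N)) hs.pos (by linarith [hs.le_quarter])
    (by norm_num) (by positivity) ?_ fun _ hz hzx => hgap ⟨_, hX hz⟩ hzx)
  rw [one_div_mul_eq_div, le_div_iff₀ (by positivity)]
  linarith [hs.initial_le]

/-- Badness at rate `3/4` forces a potential value close to the energy, so two jointly bad balls
contain sites with equal potential. -/
lemma exists_apply_eq_of_jointlyBad (hs : SmallCoupling d N γ) (hN : 2 ≤ N) (hX : X ⊆ Λ)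
    {ω : Λ → Fin N} (h : JointlyBad γ (potential N Λ ω) (3 / 4) X L x y) :
    ∃ z : Λ, dist1 z x ≤ L ∧ ∃ z' : Λ, dist1 z' y ≤ L ∧ ω z = ω z' := by
  obtain ⟨E, hx, hy⟩ := h
  obtain ⟨z, hzx, hz⟩ := exists_potential_near_of_not_isGood hs (by omega) hX hx
  obtain ⟨z', hzy, hz'⟩ := exists_potential_near_of_not_isGood hs (by omega) hX hy
  refine ⟨z, hzx, z', hzy, by_contra fun hne => ?_⟩
  have hgap := one_div_le_abs_potential_sub (Λ := Λ) hN (ω := fun _ => ω z') (ω' := fun _ => ω z)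
    (z := z) (Ne.symm hne)
  rw [potential_apply, potential_apply, ← potential_apply ω z, ← potential_apply ω z'] at hgap
  have htriangle := abs_sub_le (potential N Λ ω z) E (potential N Λ ω z')
  rw [abs_sub_comm E] at htriangle
  have hquarter : 1 / (4 * (N : ℝ)) = 1 / 4 * (1 / N) := by ring
  linarith [show 0 < 1 / (N : ℝ) by positivity]

lemma prob_jointlyBad_initial_le (hs : SmallCoupling d N γ) (hN : 2 ≤ N) (hX : X ⊆ Λ)
    (hxy : 2 * L + 1 ≤ dist1 x y) :
    prob (fun ω : Λ → Fin N => JointlyBad γ (potential N Λ ω) (3 / 4) X L x y)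
      ≤ (2 * (L : ℝ) + 1) ^ d * ((2 * (L : ℝ) + 1) ^ d * (1 / N)) := by
  have : NeZero N := ⟨by omega⟩
  have hcard : ∀ u : Fin d → ℤ, ((Finset.univ.filter fun z : Λ => dist1 z u ≤ L).card : ℝ)
      ≤ (2 * (L : ℝ) + 1) ^ d := fun u => by exact_mod_cast card_filter_dist1_le Λ u L
  calc _ ≤ prob (fun ω : Λ → Fin N => ∃ z ∈ Finset.univ.filter fun z : Λ => dist1 z x ≤ L,
        ∃ z' ∈ Finset.univ.filter fun z : Λ => dist1 z y ≤ L, ω z = ω z') :=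
        prob_mono fun ω hω => by simpa using exists_apply_eq_of_jointlyBad hs hN hX hω
    _ ≤ _ := prob_exists_le_mul (hcard x) (by positivity) fun z hz =>
        prob_exists_le_mul (hcard y) (by positivity) fun z' hz' => prob_apply_eq_apply_le ?_
  rintro rfl
  have hzx := (Finset.mem_filter.1 hz).2
  have hzy := (Finset.mem_filter.1 hz').2
  have htriangle := dist1_triangle x z y
  rw [dist1_comm x z] at htriangle
  omega

lemma pairEstimate_initial (hs : SmallCoupling d N γ) (hN : 2 ≤ N)
    (hN' : initialThreshold d Q ≤ N) (hL : L < (20000 * d) ^ 2) :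
    PairEstimate γ N Q Λ (3 / 4) L := by
  intro X hXΛ _ x _ y _ hxy
  refine (prob_jointlyBad_initial_le hs hN hXΛ hxy).trans ?_
  have hvol : (2 * L + 1) ^ d * ((2 * L + 1) ^ d * (L + 1) ^ Q) ≤ N := by
    refine le_trans ?_ hN'
    rw [initialThreshold]
    gcongr <;> omega
  rw [le_div_iff₀ (by positivity), mul_one_div, mul_div_assoc', div_mul_eq_mul_div, mul_assoc]
  exact div_le_one_of_le₀ (by exact_mod_cast hvol) (by positivity)

end InitialScale

section ScaleInduction

variable {d N Q J L ℓ n q : ℕ} {γ : ℝ} {Λ : Finset (Fin d → ℤ)}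

/-- The number of potential values which makes the resonance probability in the step from scale
`ℓ` to scale `ℓ²` smaller than the required power of `ℓ`. -/
def resonanceThreshold (d Q : ℕ) : ℕ := (2 ^ (10 * d + 6 + 2 * Q) * (4 * d + 2) ^ 21) ^ 60

lemma resonanceThreshold_pos (d Q : ℕ) : 0 < resonanceThreshold d Q :=
  Nat.pow_pos (Nat.mul_pos (Nat.two_pow_pos _) (Nat.pow_pos (by omega)))

lemma clustering_terms_le (hd : 1 ≤ d) (hQ : 18 * d + 1 ≤ Q) (hq : 6 ≤ q) :
    2 * ((q : ℝ) ^ (18 * d) * (1 / (q : ℝ) ^ Q) ^ 3)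
        + (q : ℝ) ^ (15 * d + 2) * (1 / (q : ℝ) ^ Q) ^ 3
      ≤ 1 / (2 * (q : ℝ) ^ (2 * Q)) := by
  have hq6 : (6 : ℝ) ≤ q := by exact_mod_cast hq
  have hpow : 6 * (q : ℝ) ^ (18 * d) ≤ (q : ℝ) ^ Q :=
    calc 6 * (q : ℝ) ^ (18 * d) ≤ q * (q : ℝ) ^ (18 * d) := by gcongr
      _ = (q : ℝ) ^ (18 * d + 1) := (pow_succ' _ _).symm
      _ ≤ (q : ℝ) ^ Q := pow_le_pow_right₀ (by linarith) hQ
  calc _ ≤ 2 * ((q : ℝ) ^ (18 * d) * (1 / (q : ℝ) ^ Q) ^ 3)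
        + (q : ℝ) ^ (18 * d) * (1 / (q : ℝ) ^ Q) ^ 3 := by
        gcongr
        · linarith
        · omega
    _ = 6 * (q : ℝ) ^ (18 * d) / (2 * ((q : ℝ) ^ Q) ^ 3) := by
        field_simp
        ring
    _ ≤ (q : ℝ) ^ Q / (2 * ((q : ℝ) ^ Q) ^ 3) := by gcongr
    _ = 1 / (2 * (q : ℝ) ^ (2 * Q)) := by
        rw [mul_comm 2 Q, pow_mul]
        field_simp

lemma resonance_volume_le (hq : 4 ≤ q) (hqd : 2 * d ≤ q) (hℓ : ℓ ≤ q) (hJ : q ≤ 60 * J)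
    (hN : resonanceThreshold d Q ≤ N) :
    2 * d * q ^ (10 * d + 4) * (4 * d + 2) ^ (21 * ℓ) * (2 * q ^ (2 * Q)) ≤ N ^ J := by
  rw [resonanceThreshold] at hN
  have hbase : 0 < 2 ^ (10 * d + 6 + 2 * Q) * (4 * d + 2) ^ 21 :=
    Nat.mul_pos (Nat.two_pow_pos _) (Nat.pow_pos (by omega))
  calc 2 * d * q ^ (10 * d + 4) * (4 * d + 2) ^ (21 * ℓ) * (2 * q ^ (2 * Q))
      ≤ q * q ^ (10 * d + 4) * (4 * d + 2) ^ (21 * q) * (q * q ^ (2 * Q)) :=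
        Nat.mul_le_mul (Nat.mul_le_mul (Nat.mul_le_mul_right _ hqd)
          (Nat.pow_le_pow_right (by omega) (Nat.mul_le_mul_left 21 hℓ)))
          (Nat.mul_le_mul_right _ (by omega))
    _ = q ^ (10 * d + 6 + 2 * Q) * ((4 * d + 2) ^ 21) ^ q := by
        rw [← pow_mul]
        generalize 4 * d + 2 = b
        ring
    _ ≤ (2 ^ q) ^ (10 * d + 6 + 2 * Q) * ((4 * d + 2) ^ 21) ^ q :=
        Nat.mul_le_mul_right _ (Nat.pow_le_pow_left Nat.lt_two_pow_self.le _)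
    _ = (2 ^ (10 * d + 6 + 2 * Q) * (4 * d + 2) ^ 21) ^ q := by
        rw [mul_pow, pow_right_comm]
    _ ≤ (2 ^ (10 * d + 6 + 2 * Q) * (4 * d + 2) ^ 21) ^ (60 * J) :=
        Nat.pow_le_pow_right hbase hJ
    _ ≤ N ^ J := by
        rw [pow_mul]
        exact Nat.pow_le_pow_left hN J

lemma step_bound_le (hd : 1 ≤ d) (hQ : 18 * d + 1 ≤ Q) (hq : 6 ≤ q) (hqd : 2 * d ≤ q) (hℓ : ℓ ≤ q)
    (hL : L + 1 ≤ q ^ 2) (hJ : q ≤ 60 * J) (hN : resonanceThreshold d Q ≤ N) :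
    2 * ((q : ℝ) ^ (18 * d) * (1 / (q : ℝ) ^ Q) ^ 3)
        + (q : ℝ) ^ (15 * d + 2) * (1 / (q : ℝ) ^ Q) ^ 3
        + 2 * d * (q : ℝ) ^ (10 * d + 4) * ((4 * d + 2) ^ (21 * ℓ) / (N : ℝ) ^ J)
      ≤ 1 / ((L : ℝ) + 1) ^ Q := by
  have : (0 : ℝ) < q := by exact_mod_cast (by omega : 0 < q)
  have : 0 < N := (resonanceThreshold_pos d Q).trans_le hN
  have hresonance : 2 * d * (q : ℝ) ^ (10 * d + 4) * ((4 * d + 2) ^ (21 * ℓ) / (N : ℝ) ^ J)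
      ≤ 1 / (2 * (q : ℝ) ^ (2 * Q)) := by
    rw [mul_div_assoc', div_le_div_iff₀ (by positivity) (by positivity), one_mul]
    exact_mod_cast resonance_volume_le (by omega) hqd hℓ hJ hN
  calc _ ≤ 1 / (2 * (q : ℝ) ^ (2 * Q)) + 1 / (2 * (q : ℝ) ^ (2 * Q)) :=
        add_le_add (clustering_terms_le hd hQ hq) hresonance
    _ = 1 / ((q : ℝ) ^ 2) ^ Q := by
        rw [← pow_mul]
        field_simp
        norm_num
    _ ≤ 1 / ((L : ℝ) + 1) ^ Q := by
        gcongr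
        exact_mod_cast hL

/-- The decay rate at the `n`-th scale of the induction; it stays above `1/2`. -/
def decayRate (n : ℕ) : ℝ := 1 / 2 + 1 / 4 * (1 / 2) ^ n

lemma half_lt_decayRate (n : ℕ) : 1 / 2 < decayRate n := by
  rw [decayRate]
  linarith [pow_pos (one_half_pos (α := ℝ)) n]

lemma decayRate_succ_lt (n : ℕ) : decayRate (n + 1) < decayRate n := by
  rw [decayRate, decayRate, pow_succ]
  linarith [pow_pos (one_half_pos (α := ℝ)) n]

lemma decayRate_loss (hd : 1 ≤ d) (hn : 20000 * d * 2 ^ n ≤ ℓ) (hL : ℓ ^ 2 ≤ L) :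
    decayRate (n + 1) * (L + 1)
      ≤ (decayRate n + decayRate (n + 1)) / 2 * (L - 1200 * (d * ℓ) - 5) := by
  have hd1 : (1 : ℝ) ≤ d := by exact_mod_cast hd
  have hLr : (ℓ : ℝ) ^ 2 ≤ L := by exact_mod_cast hL
  set s : ℝ := (1 / 2) ^ n with hs
  have hs0 : 0 < s := by positivity
  have hs1 : s ≤ 1 := pow_le_one₀ (by norm_num) (by norm_num)
  have hns : 20000 * (d : ℝ) ≤ ℓ * s := by
    rw [hs, one_div, inv_pow, ← div_eq_mul_inv, le_div_iff₀ (by positivity)]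
    exact_mod_cast hn
  have hℓ : 20000 ≤ (ℓ : ℝ) := by nlinarith
  have hdℓ : 1 ≤ d * (ℓ : ℝ) := by nlinarith
  have hgain : 20000 * d * ℓ ≤ s * (L : ℝ) := by nlinarith
  have hloss : (1 / 2 + 3 / 16 * s) * (1200 * (d * ℓ) + 6) ≤ 1 * (1200 * (d * (ℓ : ℝ)) + 6) := by
    gcongr
    linarith
  rw [decayRate, decayRate, pow_succ, ← hs]
  linarith

lemma scaleStep_sqrt (hs : SmallCoupling d N γ) (hd : 1 ≤ d) (hn : 20000 * d * 2 ^ n ≤ ℓ)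
    (hL : ℓ ^ 2 ≤ L) : ScaleStep d γ (decayRate n) (decayRate (n + 1)) ℓ L (ℓ / 30) := by
  have hdℓ : 20000 * d ≤ ℓ := (Nat.le_mul_of_pos_right _ (by positivity)).trans hn
  have hJ : 30 * ((ℓ / 30 : ℕ) : ℝ) ≤ ℓ := by exact_mod_cast Nat.mul_div_le ℓ 30
  exact {
    one_le_dim := hd
    pos := hs.pos
    le_quarter := hs.le_quarter
    two_dim_mul_le := hs.two_dim_mul_le
    sixteen_le := by omega
    collar_le := by nlinarith
    one_le_exponent := by omega
    exponent_le := by nlinarith [half_lt_decayRate n]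
    rate_nonneg := by linarith [half_lt_decayRate (n + 1)]
    rate_lt := decayRate_succ_lt n
    rate_loss := decayRate_loss hd hn hL
    box_small := hs.box_small (q := ℓ + 1) (by omega) (by omega) (by nlinarith) }

lemma PairEstimate.scale_step (hs : SmallCoupling d N γ) (hN : 2 ≤ N)
    (hN' : resonanceThreshold d Q ≤ N) (hd : 1 ≤ d) (hQ : 18 * d + 1 ≤ Q)
    (hn : 20000 * d * 2 ^ n ≤ ℓ) (hL : ℓ ^ 2 ≤ L) (hL' : L + 1 ≤ (ℓ + 1) ^ 2)
    (h : PairEstimate γ N Q Λ (decayRate n) ℓ) : PairEstimate γ N Q Λ (decayRate (n + 1)) L := by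
  intro X hXΛ hX x hx y hy hxy
  have hdℓ : 20000 * d ≤ ℓ := (Nat.le_mul_of_pos_right _ (by positivity)).trans hn
  have hsmall : 2 * γ ^ 2 + 4 * (γ ^ (ℓ / 30) * ((ℓ + 1 : ℕ) : ℝ) ^ (2 * d)) < 1 / N := by
    linarith [hs.pow_mul_pow_le (q := ℓ + 1) (J := ℓ / 30) (by omega) (by omega), hs.resonance_lt]
  have hball : 2 * L + 1 ≤ (ℓ + 1) ^ 3 :=
    calc 2 * L + 1 ≤ (ℓ + 1) ^ 2 * 2 := by omega
      _ ≤ (ℓ + 1) ^ 2 * (ℓ + 1) := Nat.mul_le_mul_left _ (by omega)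
      _ = (ℓ + 1) ^ 3 := (pow_succ _ 2).symm
  have hcube : 161 * ℓ ≤ (ℓ + 1) ^ 2 :=
    calc 161 * ℓ ≤ (ℓ + 1) * (ℓ + 1) := Nat.mul_le_mul (by omega) (Nat.le_succ ℓ)
      _ = (ℓ + 1) ^ 2 := (sq _).symm
  refine ((scaleStep_sqrt hs hd hn hL).prob_jointlyBad_le hN (q := ℓ + 1)
    (p := 1 / ((ℓ + 1 : ℕ) : ℝ) ^ Q) hball hcube hsmall (by positivity) ?_ hX hXΛ
    hx hy hxy).trans (step_bound_le hd hQ (by omega) (by omega) (by omega) hL' (by omega) hN')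
  simpa only [PairEstimate, Nat.cast_add_one] using h

lemma sqrt_lt_of_lt_pow_two_pow {t : ℕ} (hL : L < t ^ 2 ^ (n + 1)) : Nat.sqrt L < t ^ 2 ^ n := by
  rwa [Nat.sqrt_lt', ← pow_mul, ← pow_succ]

lemma mul_two_pow_le_sqrt {t : ℕ} (ht : 2 ≤ t) (hL : t ^ 2 ^ (n + 1) ≤ L) :
    t * 2 ^ n ≤ Nat.sqrt L :=
  calc t * 2 ^ n ≤ t * t ^ n := by gcongr
    _ = t ^ (n + 1) := (pow_succ' t n).symm
    _ ≤ t ^ 2 ^ n := Nat.pow_le_pow_right (by omega) Nat.lt_two_pow_self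
    _ ≤ Nat.sqrt L := by rwa [Nat.le_sqrt', ← pow_mul, ← pow_succ]

/-- Each step squares the scale, and the rate drops by half of what remains above `1/2`. -/
lemma pairEstimate_decayRate (hs : SmallCoupling d N γ) (hN : 2 ≤ N)
    (hN₀ : initialThreshold d Q ≤ N) (hN₁ : resonanceThreshold d Q ≤ N) (hd : 1 ≤ d)
    (hQ : 18 * d + 1 ≤ Q) (n : ℕ) :
    ∀ L < (20000 * d) ^ 2 ^ (n + 1), PairEstimate γ N Q Λ (decayRate n) L := by
  induction n with
  | zero =>
    intro L hL
    rw [show decayRate 0 = 3 / 4 by norm_num [decayRate]]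
    exact pairEstimate_initial hs hN hN₀ hL
  | succ n ih =>
    intro L hL
    rcases lt_or_ge L ((20000 * d) ^ 2 ^ (n + 1)) with hsmall | hlarge
    · exact (ih L hsmall).mono hs.pos (by linarith [hs.le_quarter]) (decayRate_succ_lt n).le
    · exact (ih (Nat.sqrt L) (sqrt_lt_of_lt_pow_two_pow hL)).scale_step hs hN hN₁ hd hQ
        (mul_two_pow_le_sqrt (by omega) hlarge) (Nat.sqrt_le' L) (Nat.lt_succ_sqrt' L)

lemma pairEstimate_half (hs : SmallCoupling d N γ) (hN : 2 ≤ N)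
    (hN₀ : initialThreshold d Q ≤ N) (hN₁ : resonanceThreshold d Q ≤ N) (hd : 1 ≤ d)
    (hQ : 18 * d + 1 ≤ Q) (L : ℕ) : PairEstimate γ N Q Λ (1 / 2) L := by
  have hL : L < (20000 * d) ^ 2 ^ (L + 1) :=
    calc L < 2 ^ (L + 1) := L.lt_succ_self.trans Nat.lt_two_pow_self
      _ < (20000 * d) ^ 2 ^ (L + 1) := Nat.lt_pow_self (by omega)
  exact (pairEstimate_decayRate hs hN hN₀ hN₁ hd hQ L L hL).mono hs.pos
    (by linarith [hs.le_quarter]) (half_lt_decayRate L).le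

end ScaleInduction

section Correlator

variable {d L r : ℕ} {γ m E : ℝ} {v : (Fin d → ℤ) → ℝ} {Λ : Finset (Fin d → ℤ)}

lemma sum_abs_mul_abs_le_one {n : Type*} [Fintype n] [DecidableEq n] {φ : n → n → ℝ}
    (hφ : ∀ β β', ∑ z, φ β z * φ β' z = if β = β' then 1 else 0) (w z : n) :
    ∑ β, |φ β w| * |φ β z| ≤ 1 := by
  have hrows : Matrix.of φ * (Matrix.of φ).transpose = 1 := by
    ext β β'
    rw [Matrix.one_apply]
    exact hφ β β'
  have hcolumns : (Matrix.of φ).transpose * Matrix.of φ = 1 := mul_eq_one_comm.1 hrows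
  have hcolumn : ∀ u, ∑ β, φ β u ^ 2 = 1 := fun u => by
    simpa [Matrix.mul_apply, sq] using congrFun₂ hcolumns u u
  calc ∑ β, |φ β w| * |φ β z| ≤ ∑ β, (φ β w ^ 2 + φ β z ^ 2) / 2 := by
        gcongr with β
        linarith [two_mul_le_add_sq |φ β w| |φ β z|, sq_abs (φ β w), sq_abs (φ β z)]
    _ = 1 := by
        rw [← Finset.sum_div, Finset.sum_add_distrib, hcolumn, hcolumn]
        norm_num

lemma IsGood.abs_le_mul_sum {x : Λ} (h : IsGood γ v m Λ L x E) {φ : Λ → ℝ}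
    (hφ : (hamOn d γ v Λ).mulVec φ = E • φ) :
    |φ x| ≤ γ ^ (m * ((L : ℝ) + 1)) * ∑ w : Λ with dist1 w.1 x ≤ L + 1, |φ w| := by
  rw [← Subtype.val_injective.extend_apply φ 0 x]
  refine h _ (support_extend_subset φ) (fun z hz _ => solvesAt_extend hφ ⟨z, hz⟩) _ fun w hw => ?_
  by_cases hwΛ : w ∈ Λ
  · rw [Subtype.val_injective.extend_apply φ 0 ⟨w, hwΛ⟩]
    exact Finset.single_le_sum (f := fun w => |φ w|) (fun _ _ => abs_nonneg _)
      (Finset.mem_filter.2 ⟨Finset.mem_univ _, hw⟩)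
  · rw [Function.support_subset_iff'.1 (support_extend_subset φ) w hwΛ, abs_zero]
    exact Finset.sum_nonneg fun _ _ => abs_nonneg _

lemma abs_mul_le_of_not_jointlyBad {x y : Λ} (hγ : 0 < γ) (hgood : ¬ JointlyBad γ v m Λ L x y)
    {φ : Λ → ℝ} (hφ : (hamOn d γ v Λ).mulVec φ = E • φ) :
    |φ x * φ y| ≤ γ ^ (m * ((L : ℝ) + 1)) * (∑ w : Λ with dist1 w.1 x ≤ L + 1, |φ w| * |φ y|
      + ∑ w : Λ with dist1 w.1 y ≤ L + 1, |φ w| * |φ x|) := by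
  have : 0 < γ ^ (m * ((L : ℝ) + 1)) := Real.rpow_pos_of_pos hγ _
  rw [abs_mul, ← Finset.sum_mul, ← Finset.sum_mul, mul_add, ← mul_assoc, ← mul_assoc]
  by_cases hx : IsGood γ v m Λ L x E
  · refine le_add_of_le_of_nonneg ?_ (by positivity)
    gcongr
    exact hx.abs_le_mul_sum hφ
  · have hy : IsGood γ v m Λ L y E := by_contra fun hy => hgood ⟨E, hx, hy⟩
    rw [mul_comm |φ x|]
    refine le_add_of_nonneg_of_le (by positivity) ?_
    gcongr
    exact hy.abs_le_mul_sum hφ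

lemma sum_abs_mul_le_of_not_jointlyBad {x y : Λ} (hγ : 0 < γ)
    (hgood : ¬ JointlyBad γ v m Λ L x y) {φ : Λ → Λ → ℝ}
    (hortho : ∀ β β', ∑ z, φ β z * φ β' z = if β = β' then 1 else 0)
    (heigen : ∀ β, ∃ μ : ℝ, (hamOn d γ v Λ).mulVec (φ β) = μ • φ β) :
    ∑ β, |φ β x * φ β y| ≤ γ ^ (m * ((L : ℝ) + 1)) * (2 * (2 * L + 3) ^ d) := by
  have hball : ∀ u z : Λ, ∑ β, ∑ w : Λ with dist1 w.1 u ≤ L + 1, |φ β w| * |φ β z|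
      ≤ (2 * (L : ℝ) + 3) ^ d := fun u z => by
    rw [Finset.sum_comm]
    calc _ ≤ ∑ w : Λ with dist1 w.1 u ≤ L + 1, (1 : ℝ) :=
          Finset.sum_le_sum fun w _ => sum_abs_mul_abs_le_one hortho w z
      _ ≤ _ := by
          rw [Finset.sum_const, nsmul_one]
          exact_mod_cast card_filter_dist1_le Λ u (L + 1)
  calc ∑ β, |φ β x * φ β y| ≤ ∑ β, γ ^ (m * ((L : ℝ) + 1)) *
        (∑ w : Λ with dist1 w.1 x ≤ L + 1, |φ β w| * |φ β y|
          + ∑ w : Λ with dist1 w.1 y ≤ L + 1, |φ β w| * |φ β x|) :=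
        Finset.sum_le_sum fun β _ => abs_mul_le_of_not_jointlyBad hγ hgood (heigen β).choose_spec
    _ ≤ γ ^ (m * ((L : ℝ) + 1)) * (2 * (2 * L + 3) ^ d) := by
        rw [← Finset.mul_sum, Finset.sum_add_distrib, two_mul ((2 * (L : ℝ) + 3) ^ d)]
        gcongr <;> exact hball _ _

lemma four_mul_add_six_le_six_pow (L : ℕ) : 4 * L + 6 ≤ 6 ^ (L + 1) := by
  induction L with
  | zero => norm_num
  | succ n ih => rw [pow_succ]; omega

lemma two_mul_pow_le_six_pow_pow (hd : 1 ≤ d) (L : ℕ) :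
    2 * (2 * (L : ℝ) + 3) ^ d ≤ (6 ^ d) ^ (L + 1) :=
  calc 2 * (2 * (L : ℝ) + 3) ^ d ≤ 2 ^ d * (2 * (L : ℝ) + 3) ^ d := by
        gcongr
        exact le_self_pow₀ (by norm_num) (by omega)
    _ = (4 * (L : ℝ) + 6) ^ d := by
        rw [← mul_pow]
        ring_nf
    _ ≤ (6 ^ (L + 1)) ^ d := by
        gcongr
        exact_mod_cast four_mul_add_six_le_six_pow L
    _ = (6 ^ d) ^ (L + 1) := pow_right_comm _ _ _

/-- The part `γ^((L+1)/10)` of the decay left over from the weight absorbs the volume factor. -/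
lemma correlator_le_one_of_not_jointlyBad {N : ℕ} (hs : SmallCoupling d N γ) (hd : 1 ≤ d)
    {x y : Λ} (hr : r ≤ 2 * L + 2) (hgood : ¬ JointlyBad γ v (1 / 2) Λ L x y) {φ : Λ → Λ → ℝ}
    (hortho : ∀ β β', ∑ z, φ β z * φ β' z = if β = β' then 1 else 0)
    (heigen : ∀ β, ∃ μ : ℝ, (hamOn d γ v Λ).mulVec (φ β) = μ • φ β) :
    (∑ β, |φ β x * φ β y|) * γ ^ (-(r : ℝ) / 5) ≤ 1 := by
  have hγ := hs.pos
  have hr' : (r : ℝ) ≤ 2 * L + 2 := by exact_mod_cast hr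
  have hweight : γ ^ (-(r : ℝ) / 5) ≤ γ ^ (-(2 * (L : ℝ) + 2) / 5) :=
    Real.rpow_le_rpow_of_exponent_ge hγ (by linarith [hs.le_quarter]) (by linarith)
  have hexponent : γ ^ (1 / 2 * ((L : ℝ) + 1)) * γ ^ (-(2 * (L : ℝ) + 2) / 5)
      = (γ ^ (1 / 10 : ℝ)) ^ (L + 1) := by
    rw [← Real.rpow_add hγ, ← Real.rpow_mul_natCast hγ.le]
    push_cast
    ring_nf
  calc (∑ β, |φ β x * φ β y|) * γ ^ (-(r : ℝ) / 5)
      ≤ γ ^ (1 / 2 * ((L : ℝ) + 1)) * (2 * (2 * L + 3) ^ d) * γ ^ (-(2 * (L : ℝ) + 2) / 5) := by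
        gcongr
        exact sum_abs_mul_le_of_not_jointlyBad hγ hgood hortho heigen
    _ = (γ ^ (1 / 10 : ℝ)) ^ (L + 1) * (2 * (2 * L + 3) ^ d) := by
        rw [← hexponent]
        ring
    _ ≤ (1 / 6 ^ d) ^ (L + 1) * (6 ^ d) ^ (L + 1) := by
        gcongr
        · exact hs.rpow_tenth_le
        · exact two_mul_pow_le_six_pow_pow hd L
    _ = 1 := by rw [← mul_pow, one_div, inv_mul_cancel₀ (by positivity), one_pow]

end Correlator

section UnionBound

variable {d N Q : ℕ} {γ m q R : ℝ} {Λ : Finset (Fin d → ℤ)}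

lemma sphere_volume_mul_le {r : ℕ} (hr : 4 ≤ r) (hQ : 2 * (2 * d + q + 2) ≤ Q) :
    (2 * (r : ℝ) + 1) ^ d * (1 / (((r - 1) / 2 : ℕ) + 1 : ℝ) ^ Q)
      ≤ (r : ℝ) ^ (-q) * ((r : ℝ) ^ 2)⁻¹ := by
  obtain ⟨L, hL⟩ : ∃ L, L = (r - 1) / 2 := ⟨_, rfl⟩
  rw [← hL]
  have hr' : (4 : ℝ) ≤ r := by exact_mod_cast hr
  have hsq : (r : ℝ) ≤ ((L : ℝ) + 1) ^ 2 := by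
    exact_mod_cast (by nlinarith [show r ≤ 2 * L + 2 by omega, show 1 ≤ L by omega] :
      r ≤ (L + 1) ^ 2)
  have hscale : (r : ℝ) ^ ((Q : ℝ) / 2) ≤ ((L : ℝ) + 1) ^ Q :=
    calc (r : ℝ) ^ ((Q : ℝ) / 2) ≤ (((L : ℝ) + 1) ^ 2) ^ ((Q : ℝ) / 2) := by gcongr
      _ = ((L : ℝ) + 1) ^ Q := by
          rw [← Real.rpow_natCast_mul (by positivity), ← Real.rpow_natCast]
          push_cast
          ring_nf
  have hvolume : (2 * (r : ℝ) + 1) ^ d ≤ (r : ℝ) ^ (2 * d : ℝ) :=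
    calc (2 * (r : ℝ) + 1) ^ d ≤ ((r : ℝ) ^ 2) ^ d := by
          gcongr
          nlinarith
      _ = (r : ℝ) ^ (2 * d : ℝ) := by
          rw [← pow_mul, ← Real.rpow_natCast]
          norm_cast
  calc (2 * (r : ℝ) + 1) ^ d * (1 / ((L : ℝ) + 1) ^ Q)
      ≤ (r : ℝ) ^ (2 * d : ℝ) * (1 / (r : ℝ) ^ ((Q : ℝ) / 2)) := by gcongr
    _ = (r : ℝ) ^ (2 * d - Q / 2 : ℝ) := by rw [mul_one_div, Real.rpow_sub (by positivity)]
    _ ≤ (r : ℝ) ^ (-q - (2 : ℕ)) := by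
        refine Real.rpow_le_rpow_of_exponent_le (by linarith) ?_
        push_cast
        linarith
    _ = (r : ℝ) ^ (-q) * ((r : ℝ) ^ 2)⁻¹ := by
        rw [Real.rpow_sub (by positivity), Real.rpow_natCast, div_eq_mul_inv]

lemma sum_inv_sq_le_one {T : Finset ℕ} (hT : ∀ r ∈ T, 2 ≤ r) : ∑ r ∈ T, ((r : ℝ) ^ 2)⁻¹ ≤ 1 :=
  calc ∑ r ∈ T, ((r : ℝ) ^ 2)⁻¹ ≤ ∑ r ∈ Finset.Ioc 1 (T.sup id + 1), ((r : ℝ) ^ 2)⁻¹ := by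
        gcongr
        exact fun r hr => Finset.mem_Ioc.2
          ⟨hT r hr, (Finset.le_sup (f := id) hr).trans (Nat.le_succ _)⟩
    _ ≤ ((1 : ℕ) : ℝ)⁻¹ - ((T.sup id + 1 : ℕ) : ℝ)⁻¹ :=
        sum_Ioc_inv_sq_le_sub one_ne_zero (by omega)
    _ ≤ 1 := by
        rw [Nat.cast_one, inv_one]
        exact sub_le_self 1 (by positivity)

lemma sum_dist1_le (S : Finset Λ) (x : Fin d → ℤ) {f : ℕ → ℝ} (hf : ∀ r, 0 ≤ f r) :
    ∑ y ∈ S, f (dist1 y x)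
      ≤ ∑ r ∈ S.image (fun y : Λ => dist1 y x), (2 * (r : ℝ) + 1) ^ d * f r := by
  rw [Finset.sum_comp f fun y : Λ => dist1 y x]
  simp only [nsmul_eq_mul]
  gcongr with r
  · exact hf r
  · have hsphere : (S.filter fun y : Λ => dist1 y x = r).card ≤ (2 * r + 1) ^ d :=
      (Finset.card_le_card fun y hy => Finset.mem_filter.2
        ⟨Finset.mem_univ y, (Finset.mem_filter.1 hy).2.le⟩).trans (card_filter_dist1_le Λ x r)
    exact_mod_cast hsphere

lemma sum_pairEstimate_le (hR : 4 ≤ R) (hq : 0 ≤ q) (hQ : 2 * (2 * d + q + 2) ≤ Q)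
    (S : Finset Λ) (x : Fin d → ℤ) (hS : ∀ y ∈ S, R ≤ dist1 y x) :
    ∑ y ∈ S, 1 / (((dist1 y x - 1) / 2 : ℕ) + 1 : ℝ) ^ Q ≤ R ^ (-q) := by
  have hdist : ∀ r ∈ S.image (fun y : Λ => dist1 y x), R ≤ (r : ℝ) :=
    Finset.forall_mem_image.2 hS
  have hdist4 : ∀ r ∈ S.image (fun y : Λ => dist1 y x), 4 ≤ r :=
    fun r hr => by exact_mod_cast hR.trans (hdist r hr)
  calc ∑ y ∈ S, 1 / (((dist1 y x - 1) / 2 : ℕ) + 1 : ℝ) ^ Q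
      ≤ ∑ r ∈ S.image (fun y : Λ => dist1 y x),
          (2 * (r : ℝ) + 1) ^ d * (1 / (((r - 1) / 2 : ℕ) + 1 : ℝ) ^ Q) :=
        sum_dist1_le S x (f := fun r => 1 / (((r - 1) / 2 : ℕ) + 1 : ℝ) ^ Q)
          fun r => by positivity
    _ ≤ ∑ r ∈ S.image (fun y : Λ => dist1 y x), R ^ (-q) * ((r : ℝ) ^ 2)⁻¹ := by
        refine Finset.sum_le_sum fun r hr => (sphere_volume_mul_le (hdist4 r hr) hQ).trans ?_
        gcongr ?_ * _
        exact Real.rpow_le_rpow_of_nonpos (by linarith) (hdist r hr) (by linarith)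
    _ ≤ R ^ (-q) := by
        rw [← Finset.mul_sum]
        exact mul_le_of_le_one_right (Real.rpow_nonneg (by linarith) _)
          (sum_inv_sq_le_one fun r hr => le_trans (by norm_num) (hdist4 r hr))

lemma prob_exists_jointlyBad_le (hest : ∀ L, PairEstimate γ N Q Λ m L) (hΛ : IsRect Λ) (x : Λ)
    (hR : 4 ≤ R) (hq : 0 ≤ q) (hQ : 2 * (2 * d + q + 2) ≤ Q) :
    prob (fun ω : Λ → Fin N => ∃ y ∈ Finset.univ.filter fun y : Λ => R ≤ dist1 y.1 x.1,
      JointlyBad γ (potential N Λ ω) m Λ ((dist1 y.1 x - 1) / 2) x y) ≤ R ^ (-q) := by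
  refine (prob_exists_le_sum _ _).trans ((Finset.sum_le_sum fun y hy => ?_).trans
    (sum_pairEstimate_le hR hq hQ _ x fun y hy => (Finset.mem_filter.1 hy).2))
  have hdist : 4 ≤ dist1 (y : Fin d → ℤ) x := by exact_mod_cast hR.trans (Finset.mem_filter.1 hy).2
  refine hest _ Λ subset_rfl hΛ x x.2 y y.2 ?_
  rw [dist1_comm x.1]
  omega

end UnionBound

end Anderson

/-- **Theorem 1.2, part 2** (probabilistic exponential localization).
For any `x ∈ Λ` and `R ≥ 4`, the probability that for some orthonormal eigenbasis
`(φ_β)` of `H` and some `y` with `|y-x| ≥ R` one has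
`∑_β |φ_β(x)φ_β(y)| γ^{-|x-y|/5} > 1` is at most `R^{-(p/2-4d-1)}`. -/
theorem eigenfunction_correlator_probabilistic :
    ∀ d : ℕ, 1 ≤ d →
    ∃ p₀ : ℝ, ∀ p : ℝ, p₀ ≤ p →
    ∃ N₀ : ℕ, ∀ N : ℕ, N₀ ≤ N →
    ∃ γ₀ : ℝ, 0 < γ₀ ∧ γ₀ < 1 ∧
    ∀ γ : ℝ, 0 < γ → γ ≤ γ₀ →
    ∀ Λ : Finset (Fin d → ℤ), IsRect Λ →
    ∀ x : ↥Λ, ∀ R : ℝ, 4 ≤ R →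
    prob (fun ω : ↥Λ → Fin N =>
        ∃ φ : ↥Λ → ↥Λ → ℝ,
          (∀ β β', ∑ z, φ β z * φ β' z = if β = β' then 1 else 0) ∧
          (∀ β, ∃ μ : ℝ, (hamOn d γ (potential N Λ ω) Λ).mulVec (φ β) = μ • φ β) ∧
          ∃ y : ↥Λ, R ≤ ((dist1 (y : Fin d → ℤ) (x : Fin d → ℤ) : ℕ) : ℝ) ∧
            1 < (∑ β, |φ β x * φ β y|) *
                  γ ^ (-(((dist1 (x : Fin d → ℤ) (y : Fin d → ℤ) : ℕ) : ℝ)) / 5))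
      ≤ R ^ (-(p/2 - 4*d - 1)) := by
  intro d hd
  refine ⟨18 * d + 1, fun p hp => ?_⟩
  have hQ : 18 * d + 1 ≤ ⌈p⌉₊ := by exact_mod_cast hp.trans (Nat.le_ceil p)
  have hd' : (1 : ℝ) ≤ d := by exact_mod_cast hd
  refine ⟨Anderson.initialThreshold d ⌈p⌉₊ + Anderson.resonanceThreshold d ⌈p⌉₊ + 2,
    fun N hN => ⟨Anderson.couplingThreshold d N, Anderson.couplingThreshold_pos hd (by omega),
      Anderson.couplingThreshold_lt_one hd (by omega), fun γ hγ hγ₀ Λ hΛ x R hR => ?_⟩⟩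
  have hs := Anderson.smallCoupling_of_le hd (by omega) hγ hγ₀
  have hest : ∀ L, Anderson.PairEstimate γ N ⌈p⌉₊ Λ (1 / 2) L :=
    Anderson.pairEstimate_half hs (by omega) (by omega) (by omega) hd hQ
  refine (Anderson.prob_mono fun ω hω => ?_).trans
    (Anderson.prob_exists_jointlyBad_le hest hΛ x hR (by linarith) (by linarith [Nat.le_ceil p]))
  obtain ⟨φ, hortho, heigen, y, hy, hlarge⟩ := hω
  refine ⟨y, Finset.mem_filter.2 ⟨Finset.mem_univ y, hy⟩, by_contra fun hgood => hlarge.not_ge ?_⟩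
  refine Anderson.correlator_le_one_of_not_jointlyBad hs hd ?_ hgood hortho heigen
  rw [dist1_comm x.1]
  omega
end
end

section
/- There exists γ₀ ∈ (0,1), depending only on the dimension d ≥ 1, such that the following holds for all γ ∈ (0, γ₀]. Let Λ ⊂ ℤ^d be a finite rectangle, v : Λ → [0,1], and let H be the associated Hamiltonian. Let L ≥ 1 and let B ⊆ B̄ ⊆ Λ be nonempty sets such that diam(B) ≤ L, every point of B̄ is within ℓ¹ distance 2.05·L of B, and there is a coordinate direction i and a boundary face of Λ in direction i (the set of points of Λ whose i-th coordinate is extremal) containing no point of B̄. Let λ ∈ [0, 1 + 4dγ] and let ψ : Λ → ℝ vanish outside B̄ and satisfy (Hψ)(x) = λ ψ(x) for every x ∈ B̄ (i.e., ψ restricted to B̄ is an eigenvector of H_{B̄} with eigenvalue λ). If Σ_{x ∈ B} ψ(x)² ≥ 1, then there exists y ∈ Λ ∖ B̄ with ℓ¹ distance 1 from B̄ such that the influence ℐ_ψ(y) = | Σ_{x ∈ B̄, |x−y|=1} ψ(x) | satisfies ℐ_ψ(y) ≥ γ^{3.1·L}. -/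
noncomputable section

open scoped BigOperators

/-! Write `ρ = 2.05` and `κ = 3.1`, and suppose every boundary influence is smaller than
`ε = γ ^ (κ L)`. The eigenvalue equation bounds `Jψ` by `O(1/γ) |ψ|` inside `B̄`, and the
assumption bounds it by `ε` just outside, so `Jψ` is controlled at `x + e` for every `x ∈ B̄`,
where `e` is the unit vector pointing towards the free face. Among the neighbours of `x + e`, the
site `x` is the only one that does not lie strictly further than `x` in direction `e`. Hence,
peeling `B̄` off in layers from its extreme end, beyond which `ψ` vanishes, each layer costs only a
factor `O(1/γ)`. A site of `B` is at most `(ρ + 1) L` layers deep and `B` has at most `3 ^ (d L)`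
sites; as `κ > ρ + 1`, the mass of `ψ` on `B` is less than `1` for small `γ`. -/

section Lattice

variable {d : ℕ} {x y z w : Fin d → ℤ} {i : Fin d} {σ : ℤˣ}

lemma natAbs_sub_le_dist1 (x y : Fin d → ℤ) (i : Fin d) : (x i - y i).natAbs ≤ dist1 x y :=
  Finset.single_le_sum (f := fun i => (x i - y i).natAbs) (fun _ _ => Nat.zero_le _)
    (Finset.mem_univ i)

lemma dist1_triangle (x y z : Fin d → ℤ) : dist1 x z ≤ dist1 x y + dist1 y z := by
  unfold dist1
  rw [← Finset.sum_add_distrib]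
  exact Finset.sum_le_sum fun i _ => by omega

lemma mem_Icc_of_dist1_le {n : ℕ} (h : dist1 x z ≤ n) : x ∈ Finset.Icc (z - n) (z + n) := by
  have hcoord i := (natAbs_sub_le_dist1 x z i).trans h
  refine Finset.mem_Icc.2 ⟨fun i => ?_, fun i => ?_⟩ <;>
    have := hcoord i <;> simp only [Pi.sub_apply, Pi.add_apply, Pi.natCast_apply] <;> omega

lemma card_Icc_sub_add_natCast (z : Fin d → ℤ) (n : ℕ) :
    (Finset.Icc (z - n) (z + n)).card = (2 * n + 1) ^ d := by
  have hside (i : Fin d) : (z i + n + 1 - (z i - n)).toNat = 2 * n + 1 := by omega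
  simp [Pi.card_Icc, hside]

lemma card_le_pow_of_dist1_le {s : Finset (Fin d → ℤ)} {n : ℕ} (h : ∀ x ∈ s, dist1 x z ≤ n) :
    s.card ≤ (3 ^ d) ^ n :=
  calc s.card ≤ (Finset.Icc (z - n) (z + n)).card :=
        Finset.card_le_card fun x hx => mem_Icc_of_dist1_le (h x hx)
    _ = (1 + n * 2) ^ d := by rw [card_Icc_sub_add_natCast, add_comm, mul_comm]
    _ ≤ ((1 + 2) ^ n) ^ d := by
        gcongr
        exact_mod_cast one_add_mul_le_pow (a := (2 : ℤ)) (by norm_num) n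
    _ = (3 ^ d) ^ n := pow_right_comm _ _ _

/-- The sites at ℓ¹ distance one from `y`, cut out of a box around `y` to obtain a `Finset`. -/
def neighbors (y : Fin d → ℤ) : Finset (Fin d → ℤ) :=
  {x ∈ Finset.Icc (y - 1) (y + 1) | dist1 x y = 1}

lemma mem_neighbors : x ∈ neighbors y ↔ dist1 x y = 1 := by
  refine Finset.mem_filter.trans (and_iff_right_of_imp fun h => ?_)
  simpa using mem_Icc_of_dist1_le (n := 1) h.le

lemma card_neighbors_le (y : Fin d → ℤ) : (neighbors y).card ≤ 3 ^ d := by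
  simpa using card_le_pow_of_dist1_le (n := 1) fun x hx => (mem_neighbors.1 hx).le

lemma dist1_add_single (x : Fin d → ℤ) (i : Fin d) (σ : ℤˣ) :
    dist1 x (x + Pi.single i (σ : ℤ)) = 1 := by
  unfold dist1
  rw [Finset.sum_eq_single i (fun j _ hj => by simp [hj]) (by simp)]
  simp

lemma mul_apply_lt_of_dist1_add_single_eq_one
    (h : dist1 w (x + Pi.single i (σ : ℤ)) = 1) (hne : w ≠ x) : σ * x i < σ * w i := by
  by_contra! hle
  set y := x + Pi.single i (σ : ℤ)
  have hyi : y i = x i + σ := by simp [y]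
  have hsplit : (w i - y i).natAbs + ∑ j ∈ Finset.univ.erase i, (w j - y j).natAbs = 1 :=
    (Finset.add_sum_erase _ (fun j => (w j - y j).natAbs) (Finset.mem_univ i)).trans h
  have hwi : w i = x i := by
    rcases Int.units_eq_one_or σ with rfl | rfl <;> push_cast at hle hyi <;> omega
  have hrest : ∑ j ∈ Finset.univ.erase i, (w j - y j).natAbs = 0 := by
    rcases Int.units_eq_one_or σ with rfl | rfl <;> push_cast at hyi <;> omega
  refine hne (funext fun j => ?_)
  rcases eq_or_ne j i with rfl | hj
  · exact hwi
  · have := Finset.sum_eq_zero_iff.1 hrest j (by simp [hj])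
    simp only [y, Pi.add_apply, Pi.single_eq_of_ne hj] at this
    omega

lemma add_single_mem_Icc {a b : Fin d → ℤ} {n : ℤ} (hx : x ∈ Finset.Icc a b) (ha : a i ≤ x i + n)
    (hb : x i + n ≤ b i) : x + Pi.single i n ∈ Finset.Icc a b := by
  obtain ⟨hax, hxb⟩ := Finset.mem_Icc.1 hx
  refine Finset.mem_Icc.2 ⟨fun j => ?_, fun j => ?_⟩ <;> rcases eq_or_ne j i with rfl | hj
  · simpa using ha
  · simpa [hj] using hax j
  · simpa using hb
  · simpa [hj] using hxb j

lemma exists_forall_add_single_mem_Icc {a b : Fin d → ℤ} {s : Finset (Fin d → ℤ)}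
    (hs : s ⊆ Finset.Icc a b)
    (hface : ∃ i, (∀ x ∈ s, x i ≠ a i) ∨ (∀ x ∈ s, x i ≠ b i)) :
    ∃ (i : Fin d) (σ : ℤˣ), ∀ x ∈ s, x + Pi.single i (σ : ℤ) ∈ Finset.Icc a b := by
  have hmem {x} (hx : x ∈ s) (i) : a i ≤ x i ∧ x i ≤ b i :=
    ⟨(Finset.mem_Icc.1 (hs hx)).1 i, (Finset.mem_Icc.1 (hs hx)).2 i⟩
  obtain ⟨i, hi | hi⟩ := hface
  · refine ⟨i, -1, fun x hx => add_single_mem_Icc (hs hx) ?_ ?_⟩ <;>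
      have := hi x hx <;> have := hmem hx i <;> push_cast <;> omega
  · refine ⟨i, 1, fun x hx => add_single_mem_Icc (hs hx) ?_ ?_⟩ <;>
      have := hi x hx <;> have := hmem hx i <;> push_cast <;> omega

end Lattice

section Propagation

variable {d : ℕ} {φ : (Fin d → ℤ) → ℝ} {i : Fin d} {σ : ℤˣ} {ε T : ℝ}

/-- The hopping term `(Jφ)(y)` on the whole lattice `ℤ^d`. -/
def neighborSum (φ : (Fin d → ℤ) → ℝ) (y : Fin d → ℤ) : ℝ := ∑ w ∈ neighbors y, φ w

lemma abs_le_of_forall_lt_abs_le {x : Fin d → ℤ} {t : ℝ} (hT : 0 ≤ T)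
    (hsum : |neighborSum φ (x + Pi.single i (σ : ℤ))| ≤ ε + T * |φ (x + Pi.single i (σ : ℤ))|)
    (habove : ∀ w : Fin d → ℤ, σ * x i < σ * w i → |φ w| ≤ t) :
    |φ x| ≤ ε + (T + 3 ^ d) * t := by
  set y := x + Pi.single i (σ : ℤ) with hy
  have hφy : |φ y| ≤ t := habove y <| by
    rcases Int.units_eq_one_or σ with rfl | rfl <;> simp [hy]
  have hothers : |∑ w ∈ (neighbors y).erase x, φ w| ≤ 3 ^ d * t :=
    calc |∑ w ∈ (neighbors y).erase x, φ w| ≤ ∑ w ∈ (neighbors y).erase x, |φ w| :=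
          Finset.abs_sum_le_sum_abs _ _
      _ ≤ ((neighbors y).erase x).card • t := Finset.sum_le_card_nsmul _ _ _ fun w hw =>
          have ⟨hne, hmem⟩ := Finset.mem_erase.1 hw
          habove w (mul_apply_lt_of_dist1_add_single_eq_one (mem_neighbors.1 hmem) hne)
      _ ≤ 3 ^ d * t := by
          rw [nsmul_eq_mul]
          gcongr
          · exact (abs_nonneg _).trans hφy
          · exact_mod_cast (Finset.card_erase_le).trans (card_neighbors_le y)
  have hsplit : φ x = neighborSum φ y - ∑ w ∈ (neighbors y).erase x, φ w :=
    eq_sub_of_add_eq (Finset.add_sum_erase _ φ (mem_neighbors.2 (dist1_add_single x i σ)))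
  calc |φ x| ≤ |neighborSum φ y| + |∑ w ∈ (neighbors y).erase x, φ w| := hsplit ▸ abs_sub _ _
    _ ≤ (ε + T * t) + 3 ^ d * t := by gcongr; exact hsum.trans (by gcongr)
    _ = ε + (T + 3 ^ d) * t := by ring

lemma abs_le_mul_pow_of_support_le (hε : 0 ≤ ε) (hT : 0 ≤ T)
    (hstep : ∀ x, φ x ≠ 0 → |neighborSum φ (x + Pi.single i (σ : ℤ))|
      ≤ ε + T * |φ (x + Pi.single i (σ : ℤ))|)
    {K : ℤ} (hK : ∀ x, φ x ≠ 0 → σ * x i ≤ K) (n : ℕ) (x : Fin d → ℤ) (hx : K ≤ σ * x i + n) :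
    |φ x| ≤ ε * (T + 3 ^ d + 1) ^ n := by
  have hR : 1 ≤ T + 3 ^ d + 1 := le_add_of_nonneg_left (by positivity)
  rcases eq_or_ne (φ x) 0 with h0 | h0
  · rw [h0, abs_zero]; positivity
  induction n generalizing x with
  | zero =>
    have habove (w : Fin d → ℤ) (hw : σ * x i < σ * w i) : |φ w| ≤ 0 := by
      by_contra! hpos
      have := hK w (abs_pos.1 hpos)
      omega
    simpa using abs_le_of_forall_lt_abs_le hT (hstep x h0) habove
  | succ n ih =>
    have habove (w : Fin d → ℤ) (hw : σ * x i < σ * w i) : |φ w| ≤ ε * (T + 3 ^ d + 1) ^ n := by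
      rcases eq_or_ne (φ w) 0 with hw0 | hw0
      · rw [hw0, abs_zero]; positivity
      · exact ih w (by omega) hw0
    calc |φ x| ≤ ε + (T + 3 ^ d) * (ε * (T + 3 ^ d + 1) ^ n) :=
          abs_le_of_forall_lt_abs_le hT (hstep x h0) habove
      _ ≤ ε * (T + 3 ^ d + 1) ^ n + (T + 3 ^ d) * (ε * (T + 3 ^ d + 1) ^ n) := by
          gcongr; exact le_mul_of_one_le_right hε (one_le_pow₀ hR)
      _ = ε * (T + 3 ^ d + 1) ^ (n + 1) := by ring

lemma sum_sq_le_of_abs_neighborSum_le (hε : 0 ≤ ε) (hT : 0 ≤ T)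
    (hstep : ∀ x, φ x ≠ 0 → |neighborSum φ (x + Pi.single i (σ : ℤ))|
      ≤ ε + T * |φ (x + Pi.single i (σ : ℤ))|)
    {B : Finset (Fin d → ℤ)} {m n : ℕ} (hdiam : ∀ x ∈ B, ∀ y ∈ B, dist1 x y ≤ m)
    (hnear : ∀ w, φ w ≠ 0 → ∀ x ∈ B, dist1 w x ≤ n) :
    ∑ x ∈ B, φ x ^ 2 ≤ (3 ^ d) ^ m * (ε * (T + 3 ^ d + 1) ^ n) ^ 2 := by
  have hbound (x) (hx : x ∈ B) : |φ x| ≤ ε * (T + 3 ^ d + 1) ^ n := by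
    refine abs_le_mul_pow_of_support_le (K := σ * x i + n) hε hT hstep (fun w hw => ?_) n x le_rfl
    have := (natAbs_sub_le_dist1 w x i).trans (hnear w hw x hx)
    rcases Int.units_eq_one_or σ with rfl | rfl <;> push_cast <;> omega
  have hcard : B.card ≤ (3 ^ d) ^ m := by
    rcases B.eq_empty_or_nonempty with rfl | ⟨z, hz⟩
    · simp
    · exact card_le_pow_of_dist1_le fun x hx => hdiam x hx z hz
  calc ∑ x ∈ B, φ x ^ 2 ≤ B.card • (ε * (T + 3 ^ d + 1) ^ n) ^ 2 :=
        Finset.sum_le_card_nsmul _ _ _ fun x hx => sq_le_sq.2 ((hbound x hx).trans (le_abs_self _))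
    _ ≤ (3 ^ d) ^ m * (ε * (T + 3 ^ d + 1) ^ n) ^ 2 := by
        rw [nsmul_eq_mul]
        gcongr
        exact_mod_cast hcard

end Propagation

section Restriction

lemma sum_filter_subtype_eq_sum {α M : Type*} [AddCommMonoid M] {Λ s : Finset α} {p : α → Prop}
    [DecidablePred p] {f : α → M} (h : ∀ x, f x ≠ 0 → (x ∈ Λ ∧ p x ↔ x ∈ s)) :
    ∑ x ∈ Finset.univ.filter (fun x : Λ => p x), f x = ∑ x ∈ s, f x := by
  rw [Finset.sum_filter, Finset.sum_coe_sort Λ fun x => if p x then f x else 0,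
    ← Finset.sum_filter]
  refine Finset.sum_congr_of_eq_on_inter (fun x hx hxs => ?_) (fun x hxs hx => ?_) fun _ _ _ => rfl
  · exact by_contra fun h0 => hxs ((h x h0).1 (Finset.mem_filter.1 hx))
  · exact by_contra fun h0 => hx (Finset.mem_filter.2 ((h x h0).2 hxs))

lemma exists_extension_by_zero {α M : Type*} [Zero M] {Λ : Finset α} (ψ : Λ → M) :
    ∃ φ : α → M, (∀ x, φ x ≠ 0 → x ∈ Λ) ∧ (fun x : Λ => φ x) = ψ := by
  refine ⟨Function.extend (↑) ψ 0, fun x hx => ?_, funext (Subtype.val_injective.extend_apply ψ 0)⟩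
  by_contra hxΛ
  exact hx (Function.extend_apply' _ _ _ (by simpa using hxΛ))

/-- The influence `ℐ_ψ(y)` of a site `y`: only the neighbours of `y` in `B̄` are counted. -/
def influence {d : ℕ} {Λ : Finset (Fin d → ℤ)} (Bbar : Finset (Fin d → ℤ)) (ψ : Λ → ℝ)
    (y : Fin d → ℤ) : ℝ :=
  |∑ x ∈ Finset.univ.filter
      (fun x : Λ => (x : Fin d → ℤ) ∈ Bbar ∧ dist1 (x : Fin d → ℤ) y = 1), ψ x|

variable {d : ℕ} {γ : ℝ} {v φ : (Fin d → ℤ) → ℝ} {Λ : Finset (Fin d → ℤ)}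

lemma influence_restrict {Bbar : Finset (Fin d → ℤ)} (hφ : ∀ x, φ x ≠ 0 → x ∈ Bbar)
    (hBΛ : Bbar ⊆ Λ) (y : Fin d → ℤ) :
    influence Bbar (fun x : Λ => φ x) y = |neighborSum φ y| := by
  unfold influence neighborSum
  rw [sum_filter_subtype_eq_sum (p := fun x => x ∈ Bbar ∧ dist1 x y = 1) fun x hx => ?_]
  rw [mem_neighbors, and_iff_right (hφ x hx), and_iff_right (hBΛ (hφ x hx))]

lemma hamOn_mulVec_restrict (hφ : ∀ x, φ x ≠ 0 → x ∈ Λ) (y : Λ) :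
    (hamOn d γ v Λ).mulVec (fun x => φ x) y
      = (2 * d * γ + v y) * φ y - γ * neighborSum φ y := by
  have hhop : ∑ x : Λ, (if dist1 (y : Fin d → ℤ) x = 1 then φ x else 0) = neighborSum φ y := by
    rw [← Finset.sum_filter]
    refine sum_filter_subtype_eq_sum (p := fun x => dist1 (y : Fin d → ℤ) x = 1) fun x hx => ?_
    rw [mem_neighbors, dist1_comm, and_iff_right (hφ x hx)]
  simp only [Matrix.mulVec, dotProduct, hamOn, Matrix.of_apply, hamEntry, sub_mul, ite_mul,
    zero_mul, Finset.sum_sub_distrib, mul_assoc, one_mul, Subtype.coe_inj, Finset.sum_ite_eq,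
    Finset.mem_univ, if_true, ← Finset.mul_sum, hhop]

lemma abs_neighborSum_le_of_eigenvalue_eq {y : Fin d → ℤ} {lam M : ℝ} (hγ : 0 < γ)
    (hM : |v y - lam| ≤ M)
    (heig : (2 * d * γ + v y) * φ y - γ * neighborSum φ y = lam * φ y) :
    |neighborSum φ y| ≤ (2 * d + M / γ) * |φ y| := by
  have hsolve : neighborSum φ y = (2 * d + (v y - lam) / γ) * φ y := by
    field_simp
    linarith
  rw [hsolve, abs_mul]
  gcongr
  calc |2 * d + (v y - lam) / γ| ≤ |(2 * d : ℝ)| + |(v y - lam) / γ| := abs_add_le _ _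
    _ = 2 * d + |v y - lam| / γ := by rw [abs_of_nonneg (by positivity), abs_div, abs_of_pos hγ]
    _ ≤ 2 * d + M / γ := by gcongr

lemma sum_sq_le_of_forall_influence_le {B Bbar : Finset (Fin d → ℤ)} {ε M lam : ℝ} {m n : ℕ}
    {i : Fin d} {σ : ℤˣ} {ψ : Λ → ℝ} (hγ : 0 < γ) (hε : 0 ≤ ε) (hM : 0 ≤ M) (hBΛ : Bbar ⊆ Λ)
    (hdiam : ∀ x ∈ B, ∀ y ∈ B, dist1 x y ≤ m) (hnear : ∀ x ∈ Bbar, ∀ y ∈ B, dist1 x y ≤ n)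
    (hshift : ∀ x ∈ Bbar, x + Pi.single i (σ : ℤ) ∈ Λ) (hlam : ∀ x ∈ Bbar, |v x - lam| ≤ M)
    (hψ0 : ∀ x : Λ, (x : Fin d → ℤ) ∉ Bbar → ψ x = 0)
    (hψ : ∀ x : Λ, (x : Fin d → ℤ) ∈ Bbar → (hamOn d γ v Λ).mulVec ψ x = lam * ψ x)
    (hinfl : ∀ y ∈ Λ, y ∉ Bbar → (∃ x ∈ Bbar, dist1 x y = 1) → influence Bbar ψ y ≤ ε) :
    ∑ x ∈ Finset.univ.filter (fun x : Λ => (x : Fin d → ℤ) ∈ B), ψ x ^ 2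
      ≤ (3 ^ d) ^ m * (ε * (2 * d + M / γ + 3 ^ d + 1) ^ n) ^ 2 := by
  obtain ⟨φ, hφΛ, rfl⟩ := exists_extension_by_zero ψ
  have hφ (x) (hx : φ x ≠ 0) : x ∈ Bbar := by_contra fun hxB => hx (hψ0 ⟨x, hφΛ x hx⟩ hxB)
  have hinside (y) (hy : y ∈ Bbar) : |neighborSum φ y| ≤ (2 * d + M / γ) * |φ y| :=
    abs_neighborSum_le_of_eigenvalue_eq hγ (hlam y hy)
      ((hamOn_mulVec_restrict hφΛ ⟨y, hBΛ hy⟩).symm.trans (hψ ⟨y, hBΛ hy⟩ hy))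
  have hstep (x) (hx : φ x ≠ 0) : |neighborSum φ (x + Pi.single i (σ : ℤ))|
      ≤ ε + (2 * d + M / γ) * |φ (x + Pi.single i (σ : ℤ))| := by
    by_cases hy : x + Pi.single i (σ : ℤ) ∈ Bbar
    · exact le_add_of_nonneg_of_le hε (hinside _ hy)
    · have hsmall := hinfl _ (hshift x (hφ x hx)) hy ⟨x, hφ x hx, dist1_add_single x i σ⟩
      rw [influence_restrict hφ hBΛ] at hsmall
      exact le_add_of_le_of_nonneg hsmall (by positivity)
  rw [sum_filter_subtype_eq_sum (f := fun x => φ x ^ 2) (p := fun x => x ∈ B)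
    fun x hx => and_iff_right (hφΛ x (pow_ne_zero_iff two_ne_zero |>.1 hx))]
  exact sum_sq_le_of_abs_neighborSum_le hε (by positivity) hstep hdiam fun w hw => hnear w (hφ w hw)

end Restriction

section Smallness

lemma exists_pos_lt_one_forall_mul_rpow_lt_one (C : ℝ) {δ : ℝ} (hδ : 0 < δ) :
    ∃ γ₀ : ℝ, 0 < γ₀ ∧ γ₀ < 1 ∧ ∀ γ : ℝ, 0 < γ → γ ≤ γ₀ → C * γ ^ δ < 1 := by
  have hcont : ContinuousAt (fun γ : ℝ => C * γ ^ δ) 0 :=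
    ((Real.continuous_rpow_const hδ.le).const_mul C).continuousAt
  have hsmall : ∀ᶠ γ : ℝ in nhds 0, C * γ ^ δ < 1 :=
    hcont.eventually_lt continuousAt_const (by simp [Real.zero_rpow hδ.ne'])
  obtain ⟨r, hr, hball⟩ := Metric.eventually_nhds_iff.1 hsmall
  refine ⟨min (r / 2) (1 / 2), by positivity, by linarith [min_le_right (r / 2) (1 / 2)],
    fun γ hγ hle => hball ?_⟩
  rw [Real.dist_0_eq_abs, abs_of_pos hγ]
  linarith [hle.trans (min_le_left _ _)]

lemma pow_mul_rpow_mul_pow_sq_lt_one {D c γ θ κ L R : ℝ} {m n : ℕ} (hD : 1 ≤ D) (hc : 0 < c)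
    (hγ : 0 < γ) (hL : 0 < L) (hR : 1 ≤ R) (hRc : R ≤ c / γ) (hm : m ≤ L) (hn : n ≤ θ * L)
    (hsmall : D * c ^ (2 * θ) * γ ^ (2 * (κ - θ)) < 1) :
    D ^ m * (γ ^ (κ * L) * R ^ n) ^ 2 < 1 := by
  have hDm : D ^ m ≤ D ^ L := by
    rw [← Real.rpow_natCast]
    exact Real.rpow_le_rpow_of_exponent_le hD hm
  have hRn : R ^ n ≤ (c / γ) ^ (θ * L) := by
    rw [← Real.rpow_natCast]
    exact (Real.rpow_le_rpow_of_exponent_le hR hn).trans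
      (Real.rpow_le_rpow (by positivity) hRc ((Nat.cast_nonneg n).trans hn))
  have hcombine : D ^ L * (γ ^ (κ * L) * (c / γ) ^ (θ * L)) ^ 2
      = (D * c ^ (2 * θ) * γ ^ (2 * (κ - θ))) ^ L := by
    have hbase : (γ ^ κ * (c / γ) ^ θ) ^ 2 = c ^ (2 * θ) * γ ^ (2 * (κ - θ)) := by
      rw [Real.div_rpow hc.le hγ.le, mul_comm 2 θ, mul_comm 2 (κ - θ), Real.rpow_mul hc.le,
        Real.rpow_mul hγ.le, Real.rpow_sub hγ, Real.rpow_two, Real.rpow_two]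
      ring
    rw [Real.rpow_mul hγ.le, Real.rpow_mul (by positivity),
      ← Real.mul_rpow (by positivity) (by positivity), Real.rpow_pow_comm (by positivity), hbase,
      ← Real.mul_rpow (by positivity) (by positivity), mul_assoc]
  calc D ^ m * (γ ^ (κ * L) * R ^ n) ^ 2
      ≤ D ^ L * (γ ^ (κ * L) * (c / γ) ^ (θ * L)) ^ 2 := by gcongr
    _ = (D * c ^ (2 * θ) * γ ^ (2 * (κ - θ))) ^ L := hcombine
    _ < 1 := Real.rpow_lt_one (by positivity) hsmall hL

end Smallness

theorem influential_site_exists_general (d : ℕ) {M ρ κ : ℝ} (hM : 0 ≤ M) (hρ : 0 ≤ ρ)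
    (hκ : ρ + 1 < κ) :
    ∃ γ₀ : ℝ, 0 < γ₀ ∧ γ₀ < 1 ∧
    ∀ γ : ℝ, 0 < γ → γ ≤ γ₀ →
    ∀ (Λ : Finset (Fin d → ℤ)) (v : (Fin d → ℤ) → ℝ) (L : ℝ), 0 < L →
    ∀ B Bbar : Finset (Fin d → ℤ), Bbar ⊆ Λ →
      (∀ x ∈ B, ∀ y ∈ B, (dist1 x y : ℝ) ≤ L) →
      (∀ x ∈ Bbar, ∃ z ∈ B, (dist1 x z : ℝ) ≤ ρ * L) →
      (∃ (i : Fin d) (σ : ℤˣ), ∀ x ∈ Bbar, x + Pi.single i (σ : ℤ) ∈ Λ) →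
    ∀ lam : ℝ, (∀ x ∈ Bbar, |v x - lam| ≤ M) →
    ∀ ψ : Λ → ℝ,
      (∀ x : Λ, (x : Fin d → ℤ) ∉ Bbar → ψ x = 0) →
      (∀ x : Λ, (x : Fin d → ℤ) ∈ Bbar → (hamOn d γ v Λ).mulVec ψ x = lam * ψ x) →
      1 ≤ ∑ x ∈ Finset.univ.filter (fun x : Λ => (x : Fin d → ℤ) ∈ B), ψ x ^ 2 →
    ∃ y ∈ Λ, y ∉ Bbar ∧ (∃ x ∈ Bbar, dist1 x y = 1) ∧ γ ^ (κ * L) ≤ influence Bbar ψ y := by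
  set c : ℝ := 2 * d + M + 3 ^ d + 1 with hc
  obtain ⟨γ₀, hγ₀, hγ₀1, hsmall⟩ := exists_pos_lt_one_forall_mul_rpow_lt_one
    (3 ^ d * c ^ (2 * (ρ + 1))) (δ := 2 * (κ - (ρ + 1))) (by linarith)
  refine ⟨γ₀, hγ₀, hγ₀1, fun γ hγ hγle Λ v L hL B Bbar hBΛ hdiam hdist ⟨i, σ, hshift⟩ lam hlam ψ
    hψ0 hψ hnorm => ?_⟩
  by_contra! hweak
  have hnear (x) (hx : x ∈ Bbar) (y) (hy : y ∈ B) : dist1 x y ≤ ⌊(ρ + 1) * L⌋₊ := by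
    obtain ⟨z, hz, hxz⟩ := hdist x hx
    have htri : (dist1 x y : ℝ) ≤ dist1 x z + dist1 z y := by exact_mod_cast dist1_triangle x z y
    exact Nat.le_floor (by linarith [hdiam z hz y hy])
  have hmass := sum_sq_le_of_forall_influence_le hγ (by positivity) hM hBΛ
    (fun x hx y hy => Nat.le_floor (hdiam x hx y hy)) hnear hshift hlam hψ0 hψ
    fun y hyΛ hyB hadj => (hweak y hyΛ hyB hadj).le
  have hratio : 2 * d + M / γ + 3 ^ d + 1 ≤ c / γ := by
    have hshrink : (2 * d + 3 ^ d + 1) * γ ≤ 2 * d + 3 ^ d + 1 :=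
      mul_le_of_le_one_right (by positivity) (hγle.trans hγ₀1.le)
    rw [le_div_iff₀ hγ, hc, add_mul, add_mul, add_mul, div_mul_cancel₀ M hγ.ne']
    linarith
  exact (hnorm.trans hmass).not_gt <| pow_mul_rpow_mul_pow_sq_lt_one
    (one_le_pow₀ (by norm_num)) (by positivity) hγ hL (le_add_of_nonneg_left (by positivity)) hratio
    (Nat.floor_le hL.le) (Nat.floor_le (by positivity)) (hsmall γ hγ hγle)

/-- **Lemma 3.1** (existence of an influential boundary site).
Let `Λ = Icc a b` be a finite rectangle, `v : Λ → [0,1]`, `γ` small (depending only on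
`d`), `L ≥ 1`, and let `B ⊆ B̄ ⊆ Λ` with `diam B ≤ L`, `B̄` within ℓ¹ distance `2.05 L`
of `B`, and some boundary face of `Λ` disjoint from `B̄`.  If `ψ` vanishes outside `B̄`,
satisfies `(Hψ)(x) = λ ψ(x)` on `B̄` for some `λ ∈ [0, 1+4dγ]`, and `∑_{x∈B} ψ(x)² ≥ 1`,
then some site `y ∈ Λ ∖ B̄` adjacent to `B̄` has influence
`ℐ_ψ(y) = |∑_{x ∈ B̄, |x-y|=1} ψ(x)| ≥ γ^{3.1 L}`. -/
theorem influential_site_exists (d : ℕ) (hd : 1 ≤ d) :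
    ∃ γ₀ : ℝ, 0 < γ₀ ∧ γ₀ < 1 ∧
    ∀ γ : ℝ, 0 < γ → γ ≤ γ₀ →
    ∀ a b : Fin d → ℤ,
    ∀ v : (Fin d → ℤ) → ℝ, (∀ x ∈ Finset.Icc a b, v x ∈ Set.Icc (0:ℝ) 1) →
    ∀ L : ℝ, 1 ≤ L →
    ∀ B Bbar : Finset (Fin d → ℤ),
      B.Nonempty → B ⊆ Bbar → Bbar ⊆ Finset.Icc a b →
      (∀ x ∈ B, ∀ y ∈ B, ((dist1 x y : ℕ) : ℝ) ≤ L) →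
      (∀ x ∈ Bbar, ∃ z ∈ B, ((dist1 x z : ℕ) : ℝ) ≤ 2.05 * L) →
      (∃ i : Fin d, (∀ x ∈ Bbar, x i ≠ a i) ∨ (∀ x ∈ Bbar, x i ≠ b i)) →
    ∀ lam : ℝ, lam ∈ Set.Icc (0:ℝ) (1 + 4*d*γ) →
    ∀ ψ : ↥(Finset.Icc a b) → ℝ,
      (∀ x : ↥(Finset.Icc a b), (x : Fin d → ℤ) ∉ Bbar → ψ x = 0) →
      (∀ x : ↥(Finset.Icc a b), (x : Fin d → ℤ) ∈ Bbar →
        (hamOn d γ v (Finset.Icc a b)).mulVec ψ x = lam * ψ x) →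
      1 ≤ ∑ x ∈ Finset.univ.filter (fun x : ↥(Finset.Icc a b) => (x : Fin d → ℤ) ∈ B),
            (ψ x)^2 →
    ∃ y ∈ Finset.Icc a b, y ∉ Bbar ∧ (∃ x ∈ Bbar, dist1 x y = 1) ∧
      γ ^ (3.1 * L)
        ≤ |∑ x ∈ Finset.univ.filter
              (fun x : ↥(Finset.Icc a b) =>
                (x : Fin d → ℤ) ∈ Bbar ∧ dist1 (x : Fin d → ℤ) y = 1), ψ x| := by
  obtain ⟨γ₀, hγ₀, hγ₀1, h⟩ := influential_site_exists_general d (M := 1 + 4 * d) (ρ := 2.05)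
    (κ := 3.1) (by positivity) (by norm_num) (by norm_num)
  refine ⟨γ₀, hγ₀, hγ₀1, fun γ hγ hγle a b v hv L hL B Bbar _ _ hBΛ hdiam hdist hface lam hlam =>
    h γ hγ hγle _ v L (by linarith) B Bbar hBΛ hdiam hdist
      (exists_forall_add_single_mem_Icc hBΛ hface) lam fun x hx => ?_⟩
  have hlam1 : lam ≤ 1 + 4 * d := hlam.2.trans <|
    add_le_add_right (mul_le_of_le_one_right (by positivity) (hγle.trans hγ₀1.le)) 1
  exact abs_sub_le_of_nonneg_of_le (hv x (hBΛ hx)).1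
    ((hv x (hBΛ hx)).2.trans (le_add_of_nonneg_right (by positivity))) hlam.1 hlam1
end
end
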